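/- arXiv:2604.20929 — 2 statements merged into one kernel-verified Lean document; each statement's English description precedes it below -/
import Mathlib

section
/- Let h_1, …, h_l ∈ K[z_n] with h_1 | h_2 | ⋯ | h_l, let f ∈ K[z_2, …, z_n], let V ∈ K[z_2, …, z_n]^{l×l} be a unimodular matrix, and set B = diag(h_1, …, h_l) · V · diag(1, …, 1, z_1 − f). If for every k = 1, …, l−1 the product h_1⋯h_k is a greatest common divisor of the k×k minors of B and J_k(B) = R, then B is equivalent to diag(h_1, h_2, …, h_{l−1}, (z_1 − f) h_l). -/
open MvPolynomial Matrix

section Defs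

variable {A : Type*} [CommRing A]

/-- The set of all `k × k` minors of a matrix. -/
def minorsSet {l m : ℕ} (F : Matrix (Fin l) (Fin m) A) (k : ℕ) : Set A :=
  { p | ∃ (r : Fin k ↪ Fin l) (c : Fin k ↪ Fin m), p = (F.submatrix ⇑r ⇑c).det }

/-- `d` is a greatest common divisor of the `k × k` minors of `F`. -/
def IsGcdMinors {l m : ℕ} (F : Matrix (Fin l) (Fin m) A) (k : ℕ) (d : A) : Prop :=
  (∀ p ∈ minorsSet F k, d ∣ p) ∧ ∀ e : A, (∀ p ∈ minorsSet F k, e ∣ p) → e ∣ d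

/-- The ideal generated by the `k × k` reduced minors of `F`, relative to a gcd `d`
of the `k × k` minors (the reduced minors are the `v` with `d * v` a minor). -/
def reducedIdeal {l m : ℕ} (F : Matrix (Fin l) (Fin m) A) (k : ℕ) (d : A) : Ideal A :=
  Ideal.span { v : A | d * v ∈ minorsSet F k }

/-- `J_k(F) = R`: the `k × k` reduced minors of `F` generate the unit ideal. -/
def JkUnit {l m : ℕ} (F : Matrix (Fin l) (Fin m) A) (k : ℕ) : Prop :=
  ∃ d : A, IsGcdMinors F k d ∧ reducedIdeal F k d = ⊤

/-- `F` has rank `r`: some `r × r` minor is nonzero and all `(r+1) × (r+1)` minors vanish. -/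
def HasRank {l m : ℕ} (F : Matrix (Fin l) (Fin m) A) (r : ℕ) : Prop :=
  (∃ p ∈ minorsSet F r, p ≠ 0) ∧ ∀ p ∈ minorsSet F (r + 1), p = 0

/-- Equivalence of matrices: `F₁ = U * F₂ * V` for unimodular `U`, `V`. -/
def MatEquiv {l m : ℕ} (F₁ F₂ : Matrix (Fin l) (Fin m) A) : Prop :=
  ∃ (U : Matrix (Fin l) (Fin l) A) (V : Matrix (Fin m) (Fin m) A),
    IsUnit U.det ∧ IsUnit V.det ∧ F₁ = U * F₂ * V

/-- The rectangular diagonal matrix with diagonal entries `Φ`. -/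
def smithDiag {l m : ℕ} (Φ : Fin l → A) : Matrix (Fin l) (Fin m) A :=
  Matrix.of fun i j => if (i : ℕ) = (j : ℕ) then Φ i else 0

/-- `F` (of rank `r`) is equivalent to its Smith form: there are diagonal entries `Φ` such that
for each `i ≤ r` the product `Φ_1 ⋯ Φ_i` is a gcd of the `i × i` minors of `F`
(i.e. `Φ_i = d_i(F)/d_{i-1}(F)`), `Φ_i = 0` for `i > r`, and `F` is equivalent to
the diagonal matrix with entries `Φ`. -/
def SmithEquivAt {l m : ℕ} (F : Matrix (Fin l) (Fin m) A) (r : ℕ) : Prop :=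
  ∃ Φ : Fin l → A,
    (∀ i : Fin l, (i : ℕ) < r →
      IsGcdMinors F ((i : ℕ) + 1) (∏ j ∈ Finset.Iic i, Φ j)) ∧
    (∀ i : Fin l, r ≤ (i : ℕ) → Φ i = 0) ∧
    MatEquiv F (smithDiag Φ)

/-- `F` is equivalent to its Smith form. -/
def EquivToSmith {l m : ℕ} (F : Matrix (Fin l) (Fin m) A) : Prop :=
  ∃ r : ℕ, HasRank F r ∧ SmithEquivAt F r

end Defs

/-!
Setting `z₁ = f` is a retraction of `R` onto `K[z₂, …, zₙ]` whose kernel is generated by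
`g = z₁ - f`. It sends `B` to `diag(h) V diag(1, …, 1, 0)`, and the last row `w` of `V⁻¹` kills
`V diag(1, …, 1, 0)`. Were all the products `(h_l / h_j) w_j` in a maximal ideal `p`, let `k` be the
last index with `w_k ∉ p`; then `h_l / h_k ∈ p`, so some `h_{i+1} / h_i` with `k ≤ i` lies in `p`,
and all the reduced minors of order `i` would lie in `p`. Hence the row `(h_l / h_j) w_j` is
unimodular.

The Quillen–Suslin argument, carried out with the matrices `Q` of determinant one for which
`P diag(h) = diag(h) Q` for some `P` of determinant one, shows that such a `w` is the last row of
some `Q`: a change of variables makes an entry monic, a Quillen-type ideal of the coefficients is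
then the unit ideal, so that a variable can be set to `0`, and over the principal ideal domain
`K[z_n]` elementary operations suffice. Now the last row of `Q V` is divisible by `g` off the
diagonal, so `Q V diag(1, …, 1, g) = diag(1, …, 1, g) Z` with `Z` unimodular, and
`B = P⁻¹ diag(h) diag(1, …, 1, g) Z`.
-/

section Intertwiner

variable {ι : Type*} [Fintype ι] [DecidableEq ι] {S T : Type*} [CommRing S] [CommRing T]

/-- `P diag(h) = diag(h) Q` with `det P = det Q = r`. For `r = 1` such a pair lets the column
operation `Q` on the right of `diag(h)` be traded for the row operation `P` on the left. -/
structure DiagIntertwiner (h : ι → S) (r : S) (P Q : Matrix ι ι S) : Prop where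
  mul_diagonal : P * diagonal h = diagonal h * Q
  det_left : P.det = r
  det_right : Q.det = r

namespace DiagIntertwiner

variable {h : ι → S} {r s : S} {P Q P' Q' : Matrix ι ι S}

theorem one (h : ι → S) : DiagIntertwiner h 1 1 1 := ⟨by simp, det_one, det_one⟩

theorem mul (hP : DiagIntertwiner h r P Q) (hP' : DiagIntertwiner h s P' Q') :
    DiagIntertwiner h (r * s) (P * P') (Q * Q') where
  mul_diagonal := by
    rw [Matrix.mul_assoc, hP'.mul_diagonal, ← Matrix.mul_assoc, hP.mul_diagonal, Matrix.mul_assoc]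
  det_left := by rw [det_mul, hP.det_left, hP'.det_left]
  det_right := by rw [det_mul, hP.det_right, hP'.det_right]

theorem adjugate (hP : DiagIntertwiner h 1 P Q) :
    DiagIntertwiner h 1 P.adjugate Q.adjugate where
  mul_diagonal := by
    calc P.adjugate * diagonal h
        = P.adjugate * (diagonal h * Q) * Q.adjugate := by
          rw [← Matrix.mul_assoc, Matrix.mul_assoc _ Q, mul_adjugate, hP.det_right, one_smul,
            Matrix.mul_one]
      _ = diagonal h * Q.adjugate := by
          rw [← hP.mul_diagonal, ← Matrix.mul_assoc, adjugate_mul, hP.det_left, one_smul,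
            Matrix.one_mul]
  det_left := by rw [det_adjugate, hP.det_left, one_pow]
  det_right := by rw [det_adjugate, hP.det_right, one_pow]

theorem map (hP : DiagIntertwiner h r P Q) (φ : S →+* T) :
    DiagIntertwiner (φ ∘ h) (φ r) (P.map φ) (Q.map φ) where
  mul_diagonal := by
    have := congrArg (fun M => M.map φ) hP.mul_diagonal
    rwa [Matrix.map_mul, Matrix.map_mul, diagonal_map (map_zero φ)] at this
  det_left := by rw [← RingHom.mapMatrix_apply, ← RingHom.map_det, hP.det_left]
  det_right := by rw [← RingHom.mapMatrix_apply, ← RingHom.map_det, hP.det_right]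

end DiagIntertwiner

/-- Equivalence of row vectors under the matrices of determinant one that pass through
`diag(h)`. -/
def DiagRowEquiv (h w w' : ι → S) : Prop :=
  ∃ P Q : Matrix ι ι S, DiagIntertwiner h 1 P Q ∧ w ᵥ* Q = w'

namespace DiagRowEquiv

variable {h w w' w'' : ι → S}

theorem refl (h w : ι → S) : DiagRowEquiv h w w := ⟨1, 1, .one h, vecMul_one w⟩

theorem symm : DiagRowEquiv h w w' → DiagRowEquiv h w' w := by
  rintro ⟨P, Q, hPQ, rfl⟩
  refine ⟨_, _, hPQ.adjugate, ?_⟩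
  rw [vecMul_vecMul, mul_adjugate, hPQ.det_right, one_smul, vecMul_one]

theorem trans : DiagRowEquiv h w w' → DiagRowEquiv h w' w'' → DiagRowEquiv h w w'' := by
  rintro ⟨P, Q, hPQ, rfl⟩ ⟨P', Q', hPQ', rfl⟩
  exact ⟨_, _, by simpa only [one_mul] using hPQ.mul hPQ', (vecMul_vecMul ..).symm⟩

theorem map (hw : DiagRowEquiv h w w') (φ : S →+* T) :
    DiagRowEquiv (φ ∘ h) (φ ∘ w) (φ ∘ w') := by
  obtain ⟨P, Q, hPQ, rfl⟩ := hw
  refine ⟨_, _, by simpa only [map_one] using hPQ.map φ, ?_⟩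
  ext i
  exact (RingHom.map_vecMul φ Q w i).symm

/-- Adding to the `i`-th entry is the column operation `1 + u eᵢᵀ`; it passes through `diag(h)`
as `1 + u' eᵢᵀ`. -/
theorem add_single_dotProduct {i : ι} {u u' : ι → S} (w : ι → S) (hu : u i = 0) (hu' : u' i = 0)
    (huu' : ∀ j, u' j * h i = h j * u j) : DiagRowEquiv h w (w + Pi.single i (w ⬝ᵥ u)) := by
  have det_eq_one (x : ι → S) (hx : x i = 0) : (1 + vecMulVec x (Pi.single i 1)).det = 1 := by
    rw [vecMulVec_eq Unit, det_one_add_replicateCol_mul_replicateRow, single_dotProduct, hx,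
      mul_zero, add_zero]
  refine ⟨1 + vecMulVec u' (Pi.single i 1), 1 + vecMulVec u (Pi.single i 1),
    ⟨?_, det_eq_one _ hu', det_eq_one _ hu⟩, ?_⟩
  · rw [add_mul, mul_add, Matrix.one_mul, Matrix.mul_one]
    congr 1
    ext j k
    rcases eq_or_ne k i with rfl | hk
    · simp [vecMulVec_apply, huu']
    · simp [vecMulVec_apply, hk]
  · rw [vecMul_add, vecMul_one, vecMul_vecMulVec, ← Pi.single_smul', smul_eq_mul, mul_one]

theorem add_single_of_mem_span {i : ι} (w : ι → S) {s : ι → S} {t : S}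
    (hs : ∀ j ≠ i, h i ∣ h j * s j) (ht : t ∈ Ideal.span ((s * w) '' {i}ᶜ)) :
    DiagRowEquiv h w (w + Pi.single i t) := by
  choose! e he using hs
  rw [← Finset.coe_singleton, ← Finset.coe_compl, Ideal.span,
    Submodule.mem_span_image_finset_iff_exists_fun'] at ht
  obtain ⟨c, rfl⟩ := ht
  have huu' (j : ι) : (if j = i then 0 else c j * e j) * h i =
      h j * (if j = i then 0 else c j * s j) := by
    split_ifs with hj
    · simp
    · linear_combination -c j * he j hj
  convert add_single_dotProduct w (if_pos rfl) (if_pos rfl) huu' using 3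
  simp only [dotProduct, mul_ite, mul_zero, smul_eq_mul, Pi.mul_apply, Finset.sum_ite,
    Finset.sum_const_zero, zero_add]
  exact Finset.sum_congr (by ext; simp) fun j _ => by ring

end DiagRowEquiv

end Intertwiner

section Span

variable {ι : Type*} [DecidableEq ι] {S : Type*} [CommRing S]

theorem image_add_single_compl (v : ι → S) (i : ι) (t : S) :
    (v + Pi.single i t) '' {i}ᶜ = v '' {i}ᶜ :=
  Set.image_congr fun j (hj : j ≠ i) => by simp [hj]

theorem span_range_le_span_range_add_single {v : ι → S} {i : ι} {t : S}
    (ht : t ∈ Ideal.span (v '' {i}ᶜ)) :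
    Ideal.span (Set.range v) ≤ Ideal.span (Set.range (v + Pi.single i t)) := by
  have ht' : t ∈ Ideal.span (Set.range (v + Pi.single i t)) :=
    Ideal.span_mono (Set.image_subset_range _ _) (image_add_single_compl v i t ▸ ht)
  rw [Ideal.span_le, Set.range_subset_iff]
  intro j
  have hj : v j + (Pi.single i t : ι → S) j ∈ Ideal.span (Set.range (v + Pi.single i t)) :=
    Ideal.subset_span (Set.mem_range_self j)
  rcases eq_or_ne j i with rfl | hji
  · simpa using sub_mem hj ht'
  · simpa [hji] using hj

end Span

section QuotientData

variable {ι S T : Type*} [CommRing S] [CommRing T]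

/-- The entries of `h` divide `h a`, which divides `h b`, with recorded quotients
`ρ j = h a / h j` (for `j ≠ b`) and `δ j = h b / h j`. The quotients are data because zero entries
of `h` leave them undetermined. -/
structure QuotientData (h : ι → S) (a b : ι) (ρ δ : ι → S) : Prop where
  ne : a ≠ b
  rho_right : ρ b = 1
  delta_right : δ b = 1
  delta_eq : ∀ j ≠ b, δ j = δ a * ρ j
  rho_mul : ∀ j ≠ b, ρ j * h j = h a
  delta_mul : ∀ j, δ j * h j = h b

namespace QuotientData

variable {h ρ δ w : ι → S} {a b : ι}

theorem map (H : QuotientData h a b ρ δ) (φ : S →+* T) :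
    QuotientData (φ ∘ h) a b (φ ∘ ρ) (φ ∘ δ) where
  ne := H.ne
  rho_right := by simp [H.rho_right]
  delta_right := by simp [H.delta_right]
  delta_eq j hj := by simp [H.delta_eq j hj]
  rho_mul j hj := by simp [← H.rho_mul j hj]
  delta_mul j := by simp [← H.delta_mul j]

variable [Fintype ι] [DecidableEq ι]

theorem add_single_left (H : QuotientData h a b ρ δ) {t : S}
    (ht : t ∈ Ideal.span ((ρ * w) '' {a}ᶜ)) : DiagRowEquiv h w (w + Pi.single a t) := by
  refine .add_single_of_mem_span w (fun j _ => ?_) ht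
  rcases eq_or_ne j b with rfl | hj
  · exact (Dvd.intro_left _ (H.delta_mul a)).mul_right _
  · exact (mul_comm (h j) _ ▸ H.rho_mul j hj).symm.dvd

theorem add_single_right (H : QuotientData h a b ρ δ) {t : S}
    (ht : t ∈ Ideal.span ((δ * w) '' {b}ᶜ)) : DiagRowEquiv h w (w + Pi.single b t) :=
  .add_single_of_mem_span w (fun j _ => (mul_comm (h j) _ ▸ H.delta_mul j).symm.dvd) ht

end QuotientData

end QuotientData

section Completion

variable {ι : Type*} [Fintype ι] [DecidableEq ι] {S : Type*} [CommRing S]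

/-- `w` is the `b`-th row of the matrix `Q` of an intertwiner of `diag(h)` of determinant `r`. -/
def HasCompletion (h : ι → S) (b : ι) (w : ι → S) (r : S) : Prop :=
  ∃ P Q : Matrix ι ι S, DiagIntertwiner h r P Q ∧ Q b = w

theorem HasCompletion.diagRowEquiv {h w : ι → S} {b : ι} (hw : HasCompletion h b w 1) :
    DiagRowEquiv h (Pi.single b 1) w := by
  obtain ⟨P, Q, hPQ, rfl⟩ := hw
  exact ⟨P, Q, hPQ, single_one_vecMul b Q⟩

theorem det_updateRow_updateRow_one {a b : ι} (hab : a ≠ b) (u v : ι → S) :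
    (((1 : Matrix ι ι S).updateRow a u).updateRow b v).det = u a * v b - u b * v a := by
  have key : ((1 : Matrix ι ι S).updateRow a u).updateRow b v =
      1 + (of ![Pi.single a (1 : S), Pi.single b 1])ᵀ *
        of ![u - Pi.single a 1, v - Pi.single b 1] := by
    ext i j
    rcases eq_or_ne i b with rfl | hib
    · simp [mul_apply, hab.symm, one_apply, Pi.single_apply, eq_comm]
    rcases eq_or_ne i a with rfl | hia
    · simp [mul_apply, hab, one_apply, Pi.single_apply, eq_comm]
    · simp [mul_apply, hia, hib]
  rw [key, det_one_add_mul_comm, det_fin_two]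
  simp [hab, hab.symm, vecMul_transpose]

/-- Fill the row `a` with `x` at `a` and `-δ a * y` at `b`, and take unit rows elsewhere. -/
theorem QuotientData.hasCompletion {h ρ δ : ι → S} {a b : ι} (H : QuotientData h a b ρ δ)
    (w : ι → S) (x y : S) : HasCompletion h b w (x * w b + y * (δ a * w a)) := by
  refine ⟨(updateRow 1 a (Pi.single a x - Pi.single b y)).updateRow b (δ * w),
    (updateRow 1 a (Pi.single a x - Pi.single b (δ a * y))).updateRow b w, ⟨?_, ?_, ?_⟩,
    updateRow_self⟩
  · ext i j
    rw [mul_diagonal, diagonal_mul]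
    rcases eq_or_ne i b with rfl | hib
    · simp only [updateRow_self, Pi.mul_apply]
      linear_combination w j * H.delta_mul j
    rcases eq_or_ne i a with rfl | hia
    · rcases eq_or_ne j i with rfl | hja
      · simp [H.ne, mul_comm]
      rcases eq_or_ne j b with rfl | hjb
      · simp only [updateRow_apply, hib, hja, if_true, if_false, Pi.sub_apply,
          Pi.single_eq_same, Pi.single_eq_of_ne, ne_eq, not_false_eq_true]
        linear_combination y * H.delta_mul i
      · simp [H.ne, hja, hjb]
    · rcases eq_or_ne i j with rfl | hij
      · simp [hib, hia]
      · simp [hib, hia, hij]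
  · rw [det_updateRow_updateRow_one H.ne]
    simp [H.ne, H.ne.symm, H.delta_right]
  · rw [det_updateRow_updateRow_one H.ne]
    simp only [Pi.sub_apply, Pi.single_eq_same, Pi.single_eq_of_ne H.ne,
      Pi.single_eq_of_ne H.ne.symm]
    ring

end Completion

section Homotopy

variable {ι : Type*} [Fintype ι] [DecidableEq ι]

/-- As `r = det P`, the quotient `P⁻¹ (P + r M) = 1 + adj(P) M` has no denominators. -/
theorem DiagIntertwiner.diagRowEquiv_row {S : Type*} [CommRing S] [IsDomain S] {h : ι → S} {r : S}
    {P Q M N : Matrix ι ι S} (hPQ : DiagIntertwiner h r P Q)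
    (hPQ' : DiagIntertwiner h r (P + r • M) (Q + r • N)) (hr : r ≠ 0) (b : ι) :
    DiagRowEquiv h (Q b) ((Q + r • N) b) := by
  have factor {X Y : Matrix ι ι S} (hX : X.det = r) : X * (1 + X.adjugate * Y) = X + r • Y := by
    rw [mul_add, Matrix.mul_one, ← Matrix.mul_assoc, mul_adjugate, hX, smul_mul, Matrix.one_mul]
  have det_factor {X Y : Matrix ι ι S} (hX : X.det = r) (hXY : (X + r • Y).det = r) :
      (1 + X.adjugate * Y).det = 1 := by
    have := congrArg det (factor (Y := Y) hX)
    rw [det_mul, hX, hXY] at this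
    exact mul_left_cancel₀ hr (this.trans (mul_one r).symm)
  refine ⟨1 + P.adjugate * M, 1 + Q.adjugate * N, ⟨?_, det_factor hPQ.det_left hPQ'.det_left,
    det_factor hPQ.det_right hPQ'.det_right⟩, ?_⟩
  · refine smul_right_injective _ hr ?_
    have cancel : P * ((1 + P.adjugate * M) * diagonal h) =
        P * (diagonal h * (1 + Q.adjugate * N)) := by
      rw [← Matrix.mul_assoc, factor hPQ.det_left, hPQ'.mul_diagonal, ← factor hPQ.det_right,
        ← Matrix.mul_assoc, ← hPQ.mul_diagonal, Matrix.mul_assoc]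
    simpa [← Matrix.mul_assoc P.adjugate P, adjugate_mul, hPQ.det_left] using
      congrArg (P.adjugate * ·) cancel
  · rw [← mul_apply_eq_vecMul, factor hPQ.det_right]

variable {R : Type*} [CommRing R] {h : ι → R} {w w' : ι → Polynomial R}

/-- The elements `c` of the coefficient ring such that, for polynomial rows taken up to the
intertwiners of `diag(h)`, the value at `f` only depends on `f` modulo `c`. -/
def homotopyIdeal (h : ι → R) (w : ι → Polynomial R) : Ideal R where
  carrier := {c | ∀ f g : Polynomial R, DiagRowEquiv (Polynomial.C ∘ h) (fun i => (w i).comp f)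
    (fun i => (w i).comp (f + Polynomial.C c * g))}
  zero_mem' f g := by simpa using .refl _ _
  add_mem' {c d} hc hd f g := by
    simpa only [map_add, add_mul, add_assoc] using (hc f g).trans (hd (f + Polynomial.C c * g) g)
  smul_mem' c d hd f g := by
    simpa only [smul_eq_mul, map_mul, mul_assoc, mul_left_comm] using hd f (Polynomial.C c * g)

theorem DiagRowEquiv.comp (hw : DiagRowEquiv (Polynomial.C ∘ h) w w') (f : Polynomial R) :
    DiagRowEquiv (Polynomial.C ∘ h) (fun i => (w i).comp f) (fun i => (w' i).comp f) := by
  convert hw.map (Polynomial.compRingHom f) using 1 <;>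
    exact funext fun i => by simp

theorem DiagRowEquiv.homotopyIdeal_le (hw : DiagRowEquiv (Polynomial.C ∘ h) w w') :
    homotopyIdeal h w' ≤ homotopyIdeal h w :=
  fun _ hc f g => ((hw.comp f).trans (hc f g)).trans (hw.comp _).symm

theorem diagRowEquiv_eval_zero (hw : homotopyIdeal h w = ⊤) :
    DiagRowEquiv (Polynomial.C ∘ h) w (fun i => Polynomial.C ((w i).eval 0)) := by
  have h1 : (1 : R) ∈ homotopyIdeal h w := hw ▸ Submodule.mem_top
  simpa using h1 Polynomial.X (-Polynomial.X)

theorem HasCompletion.mem_homotopyIdeal [IsDomain R] {b : ι} {r : R}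
    (hw : HasCompletion (Polynomial.C ∘ h) b w (Polynomial.C r)) : r ∈ homotopyIdeal h w := by
  rcases eq_or_ne r 0 with rfl | hr
  · exact zero_mem _
  intro f g
  obtain ⟨P, Q, hPQ, rfl⟩ := hw
  have intertwine (q : Polynomial R) : DiagIntertwiner (Polynomial.C ∘ h) (Polynomial.C r)
      (P.map (Polynomial.compRingHom q)) (Q.map (Polynomial.compRingHom q)) := by
    convert hPQ.map (Polynomial.compRingHom q) using 1
    · ext1 i; simp
    · simp
  have congr_mod (M : Matrix ι ι (Polynomial R)) : ∃ N : Matrix ι ι (Polynomial R),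
      M.map (Polynomial.compRingHom (f + Polynomial.C r * g)) =
        M.map (Polynomial.compRingHom f) + Polynomial.C r • N := by
    have dvd (p : Polynomial R) :
        Polynomial.C r ∣ p.comp (f + Polynomial.C r * g) - p.comp f := by
      have := (p.map Polynomial.C).sub_dvd_eval_sub (f + Polynomial.C r * g) f
      rw [add_sub_cancel_left, Polynomial.eval_map, Polynomial.eval_map] at this
      exact (Dvd.intro _ rfl).trans this
    choose N hN using fun i j => dvd (M i j)
    refine ⟨of N, ?_⟩
    ext1 i j
    simp [← hN]
  obtain ⟨M, hM⟩ := congr_mod P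
  obtain ⟨N, hN⟩ := congr_mod Q
  have hfg := intertwine (f + Polynomial.C r * g)
  rw [hM, hN] at hfg
  have := (intertwine f).diagRowEquiv_row hfg (Polynomial.C_ne_zero.mpr hr) b
  rwa [← hN] at this

end Homotopy

section Unimodular

variable {ι : Type*} {S : Type*} [CommRing S] {h ρ δ w : ι → S} {a b : ι} {t : S}

theorem QuotientData.isCoprime_right (H : QuotientData h a b ρ δ)
    (hw : Ideal.span (Set.range (δ * w)) = ⊤) : IsCoprime (w b) (δ a) := by
  rw [← Ideal.isCoprime_span_singleton_iff, Ideal.isCoprime_iff_sup_eq, eq_top_iff, ← hw,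
    Ideal.span_le, Set.range_subset_iff]
  intro j
  rcases eq_or_ne j b with rfl | hj
  · refine Ideal.mem_sup_left (Ideal.mem_span_singleton.mpr ?_)
    simp [H.delta_right]
  · refine Ideal.mem_sup_right (Ideal.mem_span_singleton.mpr ?_)
    rw [Pi.mul_apply, H.delta_eq j hj, mul_assoc]
    exact Dvd.intro _ rfl

theorem span_singleton_sup_span_image_compl (v : ι → S) (i : ι) :
    Ideal.span {v i} ⊔ Ideal.span (v '' {i}ᶜ) = Ideal.span (Set.range v) := by
  rw [← Set.image_singleton, ← Ideal.span_union, ← Set.image_union, Set.union_compl_self,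
    Set.image_univ]

variable [DecidableEq ι]

theorem span_range_mul_add_single_eq_top {i : ι} (hw : Ideal.span (Set.range (δ * w)) = ⊤)
    (ht : δ i * t ∈ Ideal.span ((δ * w) '' {i}ᶜ)) :
    Ideal.span (Set.range (δ * (w + Pi.single i t))) = ⊤ := by
  rw [mul_add, ← Pi.single_mul_right, eq_top_iff, ← hw]
  exact span_range_le_span_range_add_single ht

theorem QuotientData.span_range_add_single_right (H : QuotientData h a b ρ δ)
    (hw : Ideal.span (Set.range (δ * w)) = ⊤) (ht : t ∈ Ideal.span ((δ * w) '' {b}ᶜ)) :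
    Ideal.span (Set.range (δ * (w + Pi.single b t))) = ⊤ :=
  span_range_mul_add_single_eq_top hw (by rwa [H.delta_right, one_mul])

theorem QuotientData.span_range_add_single_left (H : QuotientData h a b ρ δ)
    (hw : Ideal.span (Set.range (δ * w)) = ⊤) (ht : t ∈ Ideal.span ((ρ * w) '' {a}ᶜ)) :
    Ideal.span (Set.range (δ * (w + Pi.single a t))) = ⊤ := by
  refine span_range_mul_add_single_eq_top hw ?_
  induction ht using Submodule.span_induction with
  | mem x hx =>
    obtain ⟨j, hj, rfl⟩ := hx
    have hj' : δ j * w j ∈ Ideal.span ((δ * w) '' {a}ᶜ) := Ideal.subset_span ⟨j, hj, rfl⟩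
    rcases eq_or_ne j b with rfl | hjb
    · simpa [H.rho_right, H.delta_right] using Ideal.mul_mem_left _ (δ a) hj'
    · simpa [H.delta_eq j hjb, mul_assoc] using hj'
  | zero => simp
  | add x y _ _ hx hy => exact mul_add (δ a) x y ▸ add_mem hx hy
  | smul c x _ hx => exact mul_left_comm (δ a) c x ▸ Ideal.mul_mem_left _ c hx

end Unimodular

section Avoidance

variable {S : Type*} [CommRing S] [IsDomain S]

theorem exists_forall_prime_dvd_add_mul [UniqueFactorizationMonoid S] {n : S} (hn : n ≠ 0)
    (x y : S) : ∃ c, ∀ q, Prime q → q ∣ n → q ∣ x + c * y → q ∣ x ∧ q ∣ y := by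
  classical
  refine ⟨((UniqueFactorizationMonoid.factors n).filter fun p => ¬ p ∣ x).prod,
    fun q hq hqn hqxy => ?_⟩
  obtain ⟨p, hp, hqp⟩ := UniqueFactorizationMonoid.exists_mem_factors_of_dvd hn hq.irreducible hqn
  by_cases hqx : q ∣ x
  · refine ⟨hqx, (hq.dvd_or_dvd ((dvd_add_right hqx).mp hqxy)).resolve_left fun hqc => ?_⟩
    obtain ⟨p', hp', hqp'⟩ := hq.exists_mem_multiset_dvd hqc
    obtain ⟨hp'n, hp'x⟩ := Multiset.mem_filter.mp hp'
    have hassoc := hq.associated_of_dvd (UniqueFactorizationMonoid.prime_of_factor p' hp'n) hqp'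
    exact hp'x (hassoc.dvd_iff_dvd_left.mp hqx)
  · have hpx : ¬ p ∣ x := fun hpx => hqx (hqp.dvd.trans hpx)
    have hqc : q ∣ ((UniqueFactorizationMonoid.factors n).filter fun p => ¬ p ∣ x).prod :=
      hqp.dvd.trans (Multiset.dvd_prod (Multiset.mem_filter_of_mem hp hpx))
    exact absurd ((dvd_add_left (hqc.mul_right y)).mp hqxy) hqx

theorem exists_mem_isCoprime_add [IsPrincipalIdealRing S] {I : Ideal S} {n x : S} (hn : n ≠ 0)
    (hx : Ideal.span {x} ⊔ I = ⊤) : ∃ t ∈ I, IsCoprime n (x + t) := by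
  obtain ⟨y, rfl⟩ := IsPrincipalIdealRing.principal I
  obtain ⟨c, hc⟩ := exists_forall_prime_dvd_add_mul hn x y
  refine ⟨c * y, Ideal.mul_mem_left _ c (Ideal.mem_span_singleton_self y),
    isCoprime_of_prime_dvd (fun h0 => hn h0.1) fun q hq hqn hqxy => hq.not_isUnit ?_⟩
  obtain ⟨hqx, hqy⟩ := hc q hq hqn hqxy
  rw [Ideal.submodule_span_eq, ← Ideal.isCoprime_iff_sup_eq,
    Ideal.isCoprime_span_singleton_iff] at hx
  exact hx.isUnit_of_dvd' hqx hqy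

end Avoidance

section MonicRow

theorem exists_isUnit_C_mem_span_pair {R k : Type*} [CommRing R] [CommRing k] [Nontrivial k]
    (φ : R →+* k) {p q : Polynomial R} (hp : p.Monic) (hpq : IsCoprime (p.map φ) (q.map φ)) :
    ∃ r, IsUnit (φ r) ∧ Polynomial.C r ∈ Ideal.span {p, q} := by
  by_cases hp0 : p.natDegree = 0
  · refine ⟨1, by simp, Ideal.subset_span ?_⟩
    simp [hp.natDegree_eq_zero.mp hp0]
  obtain ⟨x, y, -, -, hxy⟩ :=
    Polynomial.exists_mul_add_mul_eq_C_resultant p q le_rfl le_rfl (.inl hp0)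
  refine ⟨p.resultant q, ?_, Ideal.mem_span_pair.mpr ⟨x, y, by rw [← hxy]; ring⟩⟩
  rw [← Polynomial.isUnit_resultant_iff_isCoprime (hp.map φ), hp.natDegree_map] at hpq
  rw [← Polynomial.resultant_map_map,
    ← Nat.add_sub_of_le (Polynomial.natDegree_map_le (f := φ) (p := q)),
    Polynomial.resultant_add_right_deg _ _ _ _ _ le_rfl]
  simpa [hp.coeff_natDegree] using hpq

variable {ι : Type*} [Fintype ι] [DecidableEq ι] {R : Type*} [CommRing R] [IsDomain R]
  {h ρ δ : ι → R} {a b : ι} {w : ι → Polynomial R}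

/-- Modulo the maximal ideal the polynomial ring is principal, so some multiple of the other
entries makes `w b` coprime to the monic entry `w a`; a resultant lifts this coprimality. -/
theorem QuotientData.exists_mem_homotopyIdeal_notMem (H : QuotientData h a b ρ δ)
    (hw : Ideal.span (Set.range (Polynomial.C ∘ δ * w)) = ⊤) (hwa : (w a).Monic)
    (m : Ideal R) [m.IsMaximal] : ∃ r ∈ homotopyIdeal h w, r ∉ m := by
  let k := R ⧸ m
  let : Field k := Ideal.Quotient.field m
  let φ : Polynomial R →+* Polynomial k := Polynomial.mapRingHom (Ideal.Quotient.mk m)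
  have hφ : Function.Surjective φ := Polynomial.map_surjective _ Ideal.Quotient.mk_surjective
  have HC := H.map (Polynomial.C (R := R))
  set I := Ideal.span ((Polynomial.C ∘ δ * w) '' {b}ᶜ)
  have hsup : Ideal.span {φ (w b)} ⊔ I.map φ = ⊤ := by
    have hwb : w b = (Polynomial.C ∘ δ * w) b := by simp [H.delta_right]
    rw [← Set.image_singleton, ← Ideal.map_span, ← Ideal.map_sup, hwb,
      span_singleton_sup_span_image_compl, hw, Ideal.map_top]
  obtain ⟨t', ht', hcop⟩ := exists_mem_isCoprime_add (hwa.map _).ne_zero hsup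
  obtain ⟨t, ht, rfl⟩ := (Ideal.mem_map_iff_of_surjective φ hφ).mp ht'
  rw [← map_add] at hcop
  obtain ⟨r, hr, hrmem⟩ := exists_isUnit_C_mem_span_pair (Ideal.Quotient.mk m) hwa hcop
  obtain ⟨x, y, hxy⟩ := Ideal.mem_span_pair.mp hrmem
  refine ⟨r, (HC.add_single_right ht).homotopyIdeal_le ?_, fun hrm => ?_⟩
  · obtain ⟨p, q, hpq⟩ := HC.isCoprime_right (HC.span_range_add_single_right hw ht)
    refine HasCompletion.mem_homotopyIdeal (b := b) ?_
    convert HC.hasCompletion (w + Pi.single b t) (x * w a * p + y) (x * q) using 1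
    simp only [Pi.add_apply, Pi.single_eq_same, Pi.single_eq_of_ne H.ne, add_zero,
      Function.comp_apply] at hpq ⊢
    linear_combination -hxy - x * w a * hpq
  · exact hr.ne_zero (Ideal.Quotient.eq_zero_iff_mem.mpr hrm)

theorem QuotientData.homotopyIdeal_eq_top (H : QuotientData h a b ρ δ)
    (hw : Ideal.span (Set.range (Polynomial.C ∘ δ * w)) = ⊤) (hwa : (w a).Monic) :
    homotopyIdeal h w = ⊤ := by
  by_contra hne
  obtain ⟨m, hm, hle⟩ := Ideal.exists_le_maximal _ hne
  obtain ⟨r, hr, hrm⟩ := H.exists_mem_homotopyIdeal_notMem hw hwa m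
  exact hrm (hle hr)

end MonicRow

section DivisorFree

variable {S T : Type*} [CommRing S] [CommRing T]

/-- Only units divide all elements of `I`; in a factorial ring, `I` has codimension at least two. -/
def IsDivisorFree (I : Ideal S) : Prop :=
  ∀ q, I ≤ Ideal.span {q} → IsUnit q

theorem isDivisorFree_of_prime [IsDomain S] [UniqueFactorizationMonoid S] {I : Ideal S} {n : S}
    (hn : n ≠ 0) (hnI : n ∈ I) (h : ∀ q, Prime q → ¬ I ≤ Ideal.span {q}) : IsDivisorFree I := by
  intro q hq
  by_contra hqu
  have hqn := Ideal.mem_span_singleton.mp (hq hnI)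
  obtain ⟨p, hp, hpq⟩ := WfDvdMonoid.exists_irreducible_factor hqu (ne_zero_of_dvd_ne_zero hn hqn)
  exact h p hp.prime (hq.trans (Ideal.span_singleton_le_span_singleton.mpr hpq))

theorem IsDivisorFree.eq_top [IsPrincipalIdealRing S] {I : Ideal S} (hI : IsDivisorFree I) :
    I = ⊤ := by
  obtain ⟨g, rfl⟩ := IsPrincipalIdealRing.principal I
  exact Ideal.span_singleton_eq_top.mpr (hI g le_rfl)

theorem IsDivisorFree.map_equiv {I : Ideal S} (hI : IsDivisorFree I) (e : S ≃+* T) :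
    IsDivisorFree (I.map e) := by
  intro q hq
  have hle : I ≤ Ideal.span {e.symm q} := by
    intro x hx
    have := Ideal.mem_span_singleton.mp (hq (Ideal.mem_map_of_mem e hx))
    exact Ideal.mem_span_singleton.mpr (by simpa using map_dvd e.symm this)
  exact (MulEquiv.isUnit_map e.symm).mp (hI _ hle)

end DivisorFree

namespace QuotientData

variable {ι : Type*} [Fintype ι] [DecidableEq ι] {S : Type*} [CommRing S]
  {h ρ δ w : ι → S} {a b : ι}

theorem diagRowEquiv_of_isCoprime (H : QuotientData h a b ρ δ)
    (hw : IsCoprime (w b) (δ a * w a)) : DiagRowEquiv h (Pi.single b 1) w := by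
  obtain ⟨x, y, hxy⟩ := hw
  exact (hxy ▸ H.hasCompletion w x y).diagRowEquiv

theorem diagRowEquiv_or_exists_isDivisorFree [IsDomain S] [UniqueFactorizationMonoid S]
    (H : QuotientData h a b ρ δ) (hw : Ideal.span (Set.range (δ * w)) = ⊤) :
    DiagRowEquiv h (Pi.single b 1) w ∨ ∃ w', DiagRowEquiv h w w' ∧
      Ideal.span (Set.range (δ * w')) = ⊤ ∧ IsDivisorFree (Ideal.span ((ρ * w') '' {a}ᶜ)) := by
  by_cases hzero : ∀ j ≠ a, j ≠ b → ρ j * w j = 0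
  · refine .inl (H.diagRowEquiv_of_isCoprime ?_)
    rw [← Ideal.isCoprime_span_singleton_iff, Ideal.isCoprime_iff_sup_eq, eq_top_iff, ← hw,
      Ideal.span_le, Set.range_subset_iff]
    intro j
    by_cases hjb : j = b
    · exact Ideal.mem_sup_left (Ideal.mem_span_singleton.mpr (by simp [hjb, H.delta_right]))
    by_cases hja : j = a
    · exact Ideal.mem_sup_right (Ideal.mem_span_singleton.mpr (by simp [hja]))
    · simp [H.delta_eq j hjb, mul_assoc, hzero j hja hjb]
  push Not at hzero
  obtain ⟨i, hia, hib, hi⟩ := hzero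
  obtain ⟨c, hc⟩ := exists_forall_prime_dvd_add_mul hi (w b) (δ a * w a)
  have ht : c * (δ a * w a) ∈ Ideal.span ((δ * w) '' {b}ᶜ) :=
    Ideal.mul_mem_left _ c (Ideal.subset_span ⟨a, H.ne, rfl⟩)
  set w' := w + Pi.single b (c * (δ a * w a)) with hw'
  have hw'_ne {j : ι} (hj : j ≠ b) : w' j = w j := by simp [hw', hj]
  have hmem {j : ι} (hj : j ≠ a) : ρ j * w' j ∈ Ideal.span ((ρ * w') '' {a}ᶜ) :=
    Ideal.subset_span ⟨j, hj, rfl⟩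
  refine .inr ⟨w', H.add_single_right ht, H.span_range_add_single_right hw ht,
    isDivisorFree_of_prime hi (hw'_ne hib ▸ hmem hia) fun q hq hle => hq.not_isUnit ?_⟩
  have hdvd {j : ι} (hj : j ≠ a) : q ∣ ρ j * w' j := Ideal.mem_span_singleton.mp (hle (hmem hj))
  obtain ⟨hqb, hqa⟩ := hc q hq (hw'_ne hib ▸ hdvd hia)
    (by simpa [hw', H.rho_right] using hdvd H.ne.symm)
  rw [← Ideal.span_singleton_eq_top, eq_top_iff, ← hw, Ideal.span_le, Set.range_subset_iff]
  intro j
  refine Ideal.mem_span_singleton.mpr ?_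
  by_cases hjb : j = b
  · simpa [hjb, H.delta_right] using hqb
  by_cases hja : j = a
  · simpa [hja] using hqa
  · rw [Pi.mul_apply, H.delta_eq j hjb, mul_assoc, ← hw'_ne hjb]
    exact (hdvd hja).mul_left _

end QuotientData

section LeadingCoeff

variable {R : Type*} [CommRing R] [IsDomain R] [UniqueFactorizationMonoid R]
  {I : Ideal (Polynomial R)}

/-- By Gauss's lemma, the primitive part of a generator of the extended ideal divides `I`. -/
theorem IsDivisorFree.map_fractionRing_eq_top (hI : IsDivisorFree I) :
    I.map (Polynomial.mapRingHom (algebraMap R (FractionRing R))) = ⊤ := by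
  let : NormalizedGCDMonoid R := Nonempty.some inferInstance
  set φ := Polynomial.mapRingHom (algebraMap R (FractionRing R))
  obtain ⟨g, hg⟩ := IsPrincipalIdealRing.principal (I.map φ)
  rw [Ideal.submodule_span_eq] at hg
  have hg_dvd {x : Polynomial R} (hx : x ∈ I) : g ∣ φ x :=
    Ideal.mem_span_singleton.mp (hg ▸ Ideal.mem_map_of_mem φ hx)
  set p := IsLocalization.integerNormalization (nonZeroDivisors R) g
  obtain ⟨c, hc, hpc⟩ := IsLocalization.integerNormalization_spec (nonZeroDivisors R) g
  have hpg : φ p.primPart ∣ g := by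
    have hcu : IsUnit (Polynomial.C (algebraMap R (FractionRing R) c)) :=
      Polynomial.isUnit_C.mpr (IsLocalization.map_units _ ⟨c, hc⟩)
    rw [Algebra.smul_def, Polynomial.algebraMap_apply] at hpc
    exact (hcu.dvd_mul_left).mp (hpc ▸ map_dvd φ p.primPart_dvd)
  have hprim : IsUnit p.primPart := hI _ fun x hx => Ideal.mem_span_singleton.mpr
    (p.isPrimitive_primPart.dvd_of_fraction_map_dvd_fraction_map (hpg.trans (hg_dvd hx)))
  have hg0 : g ≠ 0 := by
    rintro rfl
    refine not_isUnit_zero (hI 0 fun x hx => Ideal.mem_span_singleton.mpr (zero_dvd_iff.mpr ?_))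
    exact Polynomial.map_injective _ (IsFractionRing.injective R (FractionRing R))
      ((zero_dvd_iff.mp (hg_dvd hx)).trans (map_zero φ).symm)
  rw [hg, Ideal.span_singleton_eq_top]
  exact Polynomial.isUnit_or_eq_zero_of_isUnit_integerNormalization_primPart hg0 hprim

attribute [local instance] Polynomial.algebra in
theorem IsDivisorFree.exists_C_mem (hI : IsDivisorFree I) : ∃ s ≠ 0, Polynomial.C s ∈ I := by
  have := Polynomial.isLocalization (nonZeroDivisors R) (FractionRing R)
  obtain ⟨⟨⟨x, hx⟩, _, s, hs, rfl⟩, hxs⟩ := (IsLocalization.mem_map_algebraMap_iff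
    ((nonZeroDivisors R).map Polynomial.C) (Polynomial (FractionRing R))).mp
    ((Ideal.eq_top_iff_one _).mp hI.map_fractionRing_eq_top)
  rw [one_mul] at hxs
  have hinj := Polynomial.map_injective _ (IsFractionRing.injective R (FractionRing R))
  have hsx : Polynomial.C s = x := hinj hxs
  exact ⟨s, nonZeroDivisors.ne_zero hs, hsx ▸ hx⟩

theorem exists_not_dvd_leadingCoeff_and_C_dvd_sub {S : Type*} [CommRing S] {p : S}
    {f : Polynomial S} (hpf : ¬ Polynomial.C p ∣ f) :
    ∃ u : Polynomial S, ¬ p ∣ u.leadingCoeff ∧ Polynomial.C p ∣ u - f := by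
  set π := Ideal.Quotient.mk (Ideal.span {p})
  have hker (x : S) : π x = 0 ↔ p ∣ x := by
    rw [Ideal.Quotient.eq_zero_iff_mem, Ideal.mem_span_singleton]
  have hC (x : Polynomial S) : x.map π = 0 ↔ Polynomial.C p ∣ x := by
    simp only [Polynomial.ext_iff, Polynomial.coeff_map, Polynomial.coeff_zero, hker,
      Polynomial.C_dvd_iff_dvd_coeff]
  obtain ⟨u, huf, hu⟩ := Polynomial.exists_natDegree_eq_of_mem_lifts
    ((Polynomial.mem_lifts (f.map π)).mpr ⟨f, rfl⟩)
  refine ⟨u, ?_, (hC _).mp (by rw [Polynomial.map_sub, huf, sub_self])⟩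
  rwa [← hker, Polynomial.leadingCoeff, ← Polynomial.coeff_map, huf, hu,
    Polynomial.coeff_natDegree, Polynomial.leadingCoeff_eq_zero, hC]

/-- Take `C s ∈ I` with `s = p ^ N * s'` and `f ∈ I`, `f ≡ u` modulo `p`, with `p` dividing neither
`s'` nor the leading coefficient of `u`. Then `s' u ^ N ≡ s' (u - f) ^ N ≡ 0` modulo `I`. -/
theorem IsDivisorFree.leadingCoeff (hI : IsDivisorFree I) : IsDivisorFree I.leadingCoeff := by
  obtain ⟨s, hs, hsI⟩ := hI.exists_C_mem
  refine isDivisorFree_of_prime hs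
    ((I.mem_leadingCoeff s).mpr ⟨_, hsI, Polynomial.leadingCoeff_C s⟩) fun p hp hle => ?_
  obtain ⟨f, hfI, hpf⟩ : ∃ f ∈ I, ¬ Polynomial.C p ∣ f := by
    by_contra! hall
    exact hp.not_isUnit (Polynomial.isUnit_C.mp
      (hI _ fun f hf => Ideal.mem_span_singleton.mpr (hall f hf)))
  obtain ⟨u, hpu, huf⟩ := exists_not_dvd_leadingCoeff_and_C_dvd_sub hpf
  obtain ⟨s', hs', hps'⟩ :=
    (FiniteMultiplicity.of_prime_left hp hs).exists_eq_pow_mul_and_not_dvd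
  set N := multiplicity p s
  have hmem : Polynomial.C s' * u ^ N ∈ I := by
    have hsub : Polynomial.C s' * (u ^ N - (u - f) ^ N) ∈ I :=
      I.mul_mem_left _ (I.mem_of_dvd (by simpa using sub_dvd_pow_sub_pow u (u - f) N) hfI)
    have hpow : Polynomial.C s' * (u - f) ^ N ∈ I := by
      refine I.mem_of_dvd ?_ hsI
      rw [hs', mul_comm (p ^ N), map_mul, map_pow]
      exact mul_dvd_mul_left _ (pow_dvd_pow_of_dvd huf N)
    simpa [mul_sub] using add_mem hsub hpow
  have hdvd : p ∣ s' * u.leadingCoeff ^ N := Ideal.mem_span_singleton.mp <|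
    hle ((I.mem_leadingCoeff _).mpr ⟨_, hmem, by simp⟩)
  exact (hp.dvd_or_dvd hdvd).elim hps' fun h => hpu (hp.dvd_of_dvd_pow h)

end LeadingCoeff

section Normalization

variable {T : Type*} [CommRing T]

/-- The substitution `X ↦ X + Y ^ N` for the inner variable `Y`, followed by swapping `X`
and `Y`. -/
noncomputable def shearSwap (T : Type*) [CommRing T] (N : ℕ) :
    Polynomial (Polynomial T) ≃ₐ[T] Polynomial (Polynomial T) :=
  ((Polynomial.algEquivAevalXAddC (Polynomial.X ^ N : Polynomial T)).restrictScalars T).trans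
    Polynomial.Bivariate.swap

theorem shearSwap_C_mul_X_pow (N : ℕ) (c : Polynomial T) (i : ℕ) :
    shearSwap T N (Polynomial.C c * Polynomial.X ^ i) =
      c.map Polynomial.C * (Polynomial.X ^ N + Polynomial.C Polynomial.X) ^ i := by
  simp [shearSwap, Polynomial.Bivariate.swap_C, Polynomial.Bivariate.swap_Y, add_comm]

theorem exists_monic_shearSwap {F : Polynomial (Polynomial T)} (hF : F.leadingCoeff.Monic) :
    ∃ N, (shearSwap T N F).Monic := by
  nontriviality T
  set d := F.natDegree
  set N := ((Finset.range d).sup fun i => (F.coeff i).natDegree) + 1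
  have hbase : (Polynomial.X ^ N + Polynomial.C Polynomial.X :
      Polynomial (Polynomial T)).Monic := Polynomial.monic_X_pow_add_C _ (Nat.succ_ne_zero _)
  have hlead := (hF.map Polynomial.C).mul (hbase.pow d)
  have hdeg : N * d ≤ (F.leadingCoeff.map Polynomial.C *
      (Polynomial.X ^ N + Polynomial.C Polynomial.X) ^ d).natDegree := by
    rw [(hF.map _).natDegree_mul (hbase.pow d), hbase.natDegree_pow,
      Polynomial.natDegree_X_pow_add_C, mul_comm]
    exact Nat.le_add_left _ _
  refine ⟨N, ?_⟩
  rw [F.as_sum_range_C_mul_X_pow, Finset.sum_range_succ, map_add, map_sum, shearSwap_C_mul_X_pow]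
  refine hlead.add_of_right ((Polynomial.degree_sum_le _ _).trans_lt ?_)
  rw [Polynomial.degree_eq_natDegree hlead.ne_zero, Finset.sup_lt_iff (WithBot.bot_lt_coe _)]
  intro i hi
  rw [shearSwap_C_mul_X_pow]
  refine Polynomial.degree_le_natDegree.trans_lt (Nat.cast_lt.mpr (lt_of_lt_of_le ?_ hdeg))
  calc _ ≤ (F.coeff i).natDegree + i * N := by
        refine Polynomial.natDegree_mul_le.trans (add_le_add Polynomial.natDegree_map_le ?_)
        exact Polynomial.natDegree_pow_le.trans_eq (by rw [Polynomial.natDegree_X_pow_add_C])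
    _ < N + i * N := by
        gcongr
        exact Nat.lt_succ_of_le
          (Finset.le_sup (f := fun i => (F.coeff i).natDegree) hi)
    _ = N * (i + 1) := by ring
    _ ≤ N * d := Nat.mul_le_mul_left _ (Finset.mem_range.mp hi)

variable {A : Type*} [CommRing A] [IsDomain A]

theorem IsDivisorFree.exists_leadingCoeff_finSuccEquiv [UniqueFactorizationMonoid A] {n : ℕ}
    {I : Ideal (MvPolynomial (Fin (n + 1)) A)} (hI : IsDivisorFree I) :
    ∃ J : Ideal (MvPolynomial (Fin n) A), IsDivisorFree J ∧
      ∀ c ∈ J, ∃ f ∈ I, (finSuccEquiv A n f).leadingCoeff = c := by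
  refine ⟨_, (hI.map_equiv (finSuccEquiv A n).toRingEquiv).leadingCoeff, fun c hc => ?_⟩
  obtain ⟨p, hp, rfl⟩ := (Ideal.mem_leadingCoeff _ c).mp hc
  obtain ⟨f, hf, rfl⟩ := (Ideal.mem_map_iff_of_surjective _ (RingEquiv.surjective _)).mp hp
  exact ⟨f, hf, rfl⟩

/-- Suslin's change of variables: by induction some leading coefficient of `I` is monic in another
variable after a change of variables, and then a shear turns it into a monic element. -/
theorem IsDivisorFree.exists_algEquiv_monic [IsPrincipalIdealRing A] (n : ℕ)
    {I : Ideal (MvPolynomial (Fin (n + 1)) A)} (hI : IsDivisorFree I) :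
    ∃ φ : MvPolynomial (Fin (n + 1)) A ≃ₐ[A] Polynomial (MvPolynomial (Fin n) A),
      ∃ f ∈ I, (φ f).Monic := by
  induction n with
  | zero =>
    obtain ⟨J, hJ, hlift⟩ := hI.exists_leadingCoeff_finSuccEquiv
    have := IsPrincipalIdealRing.of_surjective (isEmptyAlgEquiv A (Fin 0)).symm.toRingHom
      (isEmptyAlgEquiv A (Fin 0)).symm.surjective
    exact ⟨finSuccEquiv A 0, hlift 1 (hJ.eq_top ▸ Submodule.mem_top)⟩
  | succ n ih =>
    obtain ⟨J, hJ, hlift⟩ := hI.exists_leadingCoeff_finSuccEquiv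
    obtain ⟨φ, c, hc, hφc⟩ := ih hJ
    obtain ⟨f, hf, rfl⟩ := hlift c hc
    let ψ : MvPolynomial (Fin (n + 2)) A ≃ₐ[A] Polynomial (Polynomial (MvPolynomial (Fin n) A)) :=
      (finSuccEquiv A (n + 1)).trans (Polynomial.mapAlgEquiv φ)
    have hψ : (ψ f).leadingCoeff.Monic := by
      have := Polynomial.leadingCoeff_map_of_injective (f := RingHomClass.toRingHom φ) φ.injective
        (finSuccEquiv A (n + 1) f)
      exact this ▸ hφc
    obtain ⟨N, hN⟩ := exists_monic_shearSwap hψ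
    exact ⟨(ψ.trans ((shearSwap _ N).restrictScalars A)).trans (Polynomial.mapAlgEquiv φ.symm),
      f, hf, hN.map (RingHomClass.toRingHom φ.symm)⟩

theorem IsDivisorFree.exists_algEquiv_monic_add [IsPrincipalIdealRing A] {n : ℕ}
    {I : Ideal (MvPolynomial (Fin (n + 1)) A)} (hI : IsDivisorFree I)
    (x : MvPolynomial (Fin (n + 1)) A) :
    ∃ φ : MvPolynomial (Fin (n + 1)) A ≃ₐ[A] Polynomial (MvPolynomial (Fin n) A),
      ∃ t ∈ I, (φ (x + t)).Monic := by
  obtain ⟨φ, f, hf, hφf⟩ := hI.exists_algEquiv_monic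
  set N := (φ x).natDegree + 1
  refine ⟨φ, f * φ.symm (Polynomial.X ^ N), I.mul_mem_right _ hf, ?_⟩
  rw [map_add, map_mul, φ.apply_symm_apply]
  refine (hφf.mul (Polynomial.monic_X_pow N)).add_of_right (Polynomial.degree_lt_degree ?_)
  rw [hφf.natDegree_mul (Polynomial.monic_X_pow N), Polynomial.natDegree_X_pow]
  exact Nat.lt_add_left _ (Nat.lt_succ_self _)

end Normalization

section RowsTransitive

variable {ι S T : Type*} [CommRing S] [CommRing T]

theorem span_range_map_mul_eq_top {δ w : ι → S} (hw : Ideal.span (Set.range (δ * w)) = ⊤)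
    (φ : S →+* T) : Ideal.span (Set.range ((φ ∘ δ) * (φ ∘ w))) = ⊤ := by
  have := congrArg (Ideal.map φ) hw
  rw [Ideal.map_span, Ideal.map_top, ← Set.range_comp] at this
  convert this using 3
  ext; simp

variable [DecidableEq ι]

theorem comp_single_one (φ : S →+* T) (b : ι) :
    φ ∘ (Pi.single b 1 : ι → S) = Pi.single b 1 := by
  ext j
  rw [Function.comp_apply, Pi.apply_single (fun _ => φ) (fun _ => map_zero φ), map_one]

variable [Fintype ι]

/-- Every row `w` for which `δ * w` is unimodular is equivalent to the `b`-th unit row. -/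
def RowsTransitive (h δ : ι → S) (b : ι) : Prop :=
  ∀ w : ι → S, Ideal.span (Set.range (δ * w)) = ⊤ → DiagRowEquiv h (Pi.single b 1) w

theorem DiagRowEquiv.of_map_equiv {h w : ι → S} {b : ι} (e : S ≃+* T)
    (hw : DiagRowEquiv (e ∘ h) (Pi.single b 1) (e ∘ w)) : DiagRowEquiv h (Pi.single b 1) w := by
  have hcancel (v : ι → S) : e.symm ∘ e ∘ v = v := funext fun j => e.symm_apply_apply (v j)
  have := hw.map (e.symm : T →+* S)
  rwa [comp_single_one, RingHom.coe_coe, hcancel, hcancel] at this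

theorem RowsTransitive.map_equiv {h δ : ι → S} {b : ι} (hS : RowsTransitive h δ b) (e : S ≃+* T) :
    RowsTransitive (e ∘ h) (e ∘ δ) b := by
  intro w hw
  have hcancel (v : ι → S) : e.symm ∘ e ∘ v = v := funext fun j => e.symm_apply_apply (v j)
  have hw' := span_range_map_mul_eq_top hw (e.symm : T →+* S)
  rw [RingHom.coe_coe, hcancel] at hw'
  exact .of_map_equiv e.symm ((hcancel h).symm ▸ hS _ hw')

end RowsTransitive

namespace QuotientData

variable {ι : Type*} [Fintype ι] [DecidableEq ι] {R : Type*} [CommRing R] [IsDomain R]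
  {h ρ δ : ι → R} {a b : ι}

theorem rowsTransitive_of_isPrincipalIdealRing [IsPrincipalIdealRing R]
    (H : QuotientData h a b ρ δ) : RowsTransitive h δ b := by
  intro w hw
  obtain hw' | ⟨w', hww', hw', hfree⟩ := H.diagRowEquiv_or_exists_isDivisorFree hw
  · exact hw'
  have ht : 1 - w' a ∈ Ideal.span ((ρ * w') '' {a}ᶜ) := hfree.eq_top ▸ Submodule.mem_top
  refine .trans (H.diagRowEquiv_of_isCoprime ?_) (hww'.trans (H.add_single_left ht)).symm
  simpa [H.ne] using H.isCoprime_right (H.span_range_add_single_left hw' ht)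

theorem diagRowEquiv_of_monic (H : QuotientData h a b ρ δ) (hR : RowsTransitive h δ b)
    {w : ι → Polynomial R} (hw : Ideal.span (Set.range (Polynomial.C ∘ δ * w)) = ⊤)
    (hwa : (w a).Monic) : DiagRowEquiv (Polynomial.C ∘ h) (Pi.single b 1) w := by
  have hw0 : Ideal.span (Set.range (δ * fun i => (w i).eval 0)) = ⊤ := by
    convert span_range_map_mul_eq_top hw (Polynomial.evalRingHom 0) using 3
    ext
    simp
  have hconst := (hR _ hw0).map Polynomial.C
  rw [comp_single_one] at hconst
  exact hconst.trans (diagRowEquiv_eval_zero (H.homotopyIdeal_eq_top hw hwa)).symm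

theorem rowsTransitive_mvPolynomial_fin [IsPrincipalIdealRing R] (H : QuotientData h a b ρ δ)
    (n : ℕ) : RowsTransitive (MvPolynomial.C (σ := Fin n) ∘ h) (MvPolynomial.C ∘ δ) b := by
  induction n with
  | zero =>
    have := IsPrincipalIdealRing.of_surjective (isEmptyAlgEquiv R (Fin 0)).symm.toRingHom
      (isEmptyAlgEquiv R (Fin 0)).symm.surjective
    exact (H.map MvPolynomial.C).rowsTransitive_of_isPrincipalIdealRing
  | succ n ih =>
    intro w hw
    have HC := H.map (MvPolynomial.C (σ := Fin (n + 1)))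
    obtain hw' | ⟨w', hww', hw', hfree⟩ := HC.diagRowEquiv_or_exists_isDivisorFree hw
    · exact hw'
    obtain ⟨φ, t, ht, hmonic⟩ := hfree.exists_algEquiv_monic_add (w' a)
    rw [← Pi.single_eq_same (M := fun _ => MvPolynomial (Fin (n + 1)) R) a t,
      ← Pi.add_apply w'] at hmonic
    have hC (v : ι → R) : φ ∘ MvPolynomial.C ∘ v = Polynomial.C ∘ MvPolynomial.C ∘ v :=
      funext fun j => φ.commutes (v j)
    have hunimod := span_range_map_mul_eq_top (HC.span_range_add_single_left hw' ht)
      (RingHomClass.toRingHom φ)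
    rw [RingHom.coe_coe, hC] at hunimod
    have hw'' : DiagRowEquiv (MvPolynomial.C ∘ h) (Pi.single b 1) (w' + Pi.single a t) :=
      .of_map_equiv φ.toRingEquiv
        ((hC h).symm ▸ (H.map MvPolynomial.C).diagRowEquiv_of_monic ih hunimod hmonic)
    exact hw''.trans (hww'.trans (HC.add_single_left ht)).symm

theorem rowsTransitive_mvPolynomial [IsPrincipalIdealRing R] (H : QuotientData h a b ρ δ)
    (σ : Type*) [Finite σ] :
    RowsTransitive (MvPolynomial.C (σ := σ) ∘ h) (MvPolynomial.C ∘ δ) b := by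
  convert (H.rowsTransitive_mvPolynomial_fin (Nat.card σ)).map_equiv
    (renameEquiv R (Finite.equivFin σ)).symm.toRingEquiv using 1 <;>
  · ext
    simp

end QuotientData

section ReducedMinors

theorem reducedIdeal_map_eq_top {S T : Type*} [CommRing S] [CommRing T] {l m k : ℕ}
    {F : Matrix (Fin l) (Fin m) S} {d : S} (hF : reducedIdeal F k d = ⊤) (φ : S →+* T) :
    reducedIdeal (F.map φ) k (φ d) = ⊤ := by
  rw [eq_top_iff, ← Ideal.map_top φ, ← hF, reducedIdeal, Ideal.map_span]
  refine Ideal.span_mono ?_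
  rintro _ ⟨v, ⟨r, c, hv⟩, rfl⟩
  exact ⟨r, c, by rw [← map_mul, hv, RingHom.map_det, RingHom.mapMatrix_apply, submatrix_map]⟩

theorem prod_mul_dvd_prod_of_card_eq {ι S : Type*} [CommMonoid S] {I s : Finset ι} {h : ι → S}
    {y e : S} (hcard : s.card = I.card) (hne : s ≠ I) (hI : ∀ i ∈ I, h i ∣ y)
    (hs : ∀ j ∈ s, j ∉ I → y * e ∣ h j) : (∏ i ∈ I, h i) * e ∣ ∏ j ∈ s, h j := by
  classical
  have hsub : (I \ s).card = (s \ I).card := (Finset.card_sdiff_comm hcard).symm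
  have hpos : (s \ I).card ≠ 0 := by
    rw [Finset.card_ne_zero, Finset.sdiff_nonempty]
    exact fun hle => hne (Finset.eq_of_subset_of_card_le hle hcard.ge)
  calc (∏ i ∈ I, h i) * e
      = (∏ i ∈ I ∩ s, h i) * ((∏ i ∈ I \ s, h i) * e) := by
        rw [← Finset.prod_inter_mul_prod_sdiff I s, mul_assoc]
    _ ∣ (∏ i ∈ I ∩ s, h i) * (y * e) ^ (s \ I).card := by
        rw [mul_pow, ← hsub, ← Finset.prod_const]
        refine mul_dvd_mul_left _ (mul_dvd_mul ?_ (dvd_pow_self e (hsub ▸ hpos)))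
        exact Finset.prod_dvd_prod_of_dvd _ _ fun i hi => hI i (Finset.mem_sdiff.mp hi).1
    _ ∣ (∏ j ∈ s ∩ I, h j) * ∏ j ∈ s \ I, h j := by
        rw [← Finset.prod_const, Finset.inter_comm]
        exact mul_dvd_mul_left _ (Finset.prod_dvd_prod_of_dvd _ _ fun j hj =>
          hs j (Finset.mem_sdiff.mp hj).1 (Finset.mem_sdiff.mp hj).2)
    _ = ∏ j ∈ s, h j := Finset.prod_inter_mul_prod_sdiff s I h

variable {S : Type*} [CommRing S] {p : Ideal S} [p.IsPrime]

theorem det_submatrix_mem_of_vecMul_eq_zero {ι κ : Type*} [Fintype ι] [Fintype κ] [DecidableEq κ]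
    {N : Matrix ι ι S} {w : ι → S} (hwN : w ᵥ* N = 0) {r : κ → ι} (hr : Function.Injective r)
    (c : κ → ι) {k : κ} (hk : w (r k) ∉ p) (hw : ∀ j ∉ Set.range r, w j ∈ p) :
    (N.submatrix r c).det ∈ p := by
  set π := Ideal.Quotient.mk p
  rw [← Ideal.Quotient.eq_zero_iff_mem, RingHom.map_det, ← exists_vecMul_eq_zero_iff]
  refine ⟨fun x => π (w (r x)),
    fun h0 => hk (Ideal.Quotient.eq_zero_iff_mem.mp (congrFun h0 k)), ?_⟩
  ext x
  calc ∑ i, π (w (r i)) * π (N (r i) (c x))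
      = ∑ j, π (w j * N j (c x)) := by
        refine Finset.sum_of_injOn r hr.injOn (by simp) (fun j _ hj => ?_) (by simp)
        rw [map_mul, Ideal.Quotient.eq_zero_iff_mem.mpr (hw j (by simpa using hj)), zero_mul]
    _ = 0 := by rw [← map_sum]; exact (congrArg π (congrFun hwN (c x))).trans (map_zero π)

theorem exists_succ_eq_mul_mem [IsDomain S] {m : ℕ} {h : Fin (m + 1) → S}
    (hchain : ∀ i : Fin m, h i.castSucc ∣ h i.succ) {k : Fin (m + 1)} (hk : h k ≠ 0) {d : S}
    (hd : d * h k = h (Fin.last m)) (hdp : d ∈ p) :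
    ∃ i : Fin m, k ≤ i.castSucc ∧ h i.castSucc ≠ 0 ∧ ∃ e ∈ p, h i.succ = h i.castSucc * e := by
  by_contra! hno
  have hquot (j : Fin (m + 1)) : k ≤ j → ∃ e ∉ p, h j = h k * e := by
    have one_notMem : (1 : S) ∉ p := (Ideal.ne_top_iff_one p).mp ‹p.IsPrime›.ne_top
    induction j using Fin.induction with
    | zero => exact fun hk0 => ⟨1, one_notMem, by rw [Fin.le_zero_iff.mp hk0, mul_one]⟩
    | succ i ih =>
      intro hki
      obtain rfl | hlt := hki.eq_or_lt
      · exact ⟨1, one_notMem, (mul_one _).symm⟩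
      obtain ⟨e, he, hie⟩ := ih (Fin.le_castSucc_iff.mpr hlt)
      obtain ⟨e', he'⟩ := hchain i
      have hi : h i.castSucc ≠ 0 := hie ▸ mul_ne_zero hk fun h0 => he (h0 ▸ p.zero_mem)
      refine ⟨e * e', fun hmem => ?_, by rw [he', hie, mul_assoc]⟩
      exact (Ideal.IsPrime.mem_or_mem ‹_› hmem).elim he
        fun h' => hno i (Fin.le_castSucc_iff.mpr hlt) hi e' h' he'
  obtain ⟨e, he, hke⟩ := hquot _ (Fin.le_last k)
  rw [← hd, mul_comm] at hke
  exact he (mul_left_cancel₀ hk hke ▸ hdp)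

variable [IsDomain S] {m : ℕ} {h δ w : Fin (m + 1) → S} {N : Matrix (Fin (m + 1)) (Fin (m + 1)) S}

/-- A minor of `diag(h) N` using a row beyond `i` gains the factor `e ∈ p`; the minors on the rows
up to `i` are, modulo `p`, killed by the nonzero truncation of `w`. -/
theorem reducedIdeal_diagonal_mul_le (hchain : ∀ i j, i ≤ j → h i ∣ h j) (hwN : w ᵥ* N = 0)
    {i : Fin m} (hi : h i.castSucc ≠ 0) {e : S} (he : e ∈ p) (hie : h i.succ = h i.castSucc * e)
    {k : Fin (m + 1)} (hki : k ≤ i.castSucc) (hk : w k ∉ p) (hw : ∀ j > i.castSucc, w j ∈ p) :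
    reducedIdeal (diagonal h * N) (i + 1)
      (∏ j ∈ Finset.univ.filter fun j : Fin (m + 1) => (j : ℕ) < i + 1, h j) ≤ p := by
  set I := Finset.univ.filter fun j : Fin (m + 1) => (j : ℕ) < i + 1
  have mem_I (j : Fin (m + 1)) : j ∈ I ↔ j ≤ i.castSucc := by
    simp [I, Fin.le_def]
  have hI_ne : ∏ j ∈ I, h j ≠ 0 := Finset.prod_ne_zero_iff.mpr fun j hj =>
    ne_zero_of_dvd_ne_zero hi (hchain _ _ ((mem_I j).mp hj))
  refine Ideal.span_le.mpr ?_
  rintro v ⟨r, c, hv⟩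
  have hdet : ((diagonal h * N).submatrix r c).det =
      (∏ j ∈ Finset.univ.map r, h j) * (N.submatrix r c).det := by
    rw [Finset.prod_map, ← det_mul_column]
    congr 1
    ext
    simp
  rw [hdet] at hv
  by_cases hr : Finset.univ.map r = I
  · have hrange (j : Fin (m + 1)) : j ∈ Set.range r ↔ j ≤ i.castSucc := by
      simp [← mem_I, ← hr]
    obtain ⟨x, rfl⟩ := (hrange k).mpr hki
    rw [hr] at hv
    exact mul_left_cancel₀ hI_ne hv ▸ det_submatrix_mem_of_vecMul_eq_zero hwN r.injective c hk
      fun j hj => hw j (not_le.mp fun hle => hj ((hrange j).mpr hle))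
  · have hcard : (Finset.univ.map r).card = I.card := by
      have hI : I = Finset.Iic i.castSucc := Finset.ext fun j => by rw [mem_I, Finset.mem_Iic]
      rw [Finset.card_map, Finset.card_fin, hI, Fin.card_Iic, Fin.val_castSucc]
    have hdvd : (∏ j ∈ I, h j) * e ∣ ∏ j ∈ Finset.univ.map r, h j :=
      prod_mul_dvd_prod_of_card_eq hcard hr (fun j hj => hchain _ _ ((mem_I j).mp hj))
        fun j _ hj => hie ▸ hchain _ _
          (Fin.castSucc_lt_iff_succ_le.mp (not_le.mp (mt (mem_I j).mpr hj)))
    have hev : e ∣ v := (mul_dvd_mul_iff_left hI_ne).mp (hdvd.trans (Dvd.intro _ hv.symm))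
    exact p.mem_of_dvd hev he

theorem span_range_quotient_mul_eq_top (hchain : ∀ i j, i ≤ j → h i ∣ h j)
    (hδ : ∀ j, δ j * h j = h (Fin.last m)) (hδ_one : ∀ j, h j = 0 → δ j = 1)
    (hw : Ideal.span (Set.range w) = ⊤) (hwN : w ᵥ* N = 0)
    (hred : ∀ k, 1 ≤ k → k ≤ m → reducedIdeal (diagonal h * N) k
      (∏ j ∈ Finset.univ.filter fun j : Fin (m + 1) => (j : ℕ) < k, h j) = ⊤) :
    Ideal.span (Set.range (δ * w)) = ⊤ := by
  by_contra hne
  obtain ⟨p, hp, hle⟩ := Ideal.exists_le_maximal _ hne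
  have hδw (j : Fin (m + 1)) : δ j * w j ∈ p := hle (Ideal.subset_span ⟨j, rfl⟩)
  obtain ⟨k, hk, hk_max⟩ : ∃ k, w k ∉ p ∧ ∀ j > k, w j ∈ p := by
    have hex : {k | w k ∉ p}.Nonempty := by
      by_contra! hall
      refine hp.ne_top (top_le_iff.mp (hw ▸ Ideal.span_le.mpr ?_))
      refine Set.range_subset_iff.mpr fun k => ?_
      exact not_not.mp (hall ▸ Set.notMem_empty k : k ∉ {k | w k ∉ p})
    obtain ⟨k, hk⟩ := (Set.toFinite _).exists_maximal hex
    exact ⟨k, hk.prop, fun j hj => not_not.mp (hk.not_prop_of_gt hj)⟩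
  have hδk : δ k ∈ p := (hp.isPrime.mem_or_mem (hδw k)).resolve_right hk
  have hhk : h k ≠ 0 := fun h0 => hp.ne_top ((Ideal.eq_top_iff_one p).mpr (hδ_one k h0 ▸ hδk))
  obtain ⟨i, hki, hi, e, he, hie⟩ := exists_succ_eq_mul_mem
    (fun i => hchain _ _ (Fin.castSucc_le_succ i)) hhk (hδ k) hδk
  refine hp.ne_top (top_le_iff.mp ?_)
  rw [← hred (i + 1) (Nat.le_add_left 1 i) i.isLt]
  exact reducedIdeal_diagonal_mul_le hchain hwN hi he hie hki hk
    fun j hj => hk_max j (hki.trans_lt hj)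

end ReducedMinors

section Rows

theorem exists_quotientData {ι S : Type*} [CommRing S] {h : ι → S} {a b : ι} (hab : a ≠ b)
    (ha : ∀ j ≠ b, h j ∣ h a) (hb : h a ∣ h b) :
    ∃ ρ δ, QuotientData h a b ρ δ ∧ ∀ j, h j = 0 → δ j = 1 := by
  classical
  have exists_quotient {x y : S} (hxy : x ∣ y) : ∃ c, c * x = y ∧ (x = 0 → c = 1) := by
    by_cases hx : x = 0
    · subst hx
      exact ⟨1, by rw [one_mul, zero_dvd_iff.mp hxy], fun _ => rfl⟩
    · obtain ⟨c, rfl⟩ := hxy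
      exact ⟨c, mul_comm c x, fun h0 => absurd h0 hx⟩
  obtain ⟨d, hd, hd_one⟩ := exists_quotient hb
  choose! c hc hc_one using fun j (hj : j ≠ b) => exists_quotient (ha j hj)
  set ρ : ι → S := fun j => if j = a ∨ j = b then 1 else c j with hρ
  have hρ_mul (j : ι) (hj : j ≠ b) : ρ j * h j = h a := by
    by_cases hja : j = a
    · simp [hρ, hja]
    · simp [hρ, hja, hj, hc]
  have hρ_one (j : ι) (hj : j ≠ b) (h0 : h j = 0) : ρ j = 1 := by
    by_cases hja : j = a
    · simp [hρ, hja]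
    · simp [hρ, hja, hj, hc_one j hj h0]
  refine ⟨ρ, fun j => if j = b then 1 else d * ρ j, ⟨hab, by simp [hρ], by simp,
    fun j hj => by simp [hj, hab, hρ], hρ_mul, fun j => ?_⟩, fun j h0 => ?_⟩ <;>
  by_cases hj : j = b
  · simp [hj]
  · simp only [if_neg hj, mul_assoc, hρ_mul j hj, hd]
  · simp only [if_pos hj]
  · have ha0 : h a = 0 := by rw [← hρ_mul j hj, h0, mul_zero]
    simp only [if_neg hj, hρ_one j hj h0, hd_one ha0, one_mul]

variable {A : Type*} [CommRing A] [IsDomain A] [IsPrincipalIdealRing A] {σ : Type*} [Finite σ]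

theorem exists_diagIntertwiner_last_row_eq_zero {m : ℕ} {h : Fin (m + 1) → A}
    (hchain : ∀ i j, i ≤ j → h i ∣ h j)
    {N : Matrix (Fin (m + 1)) (Fin (m + 1)) (MvPolynomial σ A)} (hN : IsUnit N.det)
    (hred : ∀ k, 1 ≤ k → k ≤ m → reducedIdeal
      (diagonal (MvPolynomial.C ∘ h) * (N * diagonal (Function.update 1 (Fin.last m) 0))) k
      (∏ j ∈ Finset.univ.filter fun j : Fin (m + 1) => (j : ℕ) < k, MvPolynomial.C (h j)) = ⊤) :
    ∃ P Q : Matrix (Fin (m + 1)) (Fin (m + 1)) (MvPolynomial σ A),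
      DiagIntertwiner (MvPolynomial.C ∘ h) 1 P Q ∧
        ∀ j ≠ Fin.last m, (Q * N) (Fin.last m) j = 0 := by
  obtain _ | m := m
  · exact ⟨1, 1, .one _, fun j hj => absurd (Fin.ext (by omega)) hj⟩
  set b := Fin.last (m + 1)
  set w := Pi.single b 1 ᵥ* N⁻¹
  have hwN : w ᵥ* N = Pi.single b 1 := by
    rw [vecMul_vecMul, nonsing_inv_mul N hN, vecMul_one]
  have hw : Ideal.span (Set.range w) = ⊤ := by
    rw [Ideal.eq_top_iff_one, ← Pi.single_eq_same (M := fun _ => MvPolynomial σ A) b 1, ← hwN]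
    change ∑ j, w j * N j b ∈ _
    exact Ideal.sum_mem _ fun j _ =>
      Ideal.mul_mem_right _ _ (Ideal.subset_span (Set.mem_range_self j))
  have hwN0 : w ᵥ* (N * diagonal (Function.update 1 b 0)) = 0 := by
    rw [← vecMul_vecMul, hwN, single_one_vecMul]
    ext j
    simp [diagonal_apply]
  obtain ⟨ρ, δ, H, hδ_one⟩ := exists_quotientData (h := h) (Fin.castSucc_lt_last (Fin.last m)).ne
    (fun j hj => hchain _ _ (Fin.le_castSucc_iff.mpr (Fin.lt_last_iff_ne_last.mpr hj)))
    (hchain _ _ (Fin.le_last _))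
  have hunimod : Ideal.span (Set.range (MvPolynomial.C ∘ δ * w)) = ⊤ :=
    span_range_quotient_mul_eq_top (fun i j hij => map_dvd _ (hchain i j hij))
      (H.map (MvPolynomial.C (σ := σ))).delta_mul
      (fun j h0 => by simp [hδ_one j (by simpa using h0)]) hw hwN0 hred
  obtain ⟨P, Q, hPQ, hQ⟩ := H.rowsTransitive_mvPolynomial σ w hunimod
  refine ⟨P, Q, hPQ, fun j hj => ?_⟩
  calc (Q * N) b j = (Pi.single b 1 ᵥ* (Q * N)) j := (congrFun (single_one_vecMul b _) j).symm
    _ = 0 := by rw [← vecMul_vecMul, hQ, hwN, Pi.single_eq_of_ne hj]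

end Rows

section Factorization

variable {ι : Type*} [Fintype ι] [DecidableEq ι] {R : Type*} [CommRing R]

theorem exists_mul_diagonal_update_eq {Y : Matrix ι ι R} {b : ι} {g : R}
    (hg : g ∈ nonZeroDivisors R) (hY : ∀ j ≠ b, g ∣ Y b j) :
    ∃ Z : Matrix ι ι R, Z.det = Y.det ∧
      Y * diagonal (Function.update 1 b g) = diagonal (Function.update 1 b g) * Z := by
  choose! z hz using hY
  set E : Matrix ι ι R := diagonal (Function.update 1 b g) with hE
  set Z : Matrix ι ι R := (Y * E).updateRow b (Function.update z b (Y b b)) with hZ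
  have hYZ : Y * E = E * Z := by
    ext i j
    rw [hE, mul_diagonal, diagonal_mul, hZ]
    rcases eq_or_ne i b with rfl | hi
    · rcases eq_or_ne j i with rfl | hj
      · simp [mul_comm]
      · simp [hj, hz]
    · simp [hi, hE]
  have hEdet : E.det = g := by simp [hE, det_diagonal, Finset.prod_update_of_mem]
  refine ⟨Z, (mul_cancel_left_mem_nonZeroDivisors hg).mp ?_, hYZ⟩
  rw [← hEdet, ← det_mul, ← hYZ, det_mul, mul_comm]

theorem DiagIntertwiner.exists_eq_mul_diagonal_mul {h : ι → R} {P Q V : Matrix ι ι R} {b : ι}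
    {g : R} (hPQ : DiagIntertwiner h 1 P Q) (hg : g ∈ nonZeroDivisors R)
    (hrow : ∀ j ≠ b, g ∣ (Q * V) b j) :
    ∃ U Z : Matrix ι ι R, U.det = 1 ∧ Z.det = V.det ∧
      diagonal h * V * diagonal (Function.update 1 b g) =
        U * diagonal (Function.update h b (g * h b)) * Z := by
  obtain ⟨Z, hZdet, hZ⟩ := exists_mul_diagonal_update_eq hg hrow
  set E : Matrix ι ι R := diagonal (Function.update 1 b g) with hE
  refine ⟨P.adjugate, Z, hPQ.adjugate.det_left, by rw [hZdet, det_mul, hPQ.det_right, one_mul], ?_⟩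
  have hQ : Q.adjugate * Q = 1 := by rw [adjugate_mul, hPQ.det_right, one_smul]
  have hhE : diagonal (Function.update h b (g * h b)) = diagonal h * E := by
    rw [hE, diagonal_mul_diagonal]
    congr 1
    ext j
    rcases eq_or_ne j b with rfl | hj
    · simp [mul_comm]
    · simp [hj]
  calc diagonal h * V * E
      = diagonal h * (Q.adjugate * Q) * V * E := by rw [hQ, Matrix.mul_one]
    _ = diagonal h * Q.adjugate * (Q * V * E) := by simp only [Matrix.mul_assoc]
    _ = P.adjugate * diagonal (Function.update h b (g * h b)) * Z := by
      rw [← hPQ.adjugate.mul_diagonal, hZ, hhE]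
      simp only [Matrix.mul_assoc]

end Factorization

section Retraction

variable {K τ : Type*} [CommRing K]

theorem dvd_sub_of_dvd_X_sub {φ : MvPolynomial τ K →ₐ[K] MvPolynomial τ K} {g : MvPolynomial τ K}
    (hφ : ∀ t, g ∣ X t - φ (X t)) (p : MvPolynomial τ K) : g ∣ p - φ p := by
  have hcomp : (Ideal.Quotient.mkₐ K (Ideal.span {g})).comp φ = Ideal.Quotient.mkₐ K _ :=
    algHom_ext fun t => (Ideal.Quotient.eq.mpr (Ideal.mem_span_singleton.mpr (hφ t))).symm
  rw [← Ideal.mem_span_singleton, ← Ideal.Quotient.eq]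
  exact (DFunLike.congr_fun hcomp p).symm

theorem eqOn_supported {T : Type*} [Semiring T] [Algebra K T] {φ ψ : MvPolynomial τ K →ₐ[K] T}
    {s : Set τ} (h : ∀ t ∈ s, φ (X t) = ψ (X t)) : Set.EqOn φ ψ (supported K s) :=
  AlgHom.eqOn_adjoin_iff.mpr (Set.forall_mem_image.mpr h)

theorem exists_retraction_ker_eq_span_X_sub {x y : τ} (hxy : x ≠ y) {f : MvPolynomial τ K}
    (hf : f ∈ supported K {x}ᶜ) :
    ∃ (ι : MvPolynomial {t // t ≠ x ∧ t ≠ y} (Polynomial K) →+* MvPolynomial τ K)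
      (ε : MvPolynomial τ K →+* MvPolynomial {t // t ≠ x ∧ t ≠ y} (Polynomial K)),
      ε.comp ι = .id _ ∧ RingHom.ker ε = Ideal.span {X x - f} ∧
        ∀ p ∈ supported K {y}, p ∈ (ι.comp MvPolynomial.C).range := by
  classical
  set ι : MvPolynomial {t // t ≠ x ∧ t ≠ y} (Polynomial K) →ₐ[K] MvPolynomial τ K :=
    aevalTower (Polynomial.aeval (X y)) fun s => X s.1 with hι
  set θ : τ → MvPolynomial {t // t ≠ x ∧ t ≠ y} (Polynomial K) := fun t =>
    if ht : t ≠ x ∧ t ≠ y then X ⟨t, ht⟩ else MvPolynomial.C Polynomial.X with hθ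
  set ε : MvPolynomial τ K →ₐ[K] MvPolynomial {t // t ≠ x ∧ t ≠ y} (Polynomial K) :=
    aeval (Function.update θ x (aeval θ f)) with hε
  have hεX (t : τ) (ht : t ≠ x) : ε (X t) = θ t := by simp [hε, ht]
  have hιθ (t : τ) (ht : t ≠ x) : ι (θ t) = X t := by
    rcases eq_or_ne t y with rfl | hty
    · simp [hι, hθ]
    · simp [hι, hθ, ht, hty]
  have hεf : ε f = aeval θ f := eqOn_supported (fun t ht => by rw [hεX t ht, aeval_X]) hf
  have hιf : ι (aeval θ f) = f :=
    eqOn_supported (φ := ι.comp (aeval θ)) (ψ := .id K _)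
      (fun t ht => by simpa using hιθ t ht) hf
  have hdvd : ∀ p, X x - f ∣ p - ι (ε p) := dvd_sub_of_dvd_X_sub (φ := ι.comp ε) fun t => by
    rcases eq_or_ne t x with rfl | ht
    · simp [hε, hιf]
    · simp [hεX t ht, hιθ t ht]
  refine ⟨ι, ε, ?_, ?_, fun p hp => ?_⟩
  · have hεy : ε (X y) = MvPolynomial.C Polynomial.X := by simp [hεX y hxy.symm, hθ]
    have : ε.comp ι = .id K _ := by
      refine algHom_ext' (Polynomial.algHom_ext ?_) fun s => ?_
      · simp [hι, hεy, algebraMap_eq]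
      · simp [hι, hεX s s.2.1, hθ, s.2]
    exact congrArg AlgHom.toRingHom this
  · ext p
    rw [Ideal.mem_span_singleton]
    refine ⟨fun hp => ?_, fun ⟨q, hq⟩ => ?_⟩
    · simpa [show ε p = 0 from hp] using hdvd p
    · have hεx : ε (X x) = aeval θ f := by simp [hε]
      simp [hq, hεx, hεf]
  · rw [supported, Set.image_singleton, Algebra.adjoin_singleton_eq_range_aeval] at hp
    obtain ⟨q, rfl⟩ := hp
    exact ⟨q, by simp [hι]⟩

end Retraction

section Equivalence

theorem update_last_eq_ite {M : Type*} {m : ℕ} (u v : Fin (m + 1) → M) :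
    Function.update v (Fin.last m) (u (Fin.last m)) =
      fun i : Fin (m + 1) => if (i : ℕ) = m then u i else v i := by
  ext i
  rcases eq_or_ne i (Fin.last m) with rfl | hi
  · simp
  · rw [Function.update_of_ne hi, if_neg (by simpa [Fin.ext_iff] using hi)]

variable {A σ R : Type*} [CommRing A] [IsDomain A] [IsPrincipalIdealRing A] [Finite σ] [CommRing R]
  {g : R} {ι : MvPolynomial σ A →+* R} {ε : R →+* MvPolynomial σ A}

theorem matEquiv_diagonal_update_last (hg : g ∈ nonZeroDivisors R) (hει : ε.comp ι = .id _)
    (hker : RingHom.ker ε = Ideal.span {g}) {m : ℕ} {h : Fin (m + 1) → A}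
    (hchain : ∀ i j, i ≤ j → h i ∣ h j)
    {V : Matrix (Fin (m + 1)) (Fin (m + 1)) R} (hV : IsUnit V.det)
    (hred : ∀ k, 1 ≤ k → k ≤ m → reducedIdeal
      (diagonal (ι ∘ MvPolynomial.C ∘ h) * V * diagonal (Function.update 1 (Fin.last m) g)) k
      (∏ j ∈ Finset.univ.filter fun j : Fin (m + 1) => (j : ℕ) < k, ι (.C (h j))) = ⊤) :
    MatEquiv (diagonal (ι ∘ MvPolynomial.C ∘ h) * V * diagonal (Function.update 1 (Fin.last m) g))
      (diagonal (Function.update (ι ∘ MvPolynomial.C ∘ h) (Fin.last m)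
        (g * ι (.C (h (Fin.last m)))))) := by
  have hει_apply (p : MvPolynomial σ A) : ε (ι p) = p := DFunLike.congr_fun hει p
  have hεg : ε g = 0 := by
    rw [← RingHom.mem_ker, hker]
    exact Ideal.mem_span_singleton_self g
  have hεV : IsUnit (V.map ε).det := by
    rw [← RingHom.mapMatrix_apply, ← RingHom.map_det]
    exact hV.map ε
  have hεB : (diagonal (ι ∘ MvPolynomial.C ∘ h) * V *
      diagonal (Function.update 1 (Fin.last m) g)).map ε = diagonal (MvPolynomial.C ∘ h) *
        (V.map ε * diagonal (Function.update 1 (Fin.last m) 0)) := by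
    have hupdate : ε ∘ Function.update (1 : Fin (m + 1) → R) (Fin.last m) g =
        Function.update (1 : Fin (m + 1) → MvPolynomial σ A) (Fin.last m) 0 := by
      rw [Function.comp_update, hεg]
      exact congrArg (Function.update · _ _) (funext fun _ => map_one ε)
    have hεh : ε ∘ ι ∘ MvPolynomial.C ∘ h = MvPolynomial.C ∘ h :=
      funext fun j => hει_apply (.C (h j))
    have map_diagonal (d : Fin (m + 1) → R) : (diagonal d).map ε = diagonal (ε ∘ d) :=
      diagonal_map (map_zero ε)
    rw [Matrix.map_mul, Matrix.map_mul, map_diagonal, map_diagonal, hεh, hupdate, Matrix.mul_assoc]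
  obtain ⟨P, Q, hPQ, hQ⟩ := exists_diagIntertwiner_last_row_eq_zero hchain hεV fun k h1 hk => by
    simpa only [hεB, map_prod, hει_apply] using reducedIdeal_map_eq_top (hred k h1 hk) ε
  have hPQι : DiagIntertwiner (ι ∘ MvPolynomial.C ∘ h) 1 (P.map ι) (Q.map ι) := by
    simpa only [map_one] using hPQ.map ι
  have hrow (j : Fin (m + 1)) (hj : j ≠ Fin.last m) : g ∣ (Q.map ι * V) (Fin.last m) j := by
    rw [← Ideal.mem_span_singleton, ← hker, RingHom.mem_ker, ← hQ j hj]
    simp [mul_apply, hει_apply]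
  obtain ⟨U, Z, hU, hZ, hUZ⟩ := hPQι.exists_eq_mul_diagonal_mul hg hrow
  exact ⟨U, Z, hU ▸ isUnit_one, hZ ▸ hV, hUZ⟩

theorem matEquiv_diagonal_ite_of_retraction (hg : g ∈ nonZeroDivisors R) (hει : ε.comp ι = .id _)
    (hker : RingHom.ker ε = Ideal.span {g})
    {l : ℕ} {h : Fin l → R} (hA : ∀ i, h i ∈ (ι.comp MvPolynomial.C).range)
    (hchain : ∀ i j, i ≤ j → h i ∣ h j) {V : Matrix (Fin l) (Fin l) R} (hV : IsUnit V.det)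
    (hred : ∀ k, 1 ≤ k → k ≤ l - 1 → reducedIdeal
      (diagonal h * V * diagonal fun i : Fin l => if (i : ℕ) = l - 1 then g else 1) k
      (∏ j ∈ Finset.univ.filter fun j : Fin l => (j : ℕ) < k, h j) = ⊤) :
    MatEquiv (diagonal h * V * diagonal fun i : Fin l => if (i : ℕ) = l - 1 then g else 1)
      (diagonal fun i : Fin l => if (i : ℕ) = l - 1 then g * h i else h i) := by
  obtain _ | m := l
  · exact ⟨1, 1, by simp, by simp, Subsingleton.elim _ _⟩
  choose h' hh' using hA
  obtain rfl : ι ∘ MvPolynomial.C ∘ h' = h := funext hh'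
  have coeff_h (i : Fin (m + 1)) : constantCoeff (ε (ι (MvPolynomial.C (h' i)))) = h' i := by
    rw [← RingHom.comp_apply ε, hει, RingHom.id_apply, constantCoeff_C]
  have hchain' (i j : Fin (m + 1)) (hij : i ≤ j) : h' i ∣ h' j :=
    coeff_h i ▸ coeff_h j ▸ map_dvd (constantCoeff.comp ε) (hchain i j hij)
  have hupdate := matEquiv_diagonal_update_last hg hει hker hchain' hV
  rw [update_last_eq_ite (fun _ => g) 1,
    update_last_eq_ite (fun i => g * ι (.C (h' i)))] at hupdate
  exact hupdate hred

end Equivalence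

theorem statement0_general {K τ : Type*} [Field K] [Finite τ] {x y : τ} (hxy : x ≠ y) {l : ℕ}
    {h : Fin l → MvPolynomial τ K} (hsup : ∀ i, h i ∈ supported K {y})
    (hchain : ∀ i j, i ≤ j → h i ∣ h j) {f : MvPolynomial τ K} (hf : f ∈ supported K {x}ᶜ)
    {V : Matrix (Fin l) (Fin l) (MvPolynomial τ K)} (hV : IsUnit V.det)
    (hred : ∀ k, 1 ≤ k → k ≤ l - 1 → reducedIdeal
      (diagonal h * V * diagonal fun i : Fin l => if (i : ℕ) = l - 1 then X x - f else 1) k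
      (∏ j ∈ Finset.univ.filter fun j : Fin l => (j : ℕ) < k, h j) = ⊤) :
    MatEquiv (diagonal h * V * diagonal fun i : Fin l => if (i : ℕ) = l - 1 then X x - f else 1)
      (diagonal fun i : Fin l => if (i : ℕ) = l - 1 then (X x - f) * h i else h i) := by
  obtain ⟨ι, ε, hει, hker, hrange⟩ := exists_retraction_ker_eq_span_X_sub hxy hf
  have hXf : X x - f ≠ 0 := fun h0 => by
    rw [← sub_eq_zero.mp h0, X_mem_supported] at hf
    exact hf rfl
  exact matEquiv_diagonal_ite_of_retraction (mem_nonZeroDivisors_of_ne_zero hXf) hει hker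
    (fun i => hrange _ (hsup i)) hchain hV hred

theorem statement0 {K : Type*} [Field K] (n : ℕ) (hn : 2 ≤ n) (l : ℕ) (hl : 0 < l)
    (h : Fin l → MvPolynomial (Fin n) K)
    (hsup : ∀ i : Fin l, h i ∈ MvPolynomial.supported K {(⟨n - 1, by omega⟩ : Fin n)})
    (hchain : ∀ i j : Fin l, i ≤ j → h i ∣ h j)
    (f : MvPolynomial (Fin n) K)
    (hf : f ∈ MvPolynomial.supported K {t : Fin n | (t : ℕ) ≠ 0})
    (V : Matrix (Fin l) (Fin l) (MvPolynomial (Fin n) K))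
    (hVsup : ∀ i j : Fin l, V i j ∈ MvPolynomial.supported K {t : Fin n | (t : ℕ) ≠ 0})
    (hVuni : IsUnit V.det)
    (B : Matrix (Fin l) (Fin l) (MvPolynomial (Fin n) K))
    (hB : B = Matrix.diagonal h * V *
      Matrix.diagonal (fun i : Fin l =>
        if (i : ℕ) = l - 1 then MvPolynomial.X (⟨0, by omega⟩ : Fin n) - f else 1))
    (hgcd : ∀ k : ℕ, 1 ≤ k → k ≤ l - 1 →
      IsGcdMinors B k (∏ j ∈ Finset.univ.filter (fun j : Fin l => (j : ℕ) < k), h j) ∧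
      reducedIdeal B k (∏ j ∈ Finset.univ.filter (fun j : Fin l => (j : ℕ) < k), h j) = ⊤) :
    MatEquiv B (Matrix.diagonal (fun i : Fin l =>
      if (i : ℕ) = l - 1 then (MvPolynomial.X (⟨0, by omega⟩ : Fin n) - f) * h i else h i)) := by
  subst hB
  exact statement0_general (Fin.ne_of_val_ne (by simp; omega)) hsup hchain
    (by simpa [Set.compl_def, Fin.ext_iff] using hf) hVuni fun k h1 hk => (hgcd k h1 hk).2
end

section
/- Let h_1, …, h_l ∈ K[z_n] with h_1 | h_2 | ⋯ | h_l, let V ∈ K[z_2, …, z_n]^{l×l} be a unimodular matrix, and set B = diag(h_1, …, h_l) · V · diag(1, …, 1, z_1). If for every k = 1, …, l−1 the product h_1⋯h_k is a greatest common divisor of the k×k minors of B and J_k(B) = R, then B is equivalent to diag(h_1, h_2, …, h_{l−1}, z_1 h_l). -/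
open MvPolynomial Matrix

/-!
Write `h (k+1) = h k * e k`. Modulo `e k`, only the minors of `diag(h) V diag(1, …, 1, z₁)` on its
first rows survive among the reduced minors of that size; setting `z₁ = 0` therefore shows that the
first rows of `V` without its last column are right invertible modulo `e k`, hence also modulo the
products `q k = e k * e (k+1) * ⋯`, for which `h k * q k` is the last entry of `h`.

By the Quillen–Suslin argument over `K[zₙ]`, whose nonzero primes are maximal, a row which is
unimodular modulo a polynomial in `zₙ` is congruent to a unit vector up to a change of basis over
the whole polynomial ring. Clearing rows one at a time turns `V` into a matrix `T` whose row `k`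
vanishes modulo `q k` to the right of the diagonal, by a change of basis which can be moved past
`diag(1, …, 1, z₁)`. Then `diag(h) T = P diag(h)` with `P` unimodular.
-/

section Rows

variable {S T : Type*} [CommRing S] [CommRing T] {ι : Type*} [Fintype ι]

/-- The entries of the row `f` generate the unit ideal modulo `J`. -/
def UnimodularMod (J : Ideal S) (f : ι → S) : Prop :=
  ∃ g : ι → S, f ⬝ᵥ g - 1 ∈ J

/-- The row `f` is carried to the row `g` modulo `J` by a matrix which is unimodular over the ring
itself, not merely modulo `J`. -/
def RowEquivMod [DecidableEq ι] (J : Ideal S) (f g : ι → S) : Prop :=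
  ∃ R : Matrix ι ι S, IsUnit R.det ∧ ∀ j, (f ᵥ* R) j - g j ∈ J

theorem dotProduct_mem {J : Ideal S} {v : ι → S} (hv : ∀ i, v i ∈ J) (w : ι → S) :
    v ⬝ᵥ w ∈ J :=
  J.sum_mem fun i _ => J.mul_mem_right _ (hv i)

theorem vecMul_mem {κ : Type*} {J : Ideal S} {v : ι → S} (hv : ∀ i, v i ∈ J) (R : Matrix ι κ S)
    (j : κ) : (v ᵥ* R) j ∈ J :=
  dotProduct_mem hv _

theorem vecMul_sub_mem_of_congr {κ : Type*} {J : Ideal S} {f : ι → S} {g : κ → S}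
    {R R' : Matrix ι κ S} (hR : ∀ j, (f ᵥ* R) j - g j ∈ J) (hRR' : ∀ i j, R' i j - R i j ∈ J)
    (j : κ) : (f ᵥ* R') j - g j ∈ J := by
  have hsplit : (f ᵥ* R') j - g j = (fun i => (R' - R) i j) ⬝ᵥ f + ((f ᵥ* R) j - g j) := by
    rw [dotProduct_comm]
    simp [vecMul, dotProduct, mul_sub]
  exact hsplit ▸ J.add_mem (dotProduct_mem (fun i => hRR' i j) f) (hR j)

theorem vecMul_mul_sub_mem {κ μ : Type*} [Fintype κ] {J : Ideal S} {f : ι → S} {g : κ → S}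
    {k : μ → S} {R : Matrix ι κ S} {Q : Matrix κ μ S} (hR : ∀ j, (f ᵥ* R) j - g j ∈ J)
    (hQ : ∀ j, (g ᵥ* Q) j - k j ∈ J) (j : μ) : (f ᵥ* (R * Q)) j - k j ∈ J := by
  have hsplit : (f ᵥ* (R * Q)) j - k j = ((f ᵥ* R - g) ᵥ* Q) j + ((g ᵥ* Q) j - k j) := by
    simp [sub_vecMul, vecMul_vecMul]
  exact hsplit ▸ J.add_mem (vecMul_mem hR Q j) (hQ j)

theorem UnimodularMod.map {J : Ideal S} {J' : Ideal T} {f : ι → S} (hf : UnimodularMod J f)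
    (φ : S →+* T) (hφ : J ≤ J'.comap φ) : UnimodularMod J' (φ ∘ f) := by
  obtain ⟨g, hg⟩ := hf
  exact ⟨φ ∘ g, by simpa [RingHom.map_dotProduct] using hφ hg⟩

theorem UnimodularMod.mono {J J' : Ideal S} {f : ι → S} (hf : UnimodularMod J f) (hJ : J ≤ J') :
    UnimodularMod J' f :=
  hf.map (RingHom.id S) hJ

variable [DecidableEq ι] {J : Ideal S} {f g k : ι → S}

theorem vecMul_inv_sub_mem {R : Matrix ι ι S} (hR : IsUnit R.det)
    (hfg : ∀ j, (f ᵥ* R) j - g j ∈ J) (j : ι) : (g ᵥ* R⁻¹) j - f j ∈ J := by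
  have hsplit : (g ᵥ* R⁻¹) j - f j = -((f ᵥ* R - g) ᵥ* R⁻¹) j := by
    simp [sub_vecMul, vecMul_vecMul, R.mul_nonsing_inv hR]
  exact hsplit ▸ J.neg_mem (vecMul_mem hfg _ j)

namespace RowEquivMod

theorem of_congr (hfg : ∀ j, f j - g j ∈ J) : RowEquivMod J f g :=
  ⟨1, by simp, by simpa using hfg⟩

theorem refl (J : Ideal S) (f : ι → S) : RowEquivMod J f f :=
  of_congr (by simp)

theorem trans (hfg : RowEquivMod J f g) (hgk : RowEquivMod J g k) : RowEquivMod J f k := by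
  obtain ⟨R, hR, hfR⟩ := hfg
  obtain ⟨Q, hQ, hgQ⟩ := hgk
  exact ⟨R * Q, by simpa using hR.mul hQ, vecMul_mul_sub_mem hfR hgQ⟩

theorem symm (hfg : RowEquivMod J f g) : RowEquivMod J g f := by
  obtain ⟨R, hR, hfR⟩ := hfg
  exact ⟨R⁻¹, R.isUnit_nonsing_inv_det hR, vecMul_inv_sub_mem hR hfR⟩

theorem map (hfg : RowEquivMod J f g) (φ : S →+* T) {J' : Ideal T} (hφ : J ≤ J'.comap φ) :
    RowEquivMod J' (φ ∘ f) (φ ∘ g) := by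
  obtain ⟨R, hR, hfR⟩ := hfg
  refine ⟨φ.mapMatrix R, φ.map_det R ▸ hR.map φ, fun j => ?_⟩
  simpa [RingHom.map_vecMul] using hφ (hfR j)

theorem mono {J' : Ideal S} (hfg : RowEquivMod J f g) (hJ : J ≤ J') : RowEquivMod J' f g :=
  hfg.map (RingHom.id S) hJ

theorem map_single {i : ι} (hf : RowEquivMod J f (Pi.single i 1)) (φ : S →+* T) {J' : Ideal T}
    (hφ : J ≤ J'.comap φ) : RowEquivMod J' (φ ∘ f) (Pi.single i 1) := by
  have hsingle : φ ∘ Pi.single i 1 = Pi.single i 1 :=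
    funext fun k => (Pi.apply_single (fun _ => φ) (fun _ => map_zero φ) i 1 k).trans (by simp)
  exact hsingle ▸ hf.map φ hφ

theorem unimodularMod (hfg : RowEquivMod J f g) (hg : UnimodularMod J g) : UnimodularMod J f := by
  obtain ⟨R, -, hfR⟩ := hfg
  obtain ⟨u, hu⟩ := hg
  refine ⟨R *ᵥ u, ?_⟩
  have hsplit : f ⬝ᵥ R *ᵥ u - 1 = (f ᵥ* R - g) ⬝ᵥ u + (g ⬝ᵥ u - 1) := by
    simp [dotProduct_mulVec, sub_dotProduct]
  exact hsplit ▸ J.add_mem (dotProduct_mem hfR u) hu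

theorem unimodularMod_right (hfg : RowEquivMod J f g) (hf : UnimodularMod J f) :
    UnimodularMod J g :=
  hfg.symm.unimodularMod hf

theorem add_smul_of_dotProduct_eq_zero (J : Ideal S) (f : ι → S) {u w : ι → S}
    (hwu : w ⬝ᵥ u = 0) : RowEquivMod J f (f + (f ⬝ᵥ u) • w) := by
  refine ⟨1 + vecMulVec u w, ?_, by simp [vecMul_add, vecMul_vecMulVec]⟩
  simp [vecMulVec_eq Unit, det_one_add_replicateCol_mul_replicateRow, hwu]

theorem of_unit_entry {i : ι} {u : S} (hu : f i * u - 1 ∈ J) (hi : f i - g i ∈ J) :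
    RowEquivMod J f g := by
  set w : ι → S := Function.update (g - f) i 0
  refine (add_smul_of_dotProduct_eq_zero J f (u := Pi.single i u) (w := w) (by simp [w])).trans
    (of_congr fun j => ?_)
  obtain rfl | hj := eq_or_ne j i
  · simpa [w] using hi
  · have hsplit : f j + f i * u * (g j - f j) - g j = (f i * u - 1) * (g j - f j) := by ring
    simpa [w, hj, hsplit] using J.mul_mem_right _ hu

theorem single_of_unit_entry [Nontrivial ι] {i : ι} {u : S} (hu : f i * u - 1 ∈ J) (i₀ : ι) :
    RowEquivMod J f (Pi.single i₀ 1) := by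
  obtain ⟨j, hj⟩ := exists_ne i
  have hfj : RowEquivMod J f (Function.update f j 1) :=
    of_unit_entry hu (by simp [Function.update_of_ne hj.symm])
  obtain rfl | hi₀ := eq_or_ne i₀ j
  · exact hfj.trans (of_unit_entry (i := i₀) (u := 1) (by simp) (by simp))
  · have hj₀ : RowEquivMod J (Function.update f j 1) (Function.update (Pi.single i₀ 1) j 1) :=
      of_unit_entry (i := j) (u := 1) (by simp) (by simp)
    exact hfj.trans (hj₀.trans (of_unit_entry (i := i₀) (u := 1)
      (by simp [hi₀]) (by simp [hi₀])))

end RowEquivMod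

end Rows

section SuslinTrick

open Polynomial in
theorem comp_sub_comp_dvd {C : Type*} [CommRing C] (p b b' : C[X]) :
    b - b' ∣ p.comp b - p.comp b' := by
  simpa [Polynomial.comp, Polynomial.eval₂_eq_eval_map] using
    Polynomial.sub_dvd_eval_sub b b' (p.map Polynomial.C)

theorem exists_isCoprime_add_mul {D : Type*} [CommRing D] [IsDomain D] [IsPrincipalIdealRing D]
    {f u v : D} (hf : f ≠ 0) (huv : IsCoprime u v) : ∃ c, IsCoprime f (u + c * v) := by
  classical
  set s := (UniqueFactorizationMonoid.factors f).filter (¬ · ∣ u)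
  refine ⟨s.prod, isCoprime_of_prime_dvd (fun h => hf h.1) fun p hp hpf hpc => ?_⟩
  by_cases hpu : p ∣ u
  · obtain hps | hpv := hp.dvd_or_dvd ((dvd_add_right hpu).1 hpc)
    · obtain ⟨q, hqs, hpq⟩ := hp.exists_mem_multiset_dvd hps
      obtain ⟨hqf, hqu⟩ := Multiset.mem_filter.1 hqs
      have hq := UniqueFactorizationMonoid.prime_of_factor q hqf
      exact hqu ((hp.associated_of_dvd hq hpq).symm.dvd.trans hpu)
    · exact hp.not_isUnit (huv.isUnit_of_dvd' hpu hpv)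
  · obtain ⟨q, hq, hpq⟩ :=
      UniqueFactorizationMonoid.exists_mem_factors_of_dvd hf hp.irreducible hpf
    have hqs : q ∈ s := Multiset.mem_filter.2 ⟨hq, fun hqu => hpu (hpq.dvd.trans hqu)⟩
    exact hpu ((dvd_add_left ((hpq.dvd.trans (Multiset.dvd_prod hqs)).mul_right v)).1 hpc)

variable {ι : Type*} [Fintype ι] [DecidableEq ι]

/- The change of basis is `1 + g ⊗ δf + f^⊥ ⊗ δg^⊥`, where `g = (a, b)` and `f^⊥ = (f i₁, -f i₀)`
live on the two distinguished coordinates, `f' = f + c δf` and `g' = g + c δg`. -/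
theorem RowEquivMod.of_dvd_sub {D : Type*} [CommRing D] [IsDomain D] {f f' : ι → D} {i₀ i₁ : ι}
    (hi : i₀ ≠ i₁) {a b a' b' c : D} (hc : c ≠ 0) (hf : f i₀ * a + f i₁ * b = c)
    (hf' : f' i₀ * a' + f' i₁ * b' = c) (hff' : ∀ i, c ∣ f' i - f i) (ha : c ∣ a' - a)
    (hb : c ∣ b' - b) : RowEquivMod ⊥ f f' := by
  choose d hd using hff'
  obtain ⟨da, hda⟩ := ha
  obtain ⟨db, hdb⟩ := hb
  have htrace : d i₀ * a + d i₁ * b + f i₀ * da + f i₁ * db + c * (d i₀ * da + d i₁ * db) = 0 := by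
    refine mul_left_cancel₀ hc ?_
    linear_combination hf' - hf - a' * hd i₀ - b' * hd i₁ - (f i₀ + c * d i₀) * hda
      - (f i₁ + c * d i₁) * hdb
  let U : Matrix (Fin 2) ι D := of ![Pi.single i₀ a + Pi.single i₁ b,
    Pi.single i₀ (f i₁) - Pi.single i₁ (f i₀)]
  let W : Matrix (Fin 2) ι D := of ![d, Pi.single i₀ db - Pi.single i₁ da]
  have hU (v : ι → D) : v ᵥ* Uᵀ = ![a * v i₀ + b * v i₁, f i₁ * v i₀ - f i₀ * v i₁] := by
    simp [U, vecMul_transpose, add_dotProduct, sub_dotProduct]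
  have hWU : 1 + W * Uᵀ = !![1 + (a * d i₀ + b * d i₁), f i₁ * d i₀ - f i₀ * d i₁;
      a * db - b * da, 1 + (f i₁ * db + f i₀ * da)] := by
    ext k k'
    fin_cases k <;> fin_cases k' <;> simp [hU, W, hi, hi.symm, sub_eq_add_neg]
  have hfU : f ᵥ* Uᵀ = ![c, 0] := by
    rw [hU, ← hf]
    congr 1 <;> ring_nf
  have hcW : ![c, 0] ᵥ* W = c • d := by
    simp [W]
  refine ⟨1 + Uᵀ * W, ?_, fun j => ?_⟩
  · have hdet : (1 + Uᵀ * W).det = 1 := by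
      rw [det_one_add_mul_comm, hWU, det_fin_two_of]
      linear_combination htrace + (d i₀ * da + d i₁ * db) * hf
    simp [hdet]
  · rw [vecMul_add, vecMul_one, ← vecMul_vecMul, hfU, hcW, Ideal.mem_bot, Pi.add_apply,
      Pi.smul_apply, smul_eq_mul]
    linear_combination -hd j

end SuslinTrick

section LocalGlobal

open scoped Polynomial

variable {C : Type*} [CommRing C] {ι : Type*} [Fintype ι] [DecidableEq ι]

theorem exists_C_eq_mul_add_mul (m : Ideal C) [m.IsPrime] {f g : C[X]} (hf : f.Monic)
    (hfg : IsCoprime (f.map (Ideal.Quotient.mk m)) (g.map (Ideal.Quotient.mk m))) :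
    ∃ s ∉ m, ∃ a b, f * a + g * b = Polynomial.C s := by
  by_cases hf0 : f.natDegree = 0
  · obtain rfl := Polynomial.eq_one_of_monic_natDegree_zero hf hf0
    exact ⟨1, m.one_notMem, 1, 0, by simp⟩
  · obtain ⟨a, b, -, -, hab⟩ := Polynomial.exists_mul_add_mul_eq_C_resultant f g
      le_rfl le_rfl (.inl hf0)
    refine ⟨_, fun hm => ?_, a, b, hab⟩
    have hunit := (Polynomial.isUnit_resultant_iff_isCoprime (hf.map _)).2 hfg
    refine hunit.ne_zero ?_
    set π := Ideal.Quotient.mk m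
    have hdeg := Polynomial.resultant_add_right_deg (f.map π) (g.map π) f.natDegree
      (g.map π).natDegree (g.natDegree - (g.map π).natDegree) le_rfl
    rw [Nat.add_sub_cancel' Polynomial.natDegree_map_le, Polynomial.resultant_map_map,
      Ideal.Quotient.eq_zero_iff_mem.2 hm] at hdeg
    simpa [hf.natDegree_map, hf.coeff_natDegree] using hdeg.symm

theorem RowEquivMod.comp_of_C_dvd_sub [IsDomain C] {f : ι → C[X]} {i₀ i₁ : ι} (hi : i₀ ≠ i₁)
    {a b : C[X]} {s : C} (hs : s ≠ 0) (hab : f i₀ * a + f i₁ * b = Polynomial.C s) {p p' : C[X]}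
    (hp : Polynomial.C s ∣ p - p') :
    RowEquivMod ⊥ (fun i => (f i).comp p) fun i => (f i).comp p' := by
  have hcomp (q : C[X]) :
      (f i₀).comp q * a.comp q + (f i₁).comp q * b.comp q = Polynomial.C s := by
    simpa using congrArg (fun r => r.comp q) hab
  have hdvd (r : C[X]) : Polynomial.C s ∣ r.comp p' - r.comp p :=
    (dvd_sub_comm.1 hp).trans (comp_sub_comp_dvd r p' p)
  exact .of_dvd_sub hi (by simpa using hs) (hcomp p) (hcomp p') (fun i => hdvd (f i)) (hdvd a)
    (hdvd b)

/-- The ideal of those `c` for which the values of the row `f` at any two points congruent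
modulo `c` are equivalent modulo `I`; this is the ideal of a local–global argument. -/
def substitutionIdeal (I : Ideal C) (f : ι → C[X]) : Ideal C where
  carrier := {c | ∀ b b' : C[X], Polynomial.C c ∣ b - b' →
    RowEquivMod (I.map Polynomial.C) (fun i => (f i).comp b) fun i => (f i).comp b'}
  zero_mem' b b' hbb' := by
    obtain rfl : b = b' := by simpa [sub_eq_zero] using hbb'
    exact .refl _ _
  add_mem' {c d} hc hd b b' := by
    rintro ⟨x, hx⟩
    refine (hc b (b' + Polynomial.C d * x) ⟨x, ?_⟩).trans (hd _ b' ⟨x, by ring⟩)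
    rw [Polynomial.C_add] at hx
    linear_combination hx
  smul_mem' a c hc b b' hbb' := by
    refine hc b b' (dvd_trans ?_ hbb')
    simp

theorem le_substitutionIdeal (I : Ideal C) (f : ι → C[X]) : I ≤ substitutionIdeal I f :=
  fun _ hc b b' hbb' => .of_congr fun i =>
    Ideal.mem_of_dvd _ (hbb'.trans (comp_sub_comp_dvd (f i) b b')) (Ideal.mem_map_of_mem _ hc)

theorem exists_mem_substitutionIdeal [IsDomain C] {I m : Ideal C} [m.IsMaximal] (hIm : I ≤ m)
    {f : ι → C[X]} (hf : UnimodularMod (I.map Polynomial.C) f) {i₀ i₁ : ι} (hi : i₀ ≠ i₁)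
    (hmonic : (f i₀).Monic) : ∃ s ∈ substitutionIdeal I f, s ∉ m := by
  let := Ideal.Quotient.field m
  set π := Polynomial.mapRingHom (Ideal.Quotient.mk m)
  obtain ⟨g, hg⟩ := hf
  have hfg : π (f ⬝ᵥ g) = 1 := by
    rw [← sub_eq_zero, ← map_one π, ← map_sub]
    ext n
    rw [Polynomial.coe_mapRingHom, Polynomial.coeff_map, Polynomial.coeff_zero]
    exact Ideal.Quotient.eq_zero_iff_mem.2 (hIm (Ideal.mem_map_C_iff.1 hg n))
  obtain ⟨c, hc⟩ := exists_isCoprime_add_mul (f := π (f i₀)) (u := π (f i₁))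
    (v := 1 - π (f i₁) * π (g i₁)) (hmonic.map _).ne_zero ⟨π (g i₁), 1, by ring⟩
  obtain ⟨c, rfl⟩ : ∃ d, π d = c := Polynomial.map_surjective _ Ideal.Quotient.mk_surjective c
  set u := c • (g - Pi.single i₁ (g i₁))
  set f' := f + (f ⬝ᵥ u) • Pi.single i₁ 1
  have hf' : RowEquivMod ⊥ f f' := .add_smul_of_dotProduct_eq_zero _ _ (by simp [u])
  have hf'₀ : f' i₀ = f i₀ := by simp [f', hi]
  have hco : IsCoprime (π (f' i₀)) (π (f' i₁)) := by
    simpa [f', hi, u, dotProduct_sub, hfg] using hc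
  obtain ⟨s, hsm, a, b, hab⟩ := exists_C_eq_mul_add_mul m (hf'₀ ▸ hmonic) hco
  refine ⟨s, fun p p' hpp' => RowEquivMod.mono ?_ bot_le, hsm⟩
  have hcomp (q : C[X]) : RowEquivMod ⊥ (fun i => (f i).comp q) fun i => (f' i).comp q :=
    hf'.map (Polynomial.compRingHom q) bot_le
  have hs : s ≠ 0 := fun h => hsm (h ▸ m.zero_mem)
  exact ((hcomp p).trans (.comp_of_C_dvd_sub hi hs hab hpp')).trans (hcomp p').symm

theorem rowEquivMod_C_eval_zero_of_monic [IsDomain C] [Nontrivial ι] {I : Ideal C} {f : ι → C[X]}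
    (hf : UnimodularMod (I.map Polynomial.C) f) {i₀ : ι} (hmonic : (f i₀).Monic) :
    RowEquivMod (I.map Polynomial.C) f fun i => Polynomial.C ((f i).eval 0) := by
  obtain ⟨i₁, hi⟩ := exists_ne i₀
  have htop : substitutionIdeal I f = ⊤ := by
    by_contra hne
    obtain ⟨m, hm, hle⟩ := Ideal.exists_le_maximal _ hne
    obtain ⟨s, hs, hsm⟩ := exists_mem_substitutionIdeal
      ((le_substitutionIdeal I f).trans hle) hf hi.symm hmonic
    exact hsm (hle hs)
  have hone : (1 : C) ∈ substitutionIdeal I f := htop ▸ Submodule.mem_top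
  simpa using hone Polynomial.X 0 (by simp)

end LocalGlobal

section LeadingCoeff

open scoped Polynomial

theorem leadingCoeff_eval₂_of_natDegree_lt {B T : Type*} [CommRing B] [CommRing T] [Nontrivial T]
    {φ : B →+* T} (hφ : Function.Injective φ) {F : B[X][X]} {q : T[X]} (hq : q.Monic)
    (hF : ∀ j, (F.coeff j).natDegree < q.natDegree) :
    (F.eval₂ (Polynomial.mapRingHom φ) q).leadingCoeff = φ F.leadingCoeff.leadingCoeff := by
  obtain rfl | hF0 := eq_or_ne F 0
  · simp
  set J := F.natDegree
  have hlc : F.leadingCoeff.map φ ≠ 0 := by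
    simpa [Polynomial.map_eq_zero_iff hφ] using hF0
  have hlow : ∑ j ∈ Finset.range J, (F.coeff j).map φ * q ^ j ∈
      Polynomial.degreeLT T (q.natDegree * J) := by
    refine Submodule.sum_mem _ fun j hj => Polynomial.mem_degreeLT.2 ?_
    refine Polynomial.degree_le_natDegree.trans_lt (Nat.cast_lt.2 ?_)
    calc ((F.coeff j).map φ * q ^ j).natDegree
        ≤ (F.coeff j).natDegree + j * q.natDegree :=
          Polynomial.natDegree_mul_le_of_le Polynomial.natDegree_map_le
            (Polynomial.natDegree_pow_le)
      _ < q.natDegree * (j + 1) := by linarith [hF j]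
      _ ≤ q.natDegree * J := Nat.mul_le_mul_left _ (Finset.mem_range.1 hj)
  have htop : (q.natDegree * J : ℕ) ≤ (F.leadingCoeff.map φ * q ^ J).degree := by
    rw [(hq.pow J).degree_mul, Polynomial.degree_eq_natDegree (hq.pow J).ne_zero,
      Polynomial.degree_eq_natDegree hlc, hq.natDegree_pow]
    exact_mod_cast (mul_comm _ _).le.trans (Nat.le_add_left _ _)
  rw [Polynomial.eval₂_eq_sum_range, Finset.sum_range_succ]
  simp only [Polynomial.coe_mapRingHom, Polynomial.coeff_natDegree]
  rw [Polynomial.leadingCoeff_add_of_degree_lt ((Polynomial.mem_degreeLT.1 hlow).trans_le htop),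
    Polynomial.leadingCoeff_mul_monic (hq.pow J), Polynomial.leadingCoeff_map_of_injective hφ]

/- Nagata's change of variables: translate the outer variable by a large power of the inner one and
exchange the two. -/
theorem exists_algEquiv_leadingCoeff_eq_C {B : Type*} [CommRing B] (F : B[X][X]) :
    ∃ e : B[X][X] ≃ₐ[B] B[X][X],
      (e F).leadingCoeff = Polynomial.C F.leadingCoeff.leadingCoeff := by
  nontriviality B
  set N := (F.support.sup fun j => (F.coeff j).natDegree) + 1
  set q : B[X][X] := Polynomial.X ^ N + Polynomial.C Polynomial.X
  let e := ((Polynomial.taylorEquiv ((Polynomial.X : B[X]) ^ N)).restrictScalars B).trans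
    Polynomial.Bivariate.swap
  have he : e F = F.eval₂ (Polynomial.mapRingHom Polynomial.C) q := by
    have hswap : (Polynomial.Bivariate.swap : B[X][X] ≃ₐ[B] B[X][X]).toRingHom.comp Polynomial.C =
        Polynomial.mapRingHom Polynomial.C := RingHom.ext Polynomial.Bivariate.swap_C
    have heF : e F = Polynomial.Bivariate.swap (F.eval₂ Polynomial.C
        (Polynomial.X + Polynomial.C (Polynomial.X ^ N))) := rfl
    rw [heF, ← hswap]
    refine (Polynomial.hom_eval₂ F _ Polynomial.Bivariate.swap.toRingHom _).trans ?_
    congr 1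
    simp [q, Polynomial.Bivariate.swap_Y, Polynomial.Bivariate.swap_C, add_comm]
  refine ⟨e, ?_⟩
  rw [he, leadingCoeff_eval₂_of_natDegree_lt Polynomial.C_injective
    (Polynomial.monic_X_pow_add_C _ (Nat.succ_ne_zero _))]
  intro j
  rw [Polynomial.natDegree_X_pow_add_C, Nat.lt_succ_iff]
  by_cases hj : j ∈ F.support
  · exact Finset.le_sup (f := fun j => (F.coeff j).natDegree) hj
  · simp [Polynomial.notMem_support_iff.1 hj]

theorem leadingCoeff_mapAlgEquiv {A R S : Type*} [CommRing A] [CommRing R] [CommRing S]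
    [Algebra A R] [Algebra A S] (e : R ≃ₐ[A] S) (p : R[X]) :
    (Polynomial.mapAlgEquiv e p).leadingCoeff = e p.leadingCoeff :=
  Polynomial.leadingCoeff_map_of_injective (f := (e : R →+* S)) e.injective p

theorem exists_algEquiv_leadingCoeff_eq_C_coeff {A : Type*} [CommRing A] (m : ℕ)
    {f : MvPolynomial (Fin (m + 1)) A} (hf : f ≠ 0) :
    ∃ e : MvPolynomial (Fin (m + 1)) A ≃ₐ[A] (MvPolynomial (Fin m) A)[X],
      ∃ s ∈ f.support, (e f).leadingCoeff = C (f.coeff s) := by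
  induction m with
  | zero =>
    set g := (finSuccEquiv A 0 f).leadingCoeff with hg
    have hg₀ : g = C (g.coeff 0) := eq_C_of_isEmpty g
    have hcoeff : g.coeff 0 = f.coeff (Finsupp.cons _ 0) := finSuccEquiv_coeff_coeff _ _ _
    rw [hcoeff] at hg₀
    refine ⟨finSuccEquiv A 0, _, mem_support_iff.2 fun h₀ => ?_, hg₀⟩
    rw [h₀, C_0, hg, Polynomial.leadingCoeff_eq_zero] at hg₀
    exact hf (by simpa using hg₀)
  | succ m ih =>
    set F := finSuccEquiv A (m + 1) f
    obtain ⟨e, s, hs, he⟩ := ih (f := F.leadingCoeff) (by simpa [F] using hf)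
    obtain ⟨e', he'⟩ := exists_algEquiv_leadingCoeff_eq_C (Polynomial.mapAlgEquiv e F)
    have hcoeff : F.leadingCoeff.coeff s = f.coeff (s.cons F.natDegree) :=
      finSuccEquiv_coeff_coeff _ _ _
    refine ⟨(finSuccEquiv A (m + 1)).trans ((Polynomial.mapAlgEquiv e).trans
      ((e'.restrictScalars A).trans (Polynomial.mapAlgEquiv (finSuccEquiv A m).symm))),
      s.cons F.natDegree, ?_, ?_⟩
    · rwa [mem_support_iff, ← hcoeff, ← mem_support_iff]
    · simp only [AlgEquiv.trans_apply, AlgEquiv.restrictScalars_apply, leadingCoeff_mapAlgEquiv]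
      rw [he', leadingCoeff_mapAlgEquiv, he, hcoeff, AlgEquiv.symm_apply_eq]
      simp [finSuccEquiv_apply]

end LeadingCoeff

section MaximalIdeal

open scoped Polynomial

variable {ι : Type*} [Fintype ι]

theorem UnimodularMod.exists_notMem {S : Type*} [CommRing S] {J : Ideal S} (hJ : J ≠ ⊤) {f : ι → S}
    (hf : UnimodularMod J f) : ∃ i, f i ∉ J := by
  by_contra! hfJ
  obtain ⟨g, hg⟩ := hf
  exact hJ (J.eq_top_iff_one.2 (by simpa using J.sub_mem (dotProduct_mem hfJ g) hg))

theorem map_algebraMap_le_comap {A R S : Type*} [CommRing A] [CommRing R] [CommRing S]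
    [Algebra A R] [Algebra A S] (I : Ideal A) (φ : R →ₐ[A] S) :
    I.map (algebraMap A R) ≤ (I.map (algebraMap A S)).comap (φ : R →+* S) := by
  rw [← Ideal.map_le_iff_le_comap, Ideal.map_map, φ.comp_algebraMap]

theorem UnimodularMod.map_algHom {A R S : Type*} [CommRing A] [CommRing R] [CommRing S]
    [Algebra A R] [Algebra A S] {I : Ideal A} {f : ι → R}
    (hf : UnimodularMod (I.map (algebraMap A R)) f) (φ : R →ₐ[A] S) :
    UnimodularMod (I.map (algebraMap A S)) (φ ∘ f) :=
  hf.map (φ : R →+* S) (map_algebraMap_le_comap I φ)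

variable [DecidableEq ι]

theorem exists_monic_sub_mem_map_C {C : Type*} [CommRing C] {I : Ideal C} (f : C[X]) {b : C}
    (hb : f.leadingCoeff * b - 1 ∈ I) :
    ∃ p : C[X], p.Monic ∧ f * Polynomial.C b - p ∈ I.map Polynomial.C := by
  set d := f.natDegree
  set ε : C := f.leadingCoeff * b - 1
  set p := Polynomial.C b * f - Polynomial.C ε * Polynomial.X ^ d with hp
  refine ⟨p, Polynomial.monic_of_natDegree_le_of_coeff_eq_one d ?_ ?_, ?_⟩
  · exact (Polynomial.natDegree_sub_le _ _).trans (max_le (Polynomial.natDegree_C_mul_le _ _)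
      (Polynomial.natDegree_C_mul_X_pow_le _ _))
  · rw [hp, Polynomial.coeff_sub, Polynomial.coeff_C_mul, Polynomial.coeff_C_mul,
      Polynomial.coeff_X_pow_self, Polynomial.coeff_natDegree]
    ring
  · have hsplit : f * Polynomial.C b - p = Polynomial.C ε * Polynomial.X ^ d := by rw [hp]; ring
    exact hsplit ▸ Ideal.mul_mem_right _ _ (Ideal.mem_map_of_mem _ hb)

theorem rowEquivMod_C_eval_zero_of_leadingCoeff {C : Type*} [CommRing C] [IsDomain C] [Nontrivial ι]
    {I : Ideal C} {f : ι → C[X]} (hf : UnimodularMod (I.map Polynomial.C) f) {i : ι} {b : C}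
    (hb : (f i).leadingCoeff * b - 1 ∈ I) :
    RowEquivMod (I.map Polynomial.C) f fun i => Polynomial.C ((f i).eval 0) := by
  obtain ⟨j, hj⟩ := exists_ne i
  obtain ⟨p, hpmonic, hp⟩ := exists_monic_sub_mem_map_C (f i) hb
  set q : C[X] := Polynomial.X ^ ((f j).natDegree + 1)
  have hqp : (q * p).Monic := (Polynomial.monic_X_pow _).mul hpmonic
  have hdeg : (f j).degree < (q * p).degree := by
    refine Polynomial.degree_lt_degree ?_
    rw [(Polynomial.monic_X_pow _).natDegree_mul hpmonic, Polynomial.natDegree_X_pow]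
    lia
  set f' := Function.update f j (f j + q * p)
  have hmonic : (f' j).Monic := by simpa [f'] using hqp.add_of_right hdeg
  have hff' : RowEquivMod (I.map Polynomial.C) f f' := by
    refine (RowEquivMod.add_smul_of_dotProduct_eq_zero _ f (u := Pi.single i (q * Polynomial.C b))
      (w := Pi.single j 1) (by simp [hj])).trans (.of_congr fun k => ?_)
    obtain rfl | hk := eq_or_ne k j
    · have hsplit : f k + f i * (q * Polynomial.C b) - (f k + q * p) =
          q * (f i * Polynomial.C b - p) := by ring
      simpa [f', hsplit] using Ideal.mul_mem_left _ q hp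
    · simp [f', hk]
  have heval : (fun k => Polynomial.C ((f' k).eval 0)) = fun k => Polynomial.C ((f k).eval 0) := by
    funext k
    obtain rfl | hk := eq_or_ne k j
    · simp [f', q]
    · simp [f', hk]
  exact hff'.trans (heval ▸ rowEquivMod_C_eval_zero_of_monic (hff'.unimodularMod_right hf) hmonic)

theorem exists_sub_mem_map_C_forall_coeff_notMem {A σ : Type*} [CommRing A] (I : Ideal A)
    (p : MvPolynomial σ A) :
    ∃ p' : MvPolynomial σ A, p - p' ∈ I.map C ∧ ∀ s ∈ p'.support, p'.coeff s ∉ I := by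
  classical
  set p' := ∑ s ∈ p.support with p.coeff s ∉ I, monomial s (p.coeff s)
  have hp' (s) : p'.coeff s = if p.coeff s ∈ I then 0 else p.coeff s := by
    by_cases hs : p.coeff s = 0 <;> simp [p', coeff_sum, coeff_monomial, hs, ite_not]
  refine ⟨p', mem_map_C_iff.2 fun s => ?_, fun s hs => ?_⟩
  · rw [coeff_sub, hp']
    split_ifs with h <;> simp [h]
  · rw [mem_support_iff, hp'] at hs
    rw [hp']
    split_ifs with h <;> simp_all

theorem map_algebraMap_ne_top {A σ : Type*} [CommRing A] {I : Ideal A} (hI : I ≠ ⊤) :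
    I.map (algebraMap A (MvPolynomial σ A)) ≠ ⊤ := by
  rw [Ideal.ne_top_iff_one] at hI ⊢
  exact fun h => hI (by simpa using mem_map_C_iff.1 h 0)

theorem exists_rowEquivMod_coeff_isUnit_mod {A σ : Type*} [CommRing A] (I : Ideal A)
    [hI : I.IsMaximal] {f : ι → MvPolynomial σ A} (hf : UnimodularMod (I.map (algebraMap A _)) f) :
    ∃ f' : ι → MvPolynomial σ A, RowEquivMod (I.map (algebraMap A _)) f f' ∧
      ∃ i, f' i ≠ 0 ∧ ∀ s ∈ (f' i).support, ∃ b, (f' i).coeff s * b - 1 ∈ I := by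
  obtain ⟨i, hi⟩ := hf.exists_notMem (map_algebraMap_ne_top hI.ne_top)
  obtain ⟨p, hp, hpI⟩ := exists_sub_mem_map_C_forall_coeff_notMem I (f i)
  refine ⟨Function.update f i p, .of_congr fun j => ?_, i, ?_⟩
  · obtain rfl | hj := eq_or_ne j i
    · simpa using hp
    · simp [hj]
  · rw [Function.update_self]
    refine ⟨fun hp₀ => hi (by simpa [hp₀] using hp), fun s hs => ?_⟩
    obtain ⟨b, x, hx, hbx⟩ := hI.exists_inv (hpI s hs)
    exact ⟨b, by simpa [mul_comm _ b, ← hbx] using hx⟩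

theorem rowEquivMod_single_of_isMaximal {A : Type*} [CommRing A] [IsDomain A] [Nontrivial ι]
    (I : Ideal A) [I.IsMaximal] {m : ℕ} {f : ι → MvPolynomial (Fin m) A}
    (hf : UnimodularMod (I.map (algebraMap A _)) f) (i₀ : ι) :
    RowEquivMod (I.map (algebraMap A _)) f (Pi.single i₀ 1) := by
  induction m with
  | zero =>
    obtain ⟨f', hff', i, hi, hunit⟩ := exists_rowEquivMod_coeff_isUnit_mod I hf
    obtain ⟨a, ha⟩ := C_surjective (Fin 0) (f' i)
    obtain ⟨b, hb⟩ := hunit 0 (by simpa [← ha] using hi)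
    refine hff'.trans (.single_of_unit_entry (i := i) (u := C b) ?_ i₀)
    simpa [← ha] using Ideal.mem_map_of_mem C hb
  | succ m ih =>
    obtain ⟨f', hff', i, hi, hunit⟩ := exists_rowEquivMod_coeff_isUnit_mod I hf
    obtain ⟨e, s, hs, he⟩ := exists_algEquiv_leadingCoeff_eq_C_coeff m hi
    obtain ⟨b, hb⟩ := hunit s hs
    set J := I.map (algebraMap A (MvPolynomial (Fin m) A))
    have hJ : I.map (algebraMap A (MvPolynomial (Fin m) A)[X]) = J.map Polynomial.C :=
      (Ideal.map_map _ _).symm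
    have hef : UnimodularMod (J.map Polynomial.C) (e ∘ f') :=
      hJ ▸ (hff'.unimodularMod_right hf).map_algHom e.toAlgHom
    have heval : RowEquivMod J (fun k => (e (f' k)).eval 0) (Pi.single i₀ 1) := by
      refine ih (hef.map (Polynomial.evalRingHom 0) (Ideal.map_le_iff_le_comap.2 ?_))
      exact fun x hx => by simpa using hx
    have hstep := rowEquivMod_C_eval_zero_of_leadingCoeff hef (i := i) (b := C b)
      (by simpa [he, J] using Ideal.mem_map_of_mem C hb)
    have hsingle : RowEquivMod (J.map Polynomial.C) (e ∘ f') (Pi.single i₀ 1) :=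
      hstep.trans (heval.map_single Polynomial.C Ideal.le_comap_map)
    refine hff'.trans ?_
    rw [← hJ] at hsingle
    simpa [Function.comp_def] using
      hsingle.map_single (e.symm : (MvPolynomial (Fin m) A)[X] →+* MvPolynomial (Fin (m + 1)) A)
        (map_algebraMap_le_comap I e.symm.toAlgHom)

end MaximalIdeal

section CoprimePatching

theorem aeval_sub_aeval_mem {A S σ : Type*} [CommRing A] [CommRing S] [Algebra A S] {J : Ideal S}
    {v w : σ → S} (hvw : ∀ i, v i - w i ∈ J) (p : MvPolynomial σ A) :
    aeval v p - aeval w p ∈ J := by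
  have hcomp : (Ideal.Quotient.mkₐ A J).comp (aeval v) = (Ideal.Quotient.mkₐ A J).comp (aeval w) :=
    algHom_ext fun i => by simpa using Ideal.Quotient.eq.2 (hvw i)
  exact Ideal.Quotient.eq.1 (DFunLike.congr_fun hcomp p)

variable {A σ : Type*} [CommRing A]

theorem map_C_inf (I I' : Ideal A) :
    (I ⊓ I').map (C : A →+* MvPolynomial σ A) = I.map C ⊓ I'.map C := by
  ext p
  simp only [mem_map_C_iff, Submodule.mem_inf, forall_and]

theorem map_C_le_comap_constantCoeff (I : Ideal A) :
    I.map (C : A →+* MvPolynomial σ A) ≤ I.comap constantCoeff :=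
  fun _ hp => mem_map_C_iff.1 hp 0

/-- The endomorphism of `MvPolynomial σ A` multiplying every variable by `t`. -/
noncomputable def scaleVars (t : A) : MvPolynomial σ A →ₐ[A] MvPolynomial σ A :=
  aeval fun i => C t * X i

theorem scaleVars_sub_self_mem {I : Ideal A} {t : A} (ht : t - 1 ∈ I) (p : MvPolynomial σ A) :
    scaleVars t p - p ∈ I.map C := by
  have hX : aeval X p = p := aeval_X_left_apply p
  nth_rw 2 [← hX]
  refine aeval_sub_aeval_mem (fun i => ?_) p
  simpa [sub_mul] using Ideal.mul_mem_right (X i) _ (Ideal.mem_map_of_mem C ht)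

theorem scaleVars_sub_C_mem {I : Ideal A} {t : A} (ht : t ∈ I) (p : MvPolynomial σ A) :
    scaleVars t p - C (constantCoeff p) ∈ I.map C := by
  have hzero : aeval (fun _ => (0 : MvPolynomial σ A)) p = C (constantCoeff p) :=
    aeval_zero' p
  rw [← hzero]
  refine aeval_sub_aeval_mem (fun i => ?_) p
  simpa using Ideal.mul_mem_right (X i) _ (Ideal.mem_map_of_mem C ht)

variable {ι : Type*} [Fintype ι] [DecidableEq ι] {f : ι → MvPolynomial σ A} {I I' : Ideal A}

theorem RowEquivMod.exists_map_constantCoeff_eq_one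
    (hf : RowEquivMod (I.map C) f (C ∘ constantCoeff ∘ f)) :
    ∃ R : Matrix ι ι (MvPolynomial σ A), IsUnit R.det ∧ R.map constantCoeff = 1 ∧
      ∀ j, (f ᵥ* R) j - C (constantCoeff (f j)) ∈ I.map C := by
  obtain ⟨R, hR, hfR⟩ := hf
  set R₀ := constantCoeff.mapMatrix R with hR₀
  have hunit : IsUnit R₀.det := constantCoeff.map_det R ▸ hR.map constantCoeff
  have hmul : R₀ * R₀⁻¹ = 1 := R₀.mul_nonsing_inv hunit
  set f₀ := constantCoeff ∘ f
  have hfR₀ (j) : (f₀ ᵥ* R₀) j - f₀ j ∈ I := by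
    simpa [RingHom.map_vecMul, f₀, hR₀] using map_C_le_comap_constantCoeff I (hfR j)
  refine ⟨R * C.mapMatrix R₀⁻¹, ?_, ?_, vecMul_mul_sub_mem hfR (k := C ∘ f₀) fun j => ?_⟩
  · rw [det_mul, ← RingHom.map_det]
    exact hR.mul ((R₀.isUnit_nonsing_inv_det hunit).map C)
  · rw [← hmul, ← RingHom.mapMatrix_apply, map_mul]
    congr 1
    ext1 i j
    simp
  · simpa [RingHom.map_vecMul, Function.comp_def] using
      Ideal.mem_map_of_mem C (vecMul_inv_sub_mem hunit hfR₀ j)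

/- Write `1 = s + t` with `s ∈ I` and `t ∈ I'`. Once the constant terms are normalized to `1`, the
scaling `R (t X)` is `R` modulo `I` and `1` modulo `I'`, and `R' (s X)` is the reverse. -/
theorem RowEquivMod.inf_of_isCoprime (hII' : IsCoprime I I')
    (hI : RowEquivMod (I.map C) f (C ∘ constantCoeff ∘ f))
    (hI' : RowEquivMod (I'.map C) f (C ∘ constantCoeff ∘ f)) :
    RowEquivMod ((I ⊓ I').map C) f (C ∘ constantCoeff ∘ f) := by
  obtain ⟨s, hs, t, ht, hst⟩ := Ideal.isCoprime_iff_exists.1 hII'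
  obtain ⟨R, hR, hR₀, hfR⟩ := hI.exists_map_constantCoeff_eq_one
  obtain ⟨R', hR', hR'₀, hfR'⟩ := hI'.exists_map_constantCoeff_eq_one
  have hs1 : s - 1 ∈ I' := by simpa [← hst] using ht
  have ht1 : t - 1 ∈ I := by simpa [← hst] using hs
  have hone {R : Matrix ι ι (MvPolynomial σ A)} (hR : R.map constantCoeff = 1) {J : Ideal A}
      {r : A} (hr : r ∈ J) (i j) :
      (scaleVars r).mapMatrix R i j - (1 : Matrix ι ι _) i j ∈ J.map C := by
    have h := scaleVars_sub_C_mem hr (R i j)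
    have hij : constantCoeff (R i j) = (1 : Matrix ι ι A) i j := congrFun₂ hR i j
    simpa [hij, one_apply, apply_ite] using h
  refine ⟨(scaleVars t).mapMatrix R * (scaleVars s).mapMatrix R', ?_, fun j => ?_⟩
  · rw [det_mul, ← AlgHom.map_det, ← AlgHom.map_det]
    exact (hR.map _).mul (hR'.map _)
  rw [map_C_inf]
  constructor
  · refine vecMul_mul_sub_mem (vecMul_sub_mem_of_congr hfR fun i j => ?_)
      (vecMul_sub_mem_of_congr (R := 1) (by simp) ?_) j
    · exact scaleVars_sub_self_mem ht1 _
    · exact hone hR'₀ hs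
  · refine vecMul_mul_sub_mem (vecMul_sub_mem_of_congr (R := 1) (g := f) (by simp) ?_)
      (vecMul_sub_mem_of_congr hfR' fun i j => ?_) j
    · exact hone hR₀ ht
    · exact scaleVars_sub_self_mem hs1 _

end CoprimePatching

section PrincipalIdealDomain

theorem exists_mul_sub_one_mem_pow {S : Type*} [CommRing S] {J : Ideal S} {x : S}
    (hx : x - 1 ∈ J) (n : ℕ) : ∃ u, x * u - 1 ∈ J ^ n := by
  obtain ⟨u, hu⟩ : x ∣ 1 ^ n - (1 - x) ^ n := by simpa using sub_dvd_pow_sub_pow 1 (1 - x) n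
  refine ⟨u, ?_⟩
  have hpow : x * u - 1 = -(1 - x) ^ n := by rw [← hu]; ring
  exact hpow ▸ neg_mem (Ideal.pow_mem_pow (by simpa using neg_mem hx) n)

variable {ι : Type*} [Fintype ι] [DecidableEq ι] [Nontrivial ι]

theorem RowEquivMod.single_pow {S : Type*} [CommRing S] {J : Ideal S} {f : ι → S} {i : ι}
    (hf : RowEquivMod J f (Pi.single i 1)) (n : ℕ) :
    RowEquivMod (J ^ n) f (Pi.single i 1) := by
  obtain ⟨R, hR, hfR⟩ := hf
  obtain ⟨u, hu⟩ := exists_mul_sub_one_mem_pow (by simpa using hfR i) n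
  exact .trans ⟨R, hR, by simp⟩ (single_of_unit_entry hu i)

variable {A : Type*} [CommRing A] [IsDomain A]

theorem rowEquivMod_single_of_isMaximal_pow (I : Ideal A) [I.IsMaximal] (n : ℕ) {m : ℕ}
    {f : ι → MvPolynomial (Fin m) A} (hf : UnimodularMod ((I ^ n).map C) f) (i : ι) :
    RowEquivMod ((I ^ n).map C) f (Pi.single i 1) := by
  obtain rfl | hn := eq_or_ne n 0
  · exact .of_congr (by simp [Ideal.map_top])
  · have hI : RowEquivMod (I.map C) f (Pi.single i 1) :=
      rowEquivMod_single_of_isMaximal I (hf.mono (Ideal.map_mono (Ideal.pow_le_self hn))) i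
    exact Ideal.map_pow C I n ▸ hI.single_pow n

variable [IsPrincipalIdealRing A]

theorem rowEquivMod_single_of_isPrincipalIdealRing {q : A} (hq : q ≠ 0) {f : ι → A}
    (hf : UnimodularMod (Ideal.span {q}) f) (i : ι) :
    RowEquivMod (Ideal.span {q}) f (Pi.single i 1) := by
  obtain ⟨g, hg⟩ := hf
  obtain ⟨c, hc⟩ := exists_isCoprime_add_mul hq (u := f i) (v := 1 - f i * g i)
    ⟨g i, 1, by ring⟩
  set u := c • (g - Pi.single i (g i))
  set f' := f + (f ⬝ᵥ u) • Pi.single i 1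
  have hff' : RowEquivMod (Ideal.span {q}) f f' :=
    .add_smul_of_dotProduct_eq_zero _ _ (by simp [u])
  obtain ⟨r, s, hrs⟩ := hc
  have hunit : f' i * s - 1 = s * c * (f ⬝ᵥ g - 1) - r * q := by
    have hf'i : f' i = f i + c * (f ⬝ᵥ g - f i * g i) := by simp [f', u, dotProduct_sub]
    linear_combination s * hf'i + hrs
  refine hff'.trans (.single_of_unit_entry (i := i) (u := s) (hunit ▸ ?_) i)
  exact sub_mem (Ideal.mul_mem_left _ _ hg)
    (Ideal.mul_mem_left _ _ (Ideal.mem_span_singleton_self q))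

theorem rowEquivMod_constantCoeff {m : ℕ} {q : A} (hq : q ≠ 0) {f : ι → MvPolynomial (Fin m) A}
    (hf : UnimodularMod ((Ideal.span {q}).map C) f) :
    RowEquivMod ((Ideal.span {q}).map C) f (C ∘ constantCoeff ∘ f) := by
  induction q using UniqueFactorizationMonoid.induction_on_coprime with
  | h0 => exact absurd rfl hq
  | h1 hx =>
    refine .of_congr fun j => ?_
    simp [Ideal.span_singleton_eq_top.2 hx, Ideal.map_top]
  | @hpr p n hp =>
    have : (Ideal.span {p}).IsMaximal :=
      PrincipalIdealRing.isMaximal_of_irreducible hp.irreducible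
    rw [← Ideal.span_singleton_pow] at hf ⊢
    obtain ⟨i⟩ : Nonempty ι := inferInstance
    have hf₀ : UnimodularMod ((Ideal.span {p} ^ n).map (C (σ := Fin m))) (C ∘ constantCoeff ∘ f) :=
      (hf.map constantCoeff (map_C_le_comap_constantCoeff _)).map C Ideal.le_comap_map
    exact (rowEquivMod_single_of_isMaximal_pow _ n hf i).trans
      (rowEquivMod_single_of_isMaximal_pow _ n hf₀ i).symm
  | @hcp x y hxy hx hy =>
    have hxy' := (Ideal.isCoprime_span_singleton_iff x y).2 hxy.isCoprime
    rw [← Ideal.span_singleton_mul_span_singleton, Ideal.mul_eq_inf_of_isCoprime hxy'] at hf ⊢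
    refine .inf_of_isCoprime hxy' (hx ?_ (hf.mono ?_)) (hy ?_ (hf.mono ?_))
    · exact left_ne_zero_of_mul hq
    · exact Ideal.map_mono inf_le_left
    · exact right_ne_zero_of_mul hq
    · exact Ideal.map_mono inf_le_right

theorem rowEquivMod_single_of_ne_zero {m : ℕ} {q : A} (hq : q ≠ 0)
    {f : ι → MvPolynomial (Fin m) A} (hf : UnimodularMod ((Ideal.span {q}).map C) f) (i : ι) :
    RowEquivMod ((Ideal.span {q}).map C) f (Pi.single i 1) := by
  refine (rowEquivMod_constantCoeff hq hf).trans
    (RowEquivMod.map_single ?_ C Ideal.le_comap_map)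
  exact rowEquivMod_single_of_isPrincipalIdealRing hq
    (hf.map constantCoeff (map_C_le_comap_constantCoeff _)) i

end PrincipalIdealDomain

section ManyVariables

theorem exists_fin_injective_vars_subset_range {ι A σ : Type*} [Finite ι] [CommRing A]
    (f : ι → MvPolynomial σ A) :
    ∃ (m : ℕ) (v : Fin m → σ), Function.Injective v ∧ ∀ i, ↑(f i).vars ⊆ Set.range v := by
  classical
  cases nonempty_fintype ι
  set s := Finset.univ.biUnion fun i => (f i).vars
  refine ⟨s.card, fun k => s.equivFin.symm k, Subtype.val_injective.comp s.equivFin.symm.injective,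
    fun i x hx => ⟨s.equivFin ⟨x, Finset.mem_biUnion.2 ⟨i, Finset.mem_univ i, hx⟩⟩, by simp⟩⟩

variable {ι : Type*} [Fintype ι] [DecidableEq ι]

theorem rowEquivMod_single_of_forall_fin {A σ : Type*} [CommRing A] {I : Ideal A} {i : ι}
    (hI : ∀ (m : ℕ) (f : ι → MvPolynomial (Fin m) A), UnimodularMod (I.map C) f →
      RowEquivMod (I.map C) f (Pi.single i 1))
    {f : ι → MvPolynomial σ A} (hf : UnimodularMod (I.map C) f) :
    RowEquivMod (I.map C) f (Pi.single i 1) := by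
  obtain ⟨m, v, hv, hfv⟩ := exists_fin_injective_vars_subset_range f
  have hrename : rename v ∘ killCompl hv ∘ f = f := by
    funext k
    obtain ⟨p, hp⟩ := exists_rename_eq_of_vars_subset_range (f k) v hv (hfv k)
    simp [← hp, killCompl_rename_app]
  have hkill := hI m (killCompl hv ∘ f) (UnimodularMod.map_algHom hf (killCompl hv))
  rw [← hrename]
  exact hkill.map_single (rename v : MvPolynomial (Fin m) A →ₐ[A] _).toRingHom
    (map_algebraMap_le_comap I (rename v))

theorem exists_algEquiv_eq_C_of_mem_supported {K σ : Type*} [CommRing K] {y : σ}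
    {q : MvPolynomial σ K} (hq : q ∈ supported K {y}) :
    ∃ (e : MvPolynomial σ K ≃ₐ[K] MvPolynomial {j // j ≠ y} (Polynomial K)) (q₀ : Polynomial K),
      e q = C q₀ := by
  classical
  rw [supported, Set.image_singleton, Algebra.adjoin_singleton_eq_range_aeval] at hq
  obtain ⟨q₀, rfl⟩ := hq
  set e := (renameEquiv K (Equiv.optionSubtypeNe y).symm).trans (optionEquivRight K _)
  have he : e (X y) = C Polynomial.X := by simp [e]
  refine ⟨e, q₀, ?_⟩
  calc e (Polynomial.aeval (X y) q₀)
      = Polynomial.aeval (IsScalarTower.toAlgHom K (Polynomial K) _ Polynomial.X) q₀ := by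
        rw [← e.toAlgHom_apply, ← Polynomial.aeval_algHom_apply]
        simp [he]
    _ = C q₀ := by
        rw [Polynomial.aeval_algHom_apply, Polynomial.aeval_X_left_apply]
        rfl

variable [Nontrivial ι]

theorem rowEquivMod_single_of_mem_supported {K σ : Type*} [Field K] {y : σ}
    {q : MvPolynomial σ K} (hq : q ∈ supported K {y}) {f : ι → MvPolynomial σ K}
    (hf : UnimodularMod (Ideal.span {q}) f) (i : ι) :
    RowEquivMod (Ideal.span {q}) f (Pi.single i 1) := by
  obtain rfl | hq₀ := eq_or_ne q 0
  · have hbot : Ideal.span {(0 : MvPolynomial σ K)} = (⊥ : Ideal K).map C := by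
      simp [Ideal.map_bot]
    rw [hbot] at hf ⊢
    exact rowEquivMod_single_of_forall_fin
      (fun m f hf => rowEquivMod_single_of_isMaximal ⊥ hf i) hf
  · obtain ⟨e, q₀, he⟩ := exists_algEquiv_eq_C_of_mem_supported hq
    have hq₀' : q₀ ≠ 0 := fun h => hq₀ (by simpa [h] using he)
    have hmap : (Ideal.span {q₀}).map C = Ideal.span {e q} := by simp [Ideal.map_span, he]
    have hef : UnimodularMod (Ideal.span {e q}) (e ∘ f) :=
      hf.map e.toRingEquiv.toRingHom
        ((Ideal.span_singleton_le_iff_mem _).2 (Ideal.mem_span_singleton_self (e q)))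
    have hsingle : RowEquivMod (Ideal.span {e q}) (e ∘ f) (Pi.single i 1) := by
      rw [← hmap] at hef ⊢
      exact rowEquivMod_single_of_forall_fin
        (fun m f hf => rowEquivMod_single_of_ne_zero hq₀' hf i) hef
    have hsymm := hsingle.map_single e.symm.toRingEquiv.toRingHom (J' := Ideal.span {q})
      ((Ideal.span_singleton_le_iff_mem _).2 (by simp))
    simpa [Function.comp_def] using hsymm

end ManyVariables

section Triangularization

variable {S : Type*} [CommRing S]

/-- The matrix `M` has a right inverse modulo `J`. -/
def RightInvertibleMod {m n : Type*} [Fintype n] [DecidableEq m] (J : Ideal S)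
    (M : Matrix m n S) : Prop :=
  ∃ X : Matrix n m S, ∀ i i', (M * X) i i' - (1 : Matrix m m S) i i' ∈ J

namespace RightInvertibleMod

variable {m n κ : Type*} [Fintype n] [DecidableEq m] [DecidableEq κ] {J : Ideal S}
  {M : Matrix m n S}

theorem submatrix (hM : RightInvertibleMod J M) {r : κ → m} (hr : Function.Injective r) :
    RightInvertibleMod J (M.submatrix r id) := by
  obtain ⟨X, hX⟩ := hM
  refine ⟨X.submatrix id r, fun i i' => ?_⟩
  simpa [mul_apply, one_apply, hr.eq_iff] using hX (r i) (r i')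

theorem unimodularMod (hM : RightInvertibleMod J M) (i : m) : UnimodularMod J (M i) := by
  obtain ⟨X, hX⟩ := hM
  exact ⟨fun j => X j i, by simpa [mul_apply, dotProduct] using hX i i⟩

theorem mul_right [DecidableEq n] (hM : RightInvertibleMod J M) {R : Matrix n n S}
    (hR : IsUnit R.det) : RightInvertibleMod J (M * R) := by
  obtain ⟨X, hX⟩ := hM
  refine ⟨R⁻¹ * X, ?_⟩
  rwa [Matrix.mul_assoc, ← Matrix.mul_assoc R, R.mul_nonsing_inv hR, Matrix.one_mul]

theorem submatrix_succ {t : ℕ} {M : Matrix m (Fin (t + 1)) S} (hM : RightInvertibleMod J M)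
    {i₀ : m} (hi₀ : ∀ j, M i₀ (Fin.succ j) ∈ J) {r : κ → m} (hr : Function.Injective r)
    (hri₀ : ∀ i, r i ≠ i₀) : RightInvertibleMod J (M.submatrix r Fin.succ) := by
  obtain ⟨X, hX⟩ := hM
  have hsum (i i') : (M * X) i i' = M i 0 * X 0 i' + ∑ j : Fin t, M i j.succ * X j.succ i' := by
    rw [mul_apply, Fin.sum_univ_succ]
  have htail (i) : ∑ j : Fin t, M i₀ j.succ * X j.succ i ∈ J :=
    dotProduct_mem hi₀ fun j => X (Fin.succ j) i
  have hunit : M i₀ 0 * X 0 i₀ - 1 ∈ J := by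
    simpa [hsum, add_sub_right_comm] using J.sub_mem (hX i₀ i₀) (htail i₀)
  have hX₀ (i) : X 0 (r i) ∈ J := by
    have h₀ : M i₀ 0 * X 0 (r i) ∈ J := by
      simpa [hsum, one_apply_ne (hri₀ i).symm] using J.sub_mem (hX i₀ (r i)) (htail (r i))
    have hsplit : X 0 (r i) =
        X 0 i₀ * (M i₀ 0 * X 0 (r i)) - (M i₀ 0 * X 0 i₀ - 1) * X 0 (r i) := by ring
    rw [hsplit]
    exact J.sub_mem (J.mul_mem_left _ h₀) (J.mul_mem_right _ hunit)
  refine ⟨X.submatrix Fin.succ r, fun i i' => ?_⟩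
  have h := J.sub_mem (hX (r i) (r i')) (J.mul_mem_left (M (r i) 0) (hX₀ i'))
  simpa [hsum, mul_apply, one_apply, hr.eq_iff, neg_add_eq_sub, add_sub_right_comm] using h

theorem leadingRows_tail {t : ℕ} {M : Matrix (Fin (t + 1)) (Fin (t + 1)) S} {k : Fin t}
    (hM : RightInvertibleMod J (M.submatrix ((↑) : Set.Iic k.succ → Fin (t + 1)) id))
    (hM₀ : ∀ j, M 0 (Fin.succ j) ∈ J) :
    RightInvertibleMod J
      ((M.submatrix Fin.succ Fin.succ).submatrix ((↑) : Set.Iic k → Fin t) id) := by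
  let r : Set.Iic k → Set.Iic k.succ := fun i => ⟨i.1.succ, Fin.succ_le_succ_iff.2 i.2⟩
  have hr : Function.Injective r := fun i i' h =>
    Subtype.ext (Fin.succ_injective _ (congrArg Subtype.val h))
  exact hM.submatrix_succ (i₀ := ⟨0, Fin.zero_le _⟩) hM₀ hr fun i h =>
    Fin.succ_ne_zero _ (congrArg Subtype.val h)

theorem map {T : Type*} [CommRing T] {J' : Ideal T} (hM : RightInvertibleMod J M) (φ : S →+* T)
    (hφ : J ≤ J'.comap φ) : RightInvertibleMod J' (M.map φ) := by
  obtain ⟨X, hX⟩ := hM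
  refine ⟨X.map φ, fun i i' => ?_⟩
  rw [← Matrix.map_mul, ← Matrix.map_one φ φ.map_zero φ.map_one]
  simpa only [map_apply, ← map_sub] using Ideal.mem_comap.1 (hφ (hX i i'))

theorem submatrix_castSucc {t : ℕ} {M : Matrix m (Fin (t + 1)) S} (hM : RightInvertibleMod J M)
    (hlast : ∀ i, M i (Fin.last t) ∈ J) : RightInvertibleMod J (M.submatrix id Fin.castSucc) := by
  obtain ⟨X, hX⟩ := hM
  refine ⟨X.submatrix Fin.castSucc id, fun i i' => ?_⟩
  have h := J.sub_mem (hX i i') (J.mul_mem_right (X (Fin.last t) i') (hlast i))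
  simpa [mul_apply, Fin.sum_univ_castSucc, add_sub_right_comm] using h

theorem mul [Finite m] {J' : Ideal S} (hM : RightInvertibleMod J M)
    (hM' : RightInvertibleMod J' M) : RightInvertibleMod (J * J') M := by
  cases nonempty_fintype m
  obtain ⟨X, hX⟩ := hM
  obtain ⟨X', hX'⟩ := hM'
  refine ⟨X + X' - X * M * X', fun i i' => ?_⟩
  have hsplit : M * (X + X' - X * M * X') - 1 = -((M * X - 1) * (M * X' - 1)) := by
    rw [Matrix.mul_sub, Matrix.mul_add, Matrix.mul_assoc X, ← Matrix.mul_assoc M X, Matrix.sub_mul,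
      Matrix.mul_sub, Matrix.one_mul, Matrix.mul_one]
    abel
  rw [← Matrix.sub_apply, hsplit, Matrix.neg_apply, mul_apply]
  exact neg_mem (sum_mem fun j _ => Ideal.mul_mem_mul (hX i j) (hX' j i'))

theorem prod [Finite m] {α : Type*} {J : α → Ideal S} (s : Finset α)
    (hM : ∀ a ∈ s, RightInvertibleMod (J a) M) : RightInvertibleMod (∏ a ∈ s, J a) M := by
  classical
  induction s using Finset.induction_on with
  | empty => exact ⟨0, fun _ _ => by simp⟩
  | insert a s ha ih =>
    rw [Finset.prod_insert ha]
    exact (hM a (Finset.mem_insert_self a s)).mul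
      (ih fun b hb => hM b (Finset.mem_insert_of_mem hb))

end RightInvertibleMod

theorem UnimodularMod.exists_mul_sub_one_mem_of_succ_mem {t : ℕ} {J : Ideal S}
    {f : Fin (t + 1) → S} (hf : UnimodularMod J f) (hf' : ∀ j, f (Fin.succ j) ∈ J) :
    ∃ u, f 0 * u - 1 ∈ J := by
  obtain ⟨u, hu⟩ := hf
  refine ⟨u 0, ?_⟩
  have htail := dotProduct_mem hf' fun j => u (Fin.succ j)
  simpa [dotProduct, Fin.sum_univ_succ, add_sub_right_comm] using J.sub_mem hu htail

/-- Row `i` of `T` vanishes modulo `Q i` to the right of the diagonal, and the diagonal entry of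
row `i` is a unit modulo `Q i`. -/
def IsUnitLowerTriangularMod {t : ℕ} (Q : Fin t → Ideal S) (T : Matrix (Fin t) (Fin t) S) : Prop :=
  (∀ i j, i < j → T i j ∈ Q i) ∧ ∀ i, ∃ u, T i i * u - 1 ∈ Q i

theorem IsUnitLowerTriangularMod.exists_mulVec_add_mem {t : ℕ} {Q : Fin t → Ideal S}
    {T : Matrix (Fin t) (Fin t) S} (hT : IsUnitLowerTriangularMod Q T) (v : Fin t → S) :
    ∃ c, ∀ i, (T *ᵥ c) i + v i ∈ Q i := by
  induction t with
  | zero => exact ⟨0, fun i => i.elim0⟩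
  | succ t ih =>
    obtain ⟨u, hu⟩ := hT.2 0
    have hT' : IsUnitLowerTriangularMod (Q ∘ Fin.succ) (T.submatrix Fin.succ Fin.succ) :=
      ⟨fun i j hij => hT.1 _ _ (Fin.succ_lt_succ_iff.2 hij), fun i => hT.2 i.succ⟩
    obtain ⟨c, hc⟩ := ih hT' fun i => v i.succ - T i.succ 0 * (u * v 0)
    refine ⟨Fin.cons (-(u * v 0)) c, Fin.cases ?_ fun i => ?_⟩
    · have hsplit : (T *ᵥ Fin.cons (-(u * v 0)) c) 0 + v 0 =
          (fun j => T 0 (Fin.succ j)) ⬝ᵥ c - (T 0 0 * u - 1) * v 0 := by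
        simp only [mulVec, dotProduct, Fin.sum_univ_succ, Fin.cons_zero, Fin.cons_succ]
        ring
      rw [hsplit]
      exact sub_mem (dotProduct_mem (fun j => hT.1 0 j.succ j.succ_pos) c)
        (Ideal.mul_mem_right _ _ hu)
    · have hsplit : (T *ᵥ Fin.cons (-(u * v 0)) c) i.succ + v i.succ =
          (T.submatrix Fin.succ Fin.succ *ᵥ c) i + (v i.succ - T i.succ 0 * (u * v 0)) := by
        simp only [mulVec, dotProduct, Fin.sum_univ_succ, Fin.cons_zero, Fin.cons_succ,
          submatrix_apply]
        ring
      exact hsplit ▸ hc i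

/-- The block diagonal matrix `diag(1, R)`. -/
def oneBlock {t : ℕ} (R : Matrix (Fin t) (Fin t) S) : Matrix (Fin (t + 1)) (Fin (t + 1)) S :=
  of (Fin.cons (Pi.single 0 1) fun i => Fin.cons 0 (R i))

theorem det_oneBlock {t : ℕ} (R : Matrix (Fin t) (Fin t) S) : (oneBlock R).det = R.det := by
  have hrow (j) : oneBlock R 0 j = (Pi.single 0 1 : Fin (t + 1) → S) j := rfl
  have htail : (oneBlock R).submatrix Fin.succ Fin.succ = R := rfl
  simp [det_succ_row_zero, Fin.sum_univ_succ, hrow, htail]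

theorem mul_oneBlock_zero {m : Type*} {t : ℕ} (M : Matrix m (Fin (t + 1)) S)
    (R : Matrix (Fin t) (Fin t) S) (i : m) : (M * oneBlock R) i 0 = M i 0 := by
  simp [mul_apply, oneBlock, Fin.sum_univ_succ]

theorem mul_oneBlock_succ {m : Type*} {t : ℕ} (M : Matrix m (Fin (t + 1)) S)
    (R : Matrix (Fin t) (Fin t) S) (i : m) (j : Fin t) :
    (M * oneBlock R) i j.succ = (M.submatrix id Fin.succ * R) i j := by
  simp [mul_apply, oneBlock, Fin.sum_univ_succ]

/-- Every row which is unimodular modulo `J` can be carried modulo `J` to a row concentrated in one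
position. -/
def ReducesRows (J : Ideal S) : Prop :=
  ∀ (t : ℕ) (f : Fin (t + 1) → S), UnimodularMod J f → ∃ a, RowEquivMod J f (Pi.single 0 a)

theorem reducesRows_of_mem_supported {K σ : Type*} [Field K] {y : σ} {q : MvPolynomial σ K}
    (hq : q ∈ supported K {y}) : ReducesRows (Ideal.span {q})
  | 0, f, _ => ⟨f 0, .of_congr fun i => by simp [Fin.eq_zero i]⟩
  | _ + 1, _, hf => ⟨1, rowEquivMod_single_of_mem_supported hq hf 0⟩

theorem IsUnitLowerTriangularMod.mul_oneBlock {t : ℕ} {Q : Fin (t + 1) → Ideal S}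
    {M : Matrix (Fin (t + 1)) (Fin (t + 1)) S} {R : Matrix (Fin t) (Fin t) S}
    (hR : IsUnitLowerTriangularMod (Q ∘ Fin.succ) (M.submatrix Fin.succ Fin.succ * R))
    (hM₀ : ∀ j, M 0 (Fin.succ j) ∈ Q 0) (hunit : ∃ u, M 0 0 * u - 1 ∈ Q 0) :
    IsUnitLowerTriangularMod Q (M * oneBlock R) := by
  refine ⟨fun i j hij => ?_, fun i => ?_⟩
  · obtain ⟨j, rfl⟩ := Fin.exists_succ_eq.2 (Fin.ne_zero_of_lt hij)
    rw [mul_oneBlock_succ]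
    cases i using Fin.cases with
    | zero => exact vecMul_mem hM₀ R j
    | succ i => exact hR.1 i j (Fin.succ_lt_succ_iff.1 hij)
  · cases i using Fin.cases with
    | zero => simpa only [mul_oneBlock_zero] using hunit
    | succ i =>
      simp only [mul_oneBlock_succ]
      exact hR.2 i

theorem exists_isUnitLowerTriangularMod_mul {t : ℕ} {Q : Fin t → Ideal S} (hQ : Monotone Q)
    (hred : ∀ i, ReducesRows (Q i)) {W : Matrix (Fin t) (Fin t) S}
    (hW : ∀ k, RightInvertibleMod (Q k) (W.submatrix ((↑) : Set.Iic k → Fin t) id)) :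
    ∃ R : Matrix (Fin t) (Fin t) S, IsUnit R.det ∧ IsUnitLowerTriangularMod Q (W * R) := by
  induction t with
  | zero => exact ⟨1, by simp, fun i => i.elim0, fun i => i.elim0⟩
  | succ t ih =>
    have hrow : UnimodularMod (Q 0) (W 0) := (hW 0).unimodularMod ⟨0, Set.mem_Iic.2 le_rfl⟩
    obtain ⟨a, R₁, hR₁, ha⟩ := hred 0 t _ hrow
    obtain ⟨M, hM⟩ : ∃ M, W * R₁ = M := ⟨_, rfl⟩
    have hM₀ (j : Fin t) : M 0 j.succ ∈ Q 0 := by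
      simpa [← hM, mul_apply_eq_vecMul] using ha j.succ
    have hMk (k) : RightInvertibleMod (Q k) (M.submatrix ((↑) : Set.Iic k → Fin (t + 1)) id) := by
      rw [← hM]
      exact (hW k).mul_right hR₁
    have hunit : ∃ u, M 0 0 * u - 1 ∈ Q 0 :=
      ((hMk 0).unimodularMod ⟨0, Set.mem_Iic.2 le_rfl⟩).exists_mul_sub_one_mem_of_succ_mem hM₀
    obtain ⟨R, hR, hlower⟩ := ih (hQ.comp Fin.strictMono_succ.monotone)
      (fun i => hred i.succ) fun k => (hMk k.succ).leadingRows_tail fun j =>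
        hQ (Fin.zero_le _) (hM₀ j)
    refine ⟨R₁ * oneBlock R, by simpa [det_oneBlock] using hR₁.mul hR, ?_⟩
    rw [← Matrix.mul_assoc, hM]
    exact hlower.mul_oneBlock hM₀ hunit

end Triangularization

section ReducedMinors

variable {S : Type*} [CommRing S]

theorem exists_mul_eq_smul_one_of_mem_span_minors {m n : Type*} [Fintype m] [Fintype n]
    [DecidableEq m] {M : Matrix m n S} {s : S}
    (hs : s ∈ Ideal.span (Set.range fun c : m → n => (M.submatrix id c).det)) :
    ∃ X : Matrix n m S, M * X = s • (1 : Matrix m m S) := by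
  classical
  induction hs using Submodule.span_induction with
  | zero => exact ⟨0, by simp⟩
  | add s s' _ _ hX hX' =>
    obtain ⟨X, hX⟩ := hX
    obtain ⟨X', hX'⟩ := hX'
    exact ⟨X + X', by rw [Matrix.mul_add, hX, hX', add_smul]⟩
  | smul a s _ hX =>
    obtain ⟨X, hX⟩ := hX
    exact ⟨a • X, by rw [Matrix.mul_smul, hX, smul_smul, smul_eq_mul]⟩
  | mem s hs =>
    obtain ⟨c, rfl⟩ := hs
    have hselect : M * (1 : Matrix n n S).submatrix id c = M.submatrix id c := by
      simpa using (M.submatrix_mul_equiv (1 : Matrix n n S) id (Equiv.refl n) c)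
    exact ⟨(1 : Matrix n n S).submatrix id c * (M.submatrix id c).adjugate, by
      rw [← Matrix.mul_assoc, hselect, mul_adjugate]⟩

theorem rightInvertibleMod_of_sup_span_minors_eq_top {m n : Type*} [Fintype m] [Fintype n]
    [DecidableEq m] {J : Ideal S} {M : Matrix m n S}
    (hM : J ⊔ Ideal.span (Set.range fun c : m → n => (M.submatrix id c).det) = ⊤) :
    RightInvertibleMod J M := by
  obtain ⟨a, ha, s, hs, has⟩ := Submodule.mem_sup.1 (hM ▸ Submodule.mem_top : (1 : S) ∈ _)
  obtain ⟨X, hX⟩ := exists_mul_eq_smul_one_of_mem_span_minors hs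
  refine ⟨X, fun i i' => ?_⟩
  have hsplit : (M * X) i i' - (1 : Matrix m m S) i i' = -a * (1 : Matrix m m S) i i' := by
    rw [hX, Matrix.smul_apply, smul_eq_mul, ← sub_one_mul, ← has]
    ring
  exact hsplit ▸ J.mul_mem_right _ (neg_mem ha)

/-- The product `h 0 * ⋯ * h (k - 1)` of the first `k` entries of `h`. -/
def prodFirst {n : ℕ} (h : Fin n → S) (k : ℕ) : S :=
  ∏ j ∈ Finset.univ.filter (fun j : Fin n => (j : ℕ) < k), h j

theorem prodFirst_succ {n : ℕ} (h : Fin n → S) (k : Fin n) :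
    prodFirst h (k + 1) = h k * prodFirst h k := by
  have hinsert : Finset.univ.filter (fun i : Fin n => (i : ℕ) < k + 1) =
      insert k (Finset.univ.filter fun i : Fin n => (i : ℕ) < k) := by
    ext i
    simp only [Finset.mem_filter_univ, Finset.mem_insert, Fin.ext_iff]
    omega
  rw [prodFirst, hinsert, Finset.prod_insert (by simp), prodFirst]

theorem prodFirst_card_dvd_prod {n : ℕ} {h : Fin n → S}
    (hchain : ∀ i j, i ≤ j → h i ∣ h j) (s : Finset (Fin n)) :
    prodFirst h s.card ∣ ∏ i ∈ s, h i := by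
  induction s using Finset.induction_on_max with
  | empty => simp [prodFirst]
  | insert a s hs ih =>
    have hcard : s.card ≤ (a : ℕ) := by
      rw [← Fin.card_Iio a]
      exact Finset.card_le_card fun i hi => Finset.mem_Iio.2 (hs i hi)
    have ha : a ∉ s := fun ha => lt_irrefl _ (hs a ha)
    rw [Finset.card_insert_of_notMem ha, Finset.prod_insert ha,
      prodFirst_succ h ⟨s.card, hcard.trans_lt a.2⟩]
    exact mul_dvd_mul (hchain _ _ hcard) ih

theorem mul_prodFirst_dvd_prod {n k : ℕ} {h : Fin n → S}
    (hchain : ∀ i j, i ≤ j → h i ∣ h j) {s : Finset (Fin n)} (hs : s.card = k + 1) {i i₀ : Fin n}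
    (hi₀ : i₀ ∈ s) (hi : i ≤ i₀) :
    h i * prodFirst h k ∣ ∏ i ∈ s, h i := by
  have hk : (s.erase i₀).card = k := by rw [Finset.card_erase_of_mem hi₀, hs, Nat.add_sub_cancel]
  rw [← Finset.mul_prod_erase s h hi₀, ← hk]
  exact mul_dvd_mul (hchain i i₀ hi) (prodFirst_card_dvd_prod hchain _)

theorem det_diagonal_mul_submatrix {n m κ : Type*} [Fintype n] [DecidableEq n] [Fintype κ]
    [DecidableEq κ] (h : n → S) (W : Matrix n m S) (r : κ → n) (c : κ → m) :
    ((diagonal h * W).submatrix r c).det = (∏ a, h (r a)) * (W.submatrix r c).det := by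
  rw [← det_mul_column]
  congr 1
  ext a b
  simp [diagonal_mul]

theorem prod_comp_embedding_of_forall_le {n : ℕ} (h : Fin n → S) {i : Fin n}
    {r : Fin (i + 1) ↪ Fin n} (hr : ∀ a, r a ≤ i) : ∏ a, h (r a) = prodFirst h (i + 1) := by
  have hrange : Finset.univ.map r = Finset.univ.filter fun a : Fin n => (a : ℕ) < i + 1 := by
    refine Finset.eq_of_subset_of_card_le (fun a ha => ?_) <| by
      simp only [Fin.card_filter_val_lt, Finset.card_map, Finset.card_univ, Fintype.card_fin,
        min_le_right]
    obtain ⟨a, -, rfl⟩ := Finset.mem_map.1 ha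
    simpa using Nat.lt_succ_iff.2 (hr a)
  rw [prodFirst, ← hrange, Finset.prod_map]

theorem det_submatrix_mem_range_of_forall_le {n m : ℕ} (W : Matrix (Fin n) (Fin m) S) {i : Fin n}
    {r : Fin (i + 1) ↪ Fin n} (hr : ∀ a, r a ≤ i) (c : Fin (i + 1) → Fin m) :
    (W.submatrix r c).det ∈ Set.range fun c : Set.Iic i → Fin m =>
      ((W.submatrix ((↑) : Set.Iic i → Fin n) id).submatrix id c).det := by
  let r' : Fin (i + 1) ≃ Set.Iic i := Equiv.ofBijective (fun a => ⟨r a, hr a⟩)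
    ((Fintype.bijective_iff_injective_and_card _).2
      ⟨fun a b hab => r.injective (congrArg Subtype.val hab), by simp⟩)
  refine ⟨c ∘ r'.symm, ?_⟩
  dsimp only
  rw [← det_submatrix_equiv_self r']
  congr 1
  ext a b
  simp [r']

theorem mem_sup_span_minors_of_mul_mem_minorsSet [IsDomain S] {n m : ℕ} {h : Fin n → S}
    (hchain : ∀ i j, i ≤ j → h i ∣ h j) {i i' : Fin n} (hi' : (i' : ℕ) = i + 1) {e : S}
    (he : h i' = h i * e) (hi : h i ≠ 0) {W : Matrix (Fin n) (Fin m) S} {v : S}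
    (hv : prodFirst h (i + 1) * v ∈ minorsSet (diagonal h * W) (i + 1)) :
    v ∈ Ideal.span {e} ⊔ Ideal.span (Set.range fun c : Set.Iic i → Fin m =>
      ((W.submatrix ((↑) : Set.Iic i → Fin n) id).submatrix id c).det) := by
  obtain ⟨r, c, hv⟩ := hv
  rw [det_diagonal_mul_submatrix] at hv
  have hne : prodFirst h (i + 1) ≠ 0 := by
    refine Finset.prod_ne_zero_iff.2 fun a ha => ne_zero_of_dvd_ne_zero hi (hchain a i ?_)
    exact Nat.lt_succ_iff.1 (Finset.mem_filter.1 ha).2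
  by_cases hr : ∀ a, r a ≤ i
  · rw [prod_comp_embedding_of_forall_le h hr] at hv
    rw [mul_left_cancel₀ hne hv]
    exact Ideal.mem_sup_right (Ideal.subset_span (det_submatrix_mem_range_of_forall_le W hr c))
  · push Not at hr
    obtain ⟨a, ha⟩ := hr
    refine Ideal.mem_sup_left (Ideal.mem_span_singleton.2 ((mul_dvd_mul_iff_left hne).1 ?_))
    have hi'a : i' ≤ r a := by
      rw [Fin.le_def, hi']
      exact ha
    have hdvd := mul_prodFirst_dvd_prod hchain (k := i) (s := Finset.univ.map r) (by simp)
      (Finset.mem_map_of_mem r (Finset.mem_univ a)) hi'a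
    rw [Finset.prod_map, he, mul_right_comm, ← prodFirst_succ] at hdvd
    exact hv ▸ hdvd.mul_right _

theorem rightInvertibleMod_of_reducedIdeal_eq_top [IsDomain S] {n m : ℕ} {h : Fin n → S}
    (hchain : ∀ i j, i ≤ j → h i ∣ h j) {i i' : Fin n} (hi' : (i' : ℕ) = i + 1) {e : S}
    (he : h i' = h i * e) (hi : h i ≠ 0) {W : Matrix (Fin n) (Fin m) S}
    (hW : reducedIdeal (diagonal h * W) (i + 1) (prodFirst h (i + 1)) = ⊤) :
    RightInvertibleMod (Ideal.span {e}) (W.submatrix ((↑) : Set.Iic i → Fin n) id) := by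
  refine rightInvertibleMod_of_sup_span_minors_eq_top (top_le_iff.1 (hW ▸ Ideal.span_le.2 ?_))
  exact fun v hv => mem_sup_span_minors_of_mul_mem_minorsSet hchain hi' he hi hv

end ReducedMinors

section Factorization

variable {S : Type*} [CommRing S] [IsDomain S] {n : ℕ} {h q : Fin n → S}
  {T : Matrix (Fin n) (Fin n) S}

theorem exists_diagonal_mul_eq_mul_diagonal_of_mul_eq_zero (hchain : ∀ i j, i ≤ j → h i ∣ h j)
    (hq : ∀ i, h i * q i = 0) (hT : IsUnitLowerTriangularMod (fun i => Ideal.span {q i}) T) :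
    ∃ P : Matrix (Fin n) (Fin n) S, IsUnit P.det ∧ diagonal h * T = P * diagonal h := by
  have hlower (i) (hi : h i ≠ 0) (j) (hij : i < j) : T i j = 0 := by
    simpa [(mul_eq_zero.1 (hq i)).resolve_left hi] using hT.1 i j hij
  have hunit (i) (hi : h i ≠ 0) : IsUnit (T i i) := by
    obtain ⟨u, hu⟩ := hT.2 i
    have hu' : T i i * u - 1 = 0 := by
      simpa [(mul_eq_zero.1 (hq i)).resolve_left hi] using hu
    exact .of_mul_eq_one u (sub_eq_zero.1 hu')
  choose! x hx using hchain
  have hxself (i) (hi : h i ≠ 0) : x i i = 1 :=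
    mul_left_cancel₀ hi (by rw [← hx i i le_rfl, mul_one])
  classical
  -- Row `i` of `diagonal h * T` vanishes when `h i = 0`, so that row of `P` is free.
  let P : Matrix (Fin n) (Fin n) S := of fun i j =>
    if h i = 0 then (1 : Matrix (Fin n) (Fin n) S) i j else if j ≤ i then x j i * T i j else 0
  have hPlower : P.IsLowerTriangular := fun i j (hij : i < j) => by
    simp [P, one_apply_ne hij.ne, hij.not_ge]
  refine ⟨P, ?_, ?_⟩
  · rw [det_of_isLowerTriangular _ hPlower, IsUnit.prod_univ_iff]
    intro i
    by_cases hi : h i = 0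
    · simp [P, hi]
    · simpa [P, hi, hxself i hi] using hunit i hi
  · ext i j
    rw [diagonal_mul, mul_diagonal]
    by_cases hi : h i = 0
    · obtain rfl | hij := eq_or_ne i j
      · simp [hi]
      · simp [P, hi, one_apply_ne hij]
    · obtain hji | hij := le_or_gt j i
      · simp only [P, of_apply, if_neg hi, if_pos hji]
        rw [hx j i hji]
        ring
      · simp [P, hi, hij.not_ge, hlower i hi j hij]

theorem exists_diagonal_mul_eq_mul_diagonal_of_mul_ne_zero (hchain : ∀ i j, i ≤ j → h i ∣ h j)
    {a : S} (ha : a ≠ 0) (hq : ∀ i, h i * q i = a) (hdet : IsUnit T.det)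
    (hT : IsUnitLowerTriangularMod (fun i => Ideal.span {q i}) T) :
    ∃ P : Matrix (Fin n) (Fin n) S, IsUnit P.det ∧ diagonal h * T = P * diagonal h := by
  have hdvd (i j) : h j ∣ h i * T i j := by
    obtain hji | hij := le_or_gt j i
    · exact (hchain j i hji).mul_right _
    · obtain ⟨b, hb⟩ := Ideal.mem_span_singleton.1 (hT.1 i j hij)
      rw [hb, ← mul_assoc, hq, ← hq j, mul_assoc]
      exact dvd_mul_right _ _
  choose P hP using hdvd
  have hfactor : diagonal h * T = of P * diagonal h := by
    ext i j
    rw [diagonal_mul, mul_diagonal, hP, mul_comm, of_apply]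
  have hne : (diagonal h).det ≠ 0 := by
    rw [det_diagonal]
    exact Finset.prod_ne_zero_iff.2 fun i _ hi => ha (by rw [← hq i, hi, zero_mul])
  have hPdet : T.det = (of P).det := mul_left_cancel₀ hne <| by
    rw [← det_mul, hfactor, det_mul, mul_comm]
  exact ⟨of P, hPdet ▸ hdet, hfactor⟩

theorem exists_diagonal_mul_eq_mul_diagonal (hchain : ∀ i j, i ≤ j → h i ∣ h j) {a : S}
    (hq : ∀ i, h i * q i = a) (hdet : IsUnit T.det)
    (hT : IsUnitLowerTriangularMod (fun i => Ideal.span {q i}) T) :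
    ∃ P : Matrix (Fin n) (Fin n) S, IsUnit P.det ∧ diagonal h * T = P * diagonal h := by
  obtain rfl | ha := eq_or_ne a 0
  · exact exists_diagonal_mul_eq_mul_diagonal_of_mul_eq_zero hchain hq hT
  · exact exists_diagonal_mul_eq_mul_diagonal_of_mul_ne_zero hchain ha hq hdet hT

end Factorization

section LastColumn

variable {S : Type*} [CommRing S] {t : ℕ}

/-- The block matrix `[[R, c], [0, 1]]`. -/
def snocBlock (R : Matrix (Fin t) (Fin t) S) (c : Fin t → S) :
    Matrix (Fin (t + 1)) (Fin (t + 1)) S :=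
  of (Fin.snoc (fun i => Fin.snoc (R i) (c i)) (Pi.single (Fin.last t) 1))

variable (R : Matrix (Fin t) (Fin t) S) (c : Fin t → S)

@[simp]
theorem snocBlock_castSucc_castSucc (i j : Fin t) :
    snocBlock R c i.castSucc j.castSucc = R i j := by
  simp [snocBlock]

@[simp]
theorem snocBlock_castSucc_last (i : Fin t) : snocBlock R c i.castSucc (Fin.last t) = c i := by
  simp [snocBlock]

@[simp]
theorem snocBlock_last_castSucc (j : Fin t) : snocBlock R c (Fin.last t) j.castSucc = 0 := by
  simp [snocBlock]

@[simp]
theorem snocBlock_last_last : snocBlock R c (Fin.last t) (Fin.last t) = 1 := by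
  simp [snocBlock]

theorem det_snocBlock : (snocBlock R c).det = R.det := by
  have hminor : (snocBlock R c).submatrix Fin.castSucc Fin.castSucc = R := by
    ext i j
    simp
  rw [det_succ_row _ (Fin.last t), Fin.sum_univ_castSucc]
  simp [hminor, Even.neg_one_pow ⟨t, rfl⟩]

theorem snocBlock_mul_diagonal (z : S) :
    snocBlock R c * diagonal (Pi.mulSingle (Fin.last t) z) =
      diagonal (Pi.mulSingle (Fin.last t) z) * snocBlock R (z • c) := by
  ext i j
  rw [mul_diagonal, diagonal_mul]
  cases i using Fin.lastCases <;> cases j using Fin.lastCases <;> simp [mul_comm]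

variable {R}

theorem exists_isUnitLowerTriangularMod_mul_snocBlock {Q : Fin (t + 1) → Ideal S}
    (hQ : Q (Fin.last t) = ⊤) {V : Matrix (Fin (t + 1)) (Fin (t + 1)) S}
    (hR : IsUnitLowerTriangularMod (Q ∘ Fin.castSucc)
      (V.submatrix Fin.castSucc Fin.castSucc * R)) :
    ∃ c, IsUnitLowerTriangularMod Q (V * snocBlock R c) := by
  obtain ⟨c, hc⟩ := hR.exists_mulVec_add_mem fun i => V i.castSucc (Fin.last t)
  have hcast (i j : Fin t) : (V * snocBlock R (R *ᵥ c)) i.castSucc j.castSucc =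
      (V.submatrix Fin.castSucc Fin.castSucc * R) i j := by
    simp [mul_apply, Fin.sum_univ_castSucc]
  have hlast (i : Fin t) : (V * snocBlock R (R *ᵥ c)) i.castSucc (Fin.last t) =
      ((V.submatrix Fin.castSucc Fin.castSucc * R) *ᵥ c) i + V i.castSucc (Fin.last t) := by
    rw [← mulVec_mulVec, mul_apply, Fin.sum_univ_castSucc]
    simp [mulVec, dotProduct]
  refine ⟨R *ᵥ c, fun i j hij => ?_, fun i => ?_⟩
  · obtain ⟨i, rfl⟩ := Fin.exists_castSucc_eq.2 (Fin.ne_last_of_lt hij)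
    cases j using Fin.lastCases with
    | last => exact hlast i ▸ hc i
    | cast j => exact hcast i j ▸ hR.1 i j (Fin.castSucc_lt_castSucc_iff.1 hij)
  · cases i using Fin.lastCases with
    | last => exact ⟨0, hQ ▸ Submodule.mem_top⟩
    | cast i => exact hcast i i ▸ hR.2 i

end LastColumn

section Assembly

variable {S : Type*} [CommRing S] {t : ℕ}

/-- The product of the entries `e j` with `k ≤ j`; for `k = t` it is empty. -/
def tailProd (e : Fin t → S) (k : Fin (t + 1)) : S :=
  ∏ j ∈ Finset.univ.filter (fun j : Fin t => k ≤ j.castSucc), e j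

theorem tailProd_last (e : Fin t → S) : tailProd e (Fin.last t) = 1 :=
  Finset.prod_eq_one fun j hj =>
    absurd (Finset.mem_filter.1 hj).2 j.castSucc_lt_last.not_ge

theorem tailProd_castSucc (e : Fin t → S) (k : Fin t) :
    tailProd e k.castSucc = e k * tailProd e k.succ := by
  have hinsert : Finset.univ.filter (fun j : Fin t => k.castSucc ≤ j.castSucc) =
      insert k (Finset.univ.filter fun j : Fin t => k.succ ≤ j.castSucc) := by
    ext j
    simp only [Finset.mem_filter_univ, Finset.mem_insert, Fin.le_def, Fin.ext_iff,
      Fin.val_castSucc, Fin.val_succ]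
    omega
  rw [tailProd, hinsert, Finset.prod_insert (by simp), tailProd]

theorem tailProd_dvd_tailProd (e : Fin t → S) {k k' : Fin (t + 1)} (h : k ≤ k') :
    tailProd e k' ∣ tailProd e k :=
  Finset.prod_dvd_prod_of_subset _ _ _ (Finset.monotone_filter_right _ fun _ _ => h.trans)

theorem mul_tailProd_eq_last {e : Fin t → S} {h : Fin (t + 1) → S}
    (he : ∀ j : Fin t, h j.succ = h j.castSucc * e j) (k : Fin (t + 1)) :
    h k * tailProd e k = h (Fin.last t) := by
  induction k using Fin.reverseInduction with
  | last => rw [tailProd_last, mul_one]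
  | cast k ih => rw [tailProd_castSucc, ← mul_assoc, ← he, ih]

theorem rightInvertibleMod_span_tailProd {e : Fin t → S} {W : Matrix (Fin t) (Fin t) S}
    (hW : ∀ j, RightInvertibleMod (Ideal.span {e j})
      (W.submatrix ((↑) : Set.Iic j → Fin t) id)) (k : Fin t) :
    RightInvertibleMod (Ideal.span {tailProd e k.castSucc})
      (W.submatrix ((↑) : Set.Iic k → Fin t) id) := by
  rw [tailProd, ← Ideal.prod_span_singleton]
  refine RightInvertibleMod.prod _ fun j hj => ?_
  have hkj : k ≤ j := by simpa using hj
  exact (hW j).submatrix (r := Set.inclusion (Set.Iic_subset_Iic.2 hkj)) (Set.inclusion_injective _)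

theorem matEquiv_diagonal_of_rightInvertibleMod [IsDomain S] {h : Fin (t + 1) → S}
    (hchain : ∀ i j, i ≤ j → h i ∣ h j) {e : Fin t → S}
    (he : ∀ j : Fin t, h j.succ = h j.castSucc * e j)
    (hred : ∀ k : Fin t, ReducesRows (Ideal.span {tailProd e k.castSucc}))
    {V : Matrix (Fin (t + 1)) (Fin (t + 1)) S} (hV : IsUnit V.det)
    (hW : ∀ j, RightInvertibleMod (Ideal.span {e j})
      ((V.submatrix Fin.castSucc Fin.castSucc).submatrix ((↑) : Set.Iic j → Fin t) id)) (z : S) :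
    MatEquiv (diagonal h * V * diagonal (Pi.mulSingle (Fin.last t) z))
      (diagonal h * diagonal (Pi.mulSingle (Fin.last t) z)) := by
  set Q : Fin (t + 1) → Ideal S := fun k => Ideal.span {tailProd e k}
  have hQ : Monotone Q := fun k k' hk =>
    Ideal.span_singleton_le_span_singleton.2 (tailProd_dvd_tailProd e hk)
  obtain ⟨R, hR, hlower⟩ := exists_isUnitLowerTriangularMod_mul
    (hQ.comp Fin.strictMono_castSucc.monotone) hred (rightInvertibleMod_span_tailProd hW)
  obtain ⟨c, hc⟩ := exists_isUnitLowerTriangularMod_mul_snocBlock (Q := Q)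
    (by simp [Q, tailProd_last]) hlower
  obtain ⟨P, hP, hfactor⟩ := exists_diagonal_mul_eq_mul_diagonal hchain (mul_tailProd_eq_last he)
    (by simpa [det_snocBlock] using hV.mul hR) hc
  have hR' : IsUnit (snocBlock R (z • c)).det := by rwa [det_snocBlock]
  set E := diagonal (Pi.mulSingle (Fin.last t) z)
  refine ⟨P, (snocBlock R (z • c))⁻¹, hP, isUnit_nonsing_inv_det _ hR', ?_⟩
  calc diagonal h * V * E
      = diagonal h * V * (E * snocBlock R (z • c)) * (snocBlock R (z • c))⁻¹ := by
        rw [← Matrix.mul_assoc _ E, Matrix.mul_nonsing_inv_cancel_right _ _ hR']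
    _ = diagonal h * (V * snocBlock R c) * E * (snocBlock R (z • c))⁻¹ := by
        simp only [E, ← snocBlock_mul_diagonal, Matrix.mul_assoc]
    _ = P * (diagonal h * E) * (snocBlock R (z • c))⁻¹ := by
        rw [hfactor, Matrix.mul_assoc P]

end Assembly

section PolynomialRing

variable {K σ : Type*} [CommRing K]

/-- The substitution of `0` for the variables outside `s`. -/
noncomputable def restrictVars (K : Type*) {σ : Type*} [CommRing K] (s : Set σ) :
    MvPolynomial σ K →ₐ[K] MvPolynomial σ K :=
  (rename ((↑) : s → σ)).comp (killCompl Subtype.val_injective)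

theorem restrictVars_mem_supported (s : Set σ) (p : MvPolynomial σ K) :
    restrictVars K s p ∈ supported K s := by
  rw [supported_eq_range_rename]
  exact ⟨_, rfl⟩

theorem restrictVars_eq_self {s : Set σ} {p : MvPolynomial σ K} (hp : p ∈ supported K s) :
    restrictVars K s p = p := by
  rw [supported_eq_range_rename] at hp
  obtain ⟨p, rfl⟩ := hp
  exact congrArg (rename _) (killCompl_rename_app Subtype.val_injective p)

theorem restrictVars_X_of_notMem {s : Set σ} {x : σ} (hx : x ∉ s) :
    restrictVars K s (X x) = 0 := by
  simp [restrictVars, killCompl, hx]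

theorem exists_mem_supported_eq_mul_of_dvd {s : Set σ} {p q : MvPolynomial σ K}
    (hp : p ∈ supported K s) (hq : q ∈ supported K s) (hpq : p ∣ q) :
    ∃ e ∈ supported K s, q = p * e := by
  obtain ⟨e, rfl⟩ := hpq
  refine ⟨restrictVars K s e, restrictVars_mem_supported s e, ?_⟩
  simpa only [map_mul, restrictVars_eq_self hp] using (restrictVars_eq_self hq).symm

theorem rightInvertibleMod_of_mul_diagonal_X {t : ℕ} {x : σ} {e : MvPolynomial σ K}
    (he : e ∈ supported K {x}ᶜ) {V : Matrix (Fin (t + 1)) (Fin (t + 1)) (MvPolynomial σ K)}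
    (hV : ∀ i j, V i j ∈ supported K {x}ᶜ) {k : Fin t}
    (hk : RightInvertibleMod (Ideal.span {e})
      ((V * diagonal (Pi.mulSingle (Fin.last t) (X x))).submatrix
        ((↑) : Set.Iic k.castSucc → Fin (t + 1)) id)) :
    RightInvertibleMod (Ideal.span {e})
      ((V.submatrix Fin.castSucc Fin.castSucc).submatrix ((↑) : Set.Iic k → Fin t) id) := by
  set M := V * diagonal (Pi.mulSingle (Fin.last t) (X x))
  let φ := (restrictVars K ({x}ᶜ : Set σ)).toRingHom
  have hφ : Ideal.span {e} ≤ (Ideal.span {e}).comap φ :=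
    (Ideal.span_singleton_le_iff_mem _).2 (by simp [φ, restrictVars_eq_self he])
  have hlast (i) : φ (M i (Fin.last t)) = 0 := by
    simp [M, φ, mul_diagonal, restrictVars_X_of_notMem]
  have hcast (i : Fin (t + 1)) (j : Fin t) : φ (M i j.castSucc) = V i j.castSucc := by
    simp [M, φ, mul_diagonal, restrictVars_eq_self (hV i j.castSucc)]
  let r : Set.Iic k → Set.Iic k.castSucc := fun i => ⟨i.1.castSucc, i.2⟩
  have hr : Function.Injective r := fun i i' h =>
    Subtype.ext (Fin.castSucc_injective _ (congrArg Subtype.val h))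
  have hrows := ((hk.map φ hφ).submatrix_castSucc fun i => by simp [hlast]).submatrix hr
  convert hrows using 1
  ext1 i j
  simp [r, hcast]

theorem exists_cofactor_rightInvertibleMod [IsDomain K] {x y : σ} (hxy : x ≠ y) {t : ℕ}
    {h : Fin (t + 1) → MvPolynomial σ K} (hsup : ∀ i, h i ∈ supported K {y})
    (hchain : ∀ i j, i ≤ j → h i ∣ h j)
    {V : Matrix (Fin (t + 1)) (Fin (t + 1)) (MvPolynomial σ K)}
    (hV : ∀ i j, V i j ∈ supported K {x}ᶜ) (k : Fin t)
    (hred : reducedIdeal (diagonal h * V * diagonal (Pi.mulSingle (Fin.last t) (X x)))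
      (k + 1) (prodFirst h (k + 1)) = ⊤) :
    ∃ e ∈ supported K {y}, h k.succ = h k.castSucc * e ∧ RightInvertibleMod (Ideal.span {e})
      ((V.submatrix Fin.castSucc Fin.castSucc).submatrix ((↑) : Set.Iic k → Fin t) id) := by
  have hdvd := hchain _ _ k.castSucc_lt_succ.le
  by_cases hk : h k.castSucc = 0
  · refine ⟨1, one_mem _, ?_, 0, by simp⟩
    rw [hk, zero_dvd_iff] at hdvd
    rw [hk, hdvd, zero_mul]
  · obtain ⟨e, he, hmul⟩ := exists_mem_supported_eq_mul_of_dvd (hsup _) (hsup _) hdvd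
    refine ⟨e, he, hmul, rightInvertibleMod_of_mul_diagonal_X
      (supported_mono (by simpa using hxy) he) hV ?_⟩
    rw [Matrix.mul_assoc] at hred
    exact rightInvertibleMod_of_reducedIdeal_eq_top hchain (by simp) hmul hk hred

end PolynomialRing

theorem matEquiv_diagonal_of_reducedIdeal_eq_top {K σ : Type*} [Field K] {x y : σ} (hxy : x ≠ y)
    {t : ℕ} {h : Fin (t + 1) → MvPolynomial σ K} (hsup : ∀ i, h i ∈ supported K {y})
    (hchain : ∀ i j, i ≤ j → h i ∣ h j)
    {V : Matrix (Fin (t + 1)) (Fin (t + 1)) (MvPolynomial σ K)}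
    (hV : ∀ i j, V i j ∈ supported K {x}ᶜ) (hVuni : IsUnit V.det)
    (hred : ∀ k : Fin t, reducedIdeal
      (diagonal h * V * diagonal (Pi.mulSingle (Fin.last t) (X x)))
      (k + 1) (prodFirst h (k + 1)) = ⊤) :
    MatEquiv (diagonal h * V * diagonal (Pi.mulSingle (Fin.last t) (X x)))
      (diagonal h * diagonal (Pi.mulSingle (Fin.last t) (X x))) := by
  choose e hesup he hW using fun k =>
    exists_cofactor_rightInvertibleMod hxy hsup hchain hV k (hred k)
  exact matEquiv_diagonal_of_rightInvertibleMod hchain he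
    (fun k => reducesRows_of_mem_supported (prod_mem fun j _ => hesup j)) hVuni hW (X x)

theorem statement1_general {K σ : Type*} [Field K] {x y : σ} (hxy : x ≠ y) {l : ℕ}
    {h : Fin l → MvPolynomial σ K} (hsup : ∀ i, h i ∈ supported K {y})
    (hchain : ∀ i j, i ≤ j → h i ∣ h j) {V : Matrix (Fin l) (Fin l) (MvPolynomial σ K)}
    (hVsup : ∀ i j, V i j ∈ supported K {x}ᶜ) (hVuni : IsUnit V.det)
    (hred : ∀ k, 1 ≤ k → k ≤ l - 1 → reducedIdeal
      (diagonal h * V * diagonal fun i : Fin l => if (i : ℕ) = l - 1 then X x else 1) k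
      (∏ j ∈ Finset.univ.filter (fun j : Fin l => (j : ℕ) < k), h j) = ⊤) :
    MatEquiv (diagonal h * V * diagonal fun i : Fin l => if (i : ℕ) = l - 1 then X x else 1)
      (diagonal fun i : Fin l => if (i : ℕ) = l - 1 then X x * h i else h i) := by
  obtain _ | t := l
  · exact ⟨1, 1, by simp, by simp, Subsingleton.elim _ _⟩
  have hE : (fun i : Fin (t + 1) => if (i : ℕ) = t + 1 - 1 then X x else 1) =
      Pi.mulSingle (Fin.last t) (X x : MvPolynomial σ K) := by
    ext1 i
    simp [Pi.mulSingle_apply, Fin.ext_iff]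
  have hhE : (fun i : Fin (t + 1) => if (i : ℕ) = t + 1 - 1 then X x * h i else h i) =
      fun i => h i * (Pi.mulSingle (Fin.last t) (X x) : Fin (t + 1) → MvPolynomial σ K) i := by
    simp only [← hE, mul_ite, mul_one, mul_comm]
  rw [hE] at hred ⊢
  rw [hhE, ← diagonal_mul_diagonal]
  exact matEquiv_diagonal_of_reducedIdeal_eq_top hxy hsup hchain hVsup hVuni fun k =>
    hred (k + 1) (by lia) (by lia)

theorem statement1 {K : Type*} [Field K] (n : ℕ) (hn : 2 ≤ n) (l : ℕ) (hl : 0 < l)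
    (h : Fin l → MvPolynomial (Fin n) K)
    (hsup : ∀ i : Fin l, h i ∈ MvPolynomial.supported K {(⟨n - 1, by omega⟩ : Fin n)})
    (hchain : ∀ i j : Fin l, i ≤ j → h i ∣ h j)
    (V : Matrix (Fin l) (Fin l) (MvPolynomial (Fin n) K))
    (hVsup : ∀ i j : Fin l, V i j ∈ MvPolynomial.supported K {t : Fin n | (t : ℕ) ≠ 0})
    (hVuni : IsUnit V.det)
    (B : Matrix (Fin l) (Fin l) (MvPolynomial (Fin n) K))
    (hB : B = Matrix.diagonal h * V *
      Matrix.diagonal (fun i : Fin l =>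
        if (i : ℕ) = l - 1 then MvPolynomial.X (⟨0, by omega⟩ : Fin n) else 1))
    (hgcd : ∀ k : ℕ, 1 ≤ k → k ≤ l - 1 →
      IsGcdMinors B k (∏ j ∈ Finset.univ.filter (fun j : Fin l => (j : ℕ) < k), h j) ∧
      reducedIdeal B k (∏ j ∈ Finset.univ.filter (fun j : Fin l => (j : ℕ) < k), h j) = ⊤) :
    MatEquiv B (Matrix.diagonal (fun i : Fin l =>
      if (i : ℕ) = l - 1 then MvPolynomial.X (⟨0, by omega⟩ : Fin n) * h i else h i)) := by
  subst hB
  exact statement1_general (Fin.ne_of_val_ne (show 0 ≠ n - 1 by lia)) hsup hchain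
    (by simpa [Set.compl_def, Fin.ext_iff] using hVsup) hVuni fun k h₁ h₂ => (hgcd k h₁ h₂).2
end
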